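/- arXiv:2508.01163 — 7 statements merged into one kernel-verified Lean document; each statement's English description precedes it below -/
import Mathlib

section
/- For any finite simple graph G with line graph L(G), one has n⁺(L(G)) ≤ 3·n⁻(L(G)) and 2·n⁺(L(G)) ≤ n⁻(L(G))·(n⁻(L(G)) + 1). -/
/-!
The adjacency form of the line graph, evaluated at an edge weight `X`, is
`∑ v, (s(v) ^ 2 - ∑ u, X v u ^ 2)`, where `s(v)` is the sum of the weights at the vertex `v`
(`qform_toWeight`, `qform_eq`). Negative eigenvalues are bounded below by exhibiting negative
definite subspaces (`NegDim`), positive ones above by exhibiting linear functionals on whose common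
kernel the form is nonpositive (`PosLe`). Both data add up over components, which preserves the two
inequalities, so it suffices to treat a connected graph with `n ≥ 1` vertices and `m` edges; let
`a` be its largest negative dimension.

* Peeling two vertices at a time off a spanning tree (a cherry or a pendant path) gives
  `n ≤ 2 * a + 2` (`exists_negDim_of_rooted`).
* Let `F` be an independent set of vertices of degree at most two. If `s` vanishes outside `F`, then
  the form is nonpositive, since `s(v) ^ 2 ≤ 2 * ∑ u, X v u ^ 2` for `v ∈ F`; hence `n - |F|`
  functionals suffice (`posLe_of_indep`). If `F` is empty, a single vertex, or a pair of vertices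
  with different neighbourhoods, the form is even negative definite there, so `m ≤ n + a - |F|`
  (`card_edge_lt`).

If `a ≥ 4`, then `n ≤ 2 * a + 2` functionals are few enough for both inequalities. For `n ≤ 2` none
is needed, and for `n` equal to `3` or `4` one suffices because the line graph sits in an octahedron
(`ConnOn.posLe_one`). There remain `a = 2` with `n` equal to `5` or `6`, where three functionals are
needed, and `a = 3` with `n ≤ 8`, where six are needed. If they did not suffice, the vertices of
degree at most two would contain only very small independent sets, which makes the degree sum `2 * m`
large (`ConnOn.degree_sum_clique`) and contradicts the bound on `m`.
-/

open Matrix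

/-- The adjacency matrix of a simple graph over `ℝ` is Hermitian. -/
theorem SimpleGraph.adjHerm {V : Type*} [Fintype V] [DecidableEq V] (G : SimpleGraph V)
    [DecidableRel G.Adj] : (G.adjMatrix ℝ).IsHermitian := by
  unfold Matrix.IsHermitian
  rw [conjTranspose_eq_transpose_of_trivial]
  exact G.isSymm_adjMatrix

/-- `n⁺(G)`: the number of positive eigenvalues of the adjacency matrix of `G`,
counted with multiplicity. -/
noncomputable def SimpleGraph.posInertia {V : Type*} [Finite V] (G : SimpleGraph V) : ℕ :=
  letI := Fintype.ofFinite V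
  letI := Classical.decEq V
  letI : DecidableRel G.Adj := Classical.decRel _
  Nat.card {v : V // 0 < G.adjHerm.eigenvalues v}

/-- `n⁻(G)`: the number of negative eigenvalues of the adjacency matrix of `G`,
counted with multiplicity. -/
noncomputable def SimpleGraph.negInertia {V : Type*} [Finite V] (G : SimpleGraph V) : ℕ :=
  letI := Fintype.ofFinite V
  letI := Classical.decEq V
  letI : DecidableRel G.Adj := Classical.decRel _
  Nat.card {v : V // G.adjHerm.eigenvalues v < 0}


/-! ### Inertia and subspaces -/

section Spectral

variable {ι : Type*} [Fintype ι] [DecidableEq ι] {A : Matrix ι ι ℝ}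

/-- In eigenvector coordinates `c = Uᵀ x`, the quadratic form of `A` is `∑ λᵢ cᵢ²`. -/
theorem Matrix.IsHermitian.dotProduct_mulVec_eq_sum_eigenvalues (hA : A.IsHermitian) (x : ι → ℝ) :
    x ⬝ᵥ A *ᵥ x =
      ∑ i, hA.eigenvalues i * (((hA.eigenvectorUnitary : Matrix ι ι ℝ)ᵀ *ᵥ x) i) ^ 2 := by
  set U : Matrix ι ι ℝ := (hA.eigenvectorUnitary : Matrix ι ι ℝ) with hU
  have h : A = U * diagonal hA.eigenvalues * Uᵀ := by
    conv_lhs => rw [hA.spectral_theorem]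
    rw [Unitary.conjStarAlgAut_apply]
    congr 1
  have h2 : x ⬝ᵥ A *ᵥ x = (Uᵀ *ᵥ x) ⬝ᵥ (diagonal hA.eigenvalues *ᵥ (Uᵀ *ᵥ x)) := by
    conv_lhs => rw [h]
    rw [← mulVec_mulVec, ← mulVec_mulVec, dotProduct_mulVec, ← mulVec_transpose]
  rw [h2]
  simp only [dotProduct, mulVec_diagonal]
  refine Finset.sum_congr rfl fun i _ => ?_
  ring

/-- A `k`-dimensional negative definite subspace, given as the image of a linear map, forces at
least `k` negative eigenvalues: projecting it to the negative eigenvectors is injective. -/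
theorem Matrix.IsHermitian.le_card_neg (hA : A.IsHermitian) {k : ℕ}
    (f : (Fin k → ℝ) →ₗ[ℝ] (ι → ℝ)) (hf : ∀ z, z ≠ 0 → f z ⬝ᵥ A *ᵥ f z < 0) :
    k ≤ Nat.card {i // hA.eigenvalues i < 0} := by
  let g : (Fin k → ℝ) →ₗ[ℝ] ({i // hA.eigenvalues i < 0} → ℝ) :=
    (LinearMap.funLeft ℝ ℝ Subtype.val) ∘ₗ
      (Matrix.mulVecLin (hA.eigenvectorUnitary : Matrix ι ι ℝ)ᵀ) ∘ₗ f
  have hg : Function.Injective g := by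
    rw [← LinearMap.ker_eq_bot, LinearMap.ker_eq_bot']
    intro z hz
    by_contra hne
    have h1 := hf z hne
    rw [hA.dotProduct_mulVec_eq_sum_eigenvalues] at h1
    refine absurd h1 (not_lt.mpr (Finset.sum_nonneg fun i _ => ?_))
    by_cases hi : hA.eigenvalues i < 0
    · have h2 := congrFun hz ⟨i, hi⟩
      simp only [g, LinearMap.comp_apply, LinearMap.funLeft_apply, Matrix.mulVecLin_apply,
        Pi.zero_apply] at h2
      rw [h2]
      simp
    · exact mul_nonneg (not_lt.mp hi) (sq_nonneg _)
  have h3 := LinearMap.finrank_le_finrank_of_injective hg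
  rw [Nat.card_eq_fintype_card]
  simpa using h3

/-- If the form is nonpositive on the common kernel of `k` functionals, there are at most `k`
positive eigenvalues: the functionals are jointly injective on the positive eigenspace. -/
theorem Matrix.IsHermitian.card_pos_le (hA : A.IsHermitian) {k : ℕ}
    (f : (ι → ℝ) →ₗ[ℝ] (Fin k → ℝ)) (hf : ∀ x, f x = 0 → x ⬝ᵥ A *ᵥ x ≤ 0) :
    Nat.card {i // 0 < hA.eigenvalues i} ≤ k := by
  set U : Matrix ι ι ℝ := (hA.eigenvectorUnitary : Matrix ι ι ℝ) with hU
  have hUU : Uᵀ * U = 1 := by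
    have := Unitary.coe_star_mul_self hA.eigenvectorUnitary
    simpa [star_eq_conjTranspose] using this
  let e : ({i // 0 < hA.eigenvalues i} → ℝ) →ₗ[ℝ] (ι → ℝ) :=
    Function.ExtendByZero.linearMap ℝ Subtype.val
  have he : ∀ w i (hi : 0 < hA.eigenvalues i), e w i = w ⟨i, hi⟩ := fun w i hi =>
    Subtype.val_injective.extend_apply w 0 ⟨i, hi⟩
  have he' : ∀ w i (hi : ¬ 0 < hA.eigenvalues i), e w i = 0 := fun w i hi =>
    Function.extend_apply' w (0 : ι → ℝ) i (by rintro ⟨⟨j, hj⟩, rfl⟩; exact hi hj)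
  let g := f ∘ₗ U.mulVecLin ∘ₗ e
  have hg : Function.Injective g := by
    rw [← LinearMap.ker_eq_bot, LinearMap.ker_eq_bot']
    intro w hw
    have h1 := hf (U *ᵥ e w) hw
    rw [hA.dotProduct_mulVec_eq_sum_eigenvalues, mulVec_mulVec, ← hU, hUU, one_mulVec] at h1
    have hnn : ∀ i ∈ Finset.univ, 0 ≤ hA.eigenvalues i * (e w i) ^ 2 := by
      intro i _
      by_cases hi : 0 < hA.eigenvalues i
      · positivity
      · simp [he' w i hi]
    have h2 := (Finset.sum_eq_zero_iff_of_nonneg hnn).mp (le_antisymm h1 (Finset.sum_nonneg hnn))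
    ext ⟨i, hi⟩
    have h3 := h2 i (Finset.mem_univ i)
    rw [he w i hi] at h3
    simpa [hi.ne'] using h3
  have h3 := LinearMap.finrank_le_finrank_of_injective hg
  rw [Nat.card_eq_fintype_card]
  simpa using h3

end Spectral

/-! ### Edge weights as symmetric functions -/

section EdgeWeights

variable {V : Type*} [Fintype V] [DecidableEq V]

/-- The sum of the weights `X v u` at the vertex `v`. -/
def vsum (X : V → V → ℝ) (v : V) : ℝ := ∑ u, X v u

/-- The bilinear form of the line graph, written in terms of symmetric weight functions on `V × V`;
see `qform_toWeight`. -/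
def bform (X Y : V → V → ℝ) : ℝ := ∑ v, (vsum X v * vsum Y v - ∑ u, X v u * Y v u)

/-- The quadratic form attached to `bform`. -/
def qform (X : V → V → ℝ) : ℝ := bform X X

/-- `X` is an edge weight of `G`: a symmetric function on `V × V` supported on adjacent pairs. -/
def IsWeight (G : SimpleGraph V) (X : V → V → ℝ) : Prop :=
  (∀ u v, X u v = X v u) ∧ ∀ u v, ¬ G.Adj u v → X u v = 0

/-- The edge weights of `G` contain a `k`-dimensional space on which the form of the line graph is
negative definite. It is given as the image of a linear map, whose injectivity is automatic. -/
def NegDim (G : SimpleGraph V) (k : ℕ) : Prop :=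
  ∃ f : (Fin k → ℝ) →ₗ[ℝ] (V → V → ℝ), ∀ z, IsWeight G (f z) ∧ (z ≠ 0 → qform (f z) < 0)

/-- The form of the line graph is nonpositive on the edge weights of `G` killed by `k` suitable
linear functionals. -/
def PosLe (G : SimpleGraph V) (k : ℕ) : Prop :=
  ∃ f : (V → V → ℝ) →ₗ[ℝ] (Fin k → ℝ), ∀ X, IsWeight G X → f X = 0 → qform X ≤ 0

variable (G : SimpleGraph V) [DecidableRel G.Adj]

/-- The symmetric function on `V × V` corresponding to a function on the edge set. -/
def toWeight : (G.edgeSet → ℝ) →ₗ[ℝ] (V → V → ℝ) where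
  toFun x u v := if h : G.Adj u v then x ⟨s(u, v), h⟩ else 0
  map_add' x y := by
    ext u v
    by_cases h : G.Adj u v <;> simp [h]
  map_smul' c x := by
    ext u v
    by_cases h : G.Adj u v <;> simp [h]

/-- The function on the edge set corresponding to a symmetric function on `V × V`. -/
noncomputable def ofWeight : (V → V → ℝ) →ₗ[ℝ] (G.edgeSet → ℝ) where
  toFun X e := X (Quot.out e.1).1 (Quot.out e.1).2
  map_add' _ _ := rfl
  map_smul' _ _ := rfl

theorem isWeight_toWeight (x : G.edgeSet → ℝ) : IsWeight G (toWeight G x) := by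
  refine ⟨fun u v => ?_, fun u v h => by simp [toWeight, h]⟩
  by_cases h : G.Adj u v
  · simp only [toWeight, LinearMap.coe_mk, AddHom.coe_mk, h, h.symm, dif_pos]
    congr 2
    exact Sym2.eq_swap
  · have h' : ¬ G.Adj v u := fun h' => h h'.symm
    simp [toWeight, h, h']

theorem toWeight_ofWeight {X : V → V → ℝ} (hX : IsWeight G X) :
    toWeight G (ofWeight G X) = X := by
  ext u v
  by_cases h : G.Adj u v
  · simp only [toWeight, ofWeight, LinearMap.coe_mk, AddHom.coe_mk, h, dif_pos]
    have h1 : s((Quot.out s(u, v)).1, (Quot.out s(u, v)).2) = s(u, v) := Quot.out_eq _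
    rcases Sym2.eq_iff.mp h1 with ⟨h2, h3⟩ | ⟨h2, h3⟩
    · rw [h2, h3]
    · rw [h2, h3, hX.1]
  · simp [toWeight, h, hX.2 u v h]

theorem sum_toWeight [Fintype G.edgeSet] (x : G.edgeSet → ℝ) (v : V) :
    ∑ u, toWeight G x v u = ∑ e : G.edgeSet, if v ∈ e.1 then x e else 0 := by
  rw [← Finset.sum_filter]
  have h0 : ∑ u, toWeight G x v u =
      ∑ u ∈ Finset.univ.filter (fun u => G.Adj v u), toWeight G x v u := by
    symm
    apply Finset.sum_filter_of_ne
    intro u _ hu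
    by_contra h
    exact hu (by simp [toWeight, h])
  rw [h0]
  refine Finset.sum_bij (fun u hu => ⟨s(v, u), (Finset.mem_filter.mp hu).2⟩) ?_ ?_ ?_ ?_
  · intro u hu
    simp
  · intro u hu w hw h
    have h' : s(v, u) = s(v, w) := congrArg Subtype.val h
    exact Sym2.congr_right.mp h'
  · rintro ⟨e, he⟩ hv
    simp only [Finset.mem_filter, Finset.mem_univ, true_and] at hv
    obtain ⟨u, rfl⟩ := Sym2.mem_iff_exists.mp hv
    exact ⟨u, by simpa using he, rfl⟩
  · intro u hu
    have h := (Finset.mem_filter.mp hu).2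
    simp [toWeight, h]

/-- The incidence identity `BᵀB = A(L(G)) + 2 I`, evaluated on edge weights. -/
theorem qform_toWeight [Fintype G.edgeSet] [DecidableRel G.lineGraph.Adj] (x : G.edgeSet → ℝ) :
    qform (toWeight G x) = x ⬝ᵥ G.lineGraph.adjMatrix ℝ *ᵥ x := by
  have hsq : ∀ v, ∑ u, toWeight G x v u * toWeight G x v u
      = ∑ e : G.edgeSet, if v ∈ e.1 then x e * x e else 0 := by
    intro v
    rw [← sum_toWeight G (fun e => x e * x e) v]
    refine Finset.sum_congr rfl fun u _ => ?_
    by_cases h : G.Adj v u <;> simp [toWeight, h]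
  have hentry : ∀ e f : G.edgeSet,
      (∑ v, ((if v ∈ e.1 then (1 : ℝ) else 0) * (if v ∈ f.1 then 1 else 0)
        - if e = f then (if v ∈ e.1 then 1 else 0) else 0)) = G.lineGraph.adjMatrix ℝ e f := by
    intro e f
    by_cases hef : e = f
    · subst hef
      simp only [if_true, SimpleGraph.adjMatrix_apply, SimpleGraph.irrefl, if_false]
      refine Finset.sum_eq_zero fun v _ => ?_
      split_ifs <;> simp
    · simp only [hef, if_false, sub_zero, SimpleGraph.adjMatrix_apply,
        SimpleGraph.lineGraph_adj_iff_exists, ne_eq, not_false_eq_true, true_and]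
      split_ifs with hex
      · obtain ⟨w, hwe, hwf⟩ := hex
        rw [Finset.sum_eq_single w]
        · simp [hwe, hwf]
        · intro b _ hb
          by_cases h1 : b ∈ e.1
          · by_cases h2 : b ∈ f.1
            · exfalso
              apply hef
              apply Subtype.ext
              rw [(Sym2.mem_and_mem_iff hb).mp ⟨h1, hwe⟩, (Sym2.mem_and_mem_iff hb).mp ⟨h2, hwf⟩]
            · simp [h2]
          · simp [h1]
        · simp
      · refine Finset.sum_eq_zero fun v _ => ?_
        by_cases h1 : v ∈ e.1
        · have h2 : v ∉ f.1 := fun h2 => hex ⟨v, h1, h2⟩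
          simp [h2]
        · simp [h1]
  simp only [qform, bform, vsum, hsq, sum_toWeight, dotProduct, mulVec]
  simp only [← hentry, Finset.sum_mul, Finset.mul_sum]
  rw [Finset.sum_sub_distrib]
  simp only [sub_mul, mul_sub, Finset.sum_sub_distrib]
  congr 1
  · rw [Finset.sum_comm]
    refine Finset.sum_congr rfl fun e _ => ?_
    rw [Finset.sum_comm]
    refine Finset.sum_congr rfl fun f _ => Finset.sum_congr rfl fun v _ => ?_
    split_ifs <;> ring
  · rw [Finset.sum_comm]
    refine Finset.sum_congr rfl fun e _ => ?_
    rw [Finset.sum_comm]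
    refine Finset.sum_congr rfl fun v _ => ?_
    rw [Finset.sum_eq_single e]
    · simp
    · intro f _ hf
      simp [hf.symm]
    · simp

theorem NegDim.le_negInertia {k : ℕ} (h : NegDim G k) : k ≤ G.lineGraph.negInertia := by
  classical
  obtain ⟨f, hf⟩ := h
  unfold SimpleGraph.negInertia
  let _ := Fintype.ofFinite G.edgeSet
  let _ := Classical.decEq G.edgeSet
  let _ : DecidableRel G.lineGraph.Adj := Classical.decRel _
  refine Matrix.IsHermitian.le_card_neg _ (ofWeight G ∘ₗ f) fun z hz => ?_
  have := (hf z).2 hz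
  rw [← toWeight_ofWeight G (hf z).1, qform_toWeight] at this
  exact this

theorem PosLe.posInertia_le {k : ℕ} (h : PosLe G k) : G.lineGraph.posInertia ≤ k := by
  classical
  obtain ⟨f, hf⟩ := h
  unfold SimpleGraph.posInertia
  let _ := Fintype.ofFinite G.edgeSet
  let _ := Classical.decEq G.edgeSet
  let _ : DecidableRel G.lineGraph.Adj := Classical.decRel _
  refine Matrix.IsHermitian.card_pos_le _ (f ∘ₗ toWeight G) fun x hx => ?_
  have := hf _ (isWeight_toWeight G x) hx
  rw [qform_toWeight] at this
  exact this

end EdgeWeights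

/-! ### Calculus of the form -/

section Form

variable {V : Type*} [Fintype V]

theorem vsum_add (X Y : V → V → ℝ) (v : V) : vsum (X + Y) v = vsum X v + vsum Y v := by
  simp [vsum, Finset.sum_add_distrib]

theorem vsum_smul (c : ℝ) (X : V → V → ℝ) (v : V) : vsum (c • X) v = c * vsum X v := by
  simp [vsum, Finset.mul_sum]

theorem bform_add_left (X Y Z : V → V → ℝ) : bform (X + Y) Z = bform X Z + bform Y Z := by
  simp only [bform, vsum_add, Pi.add_apply, add_mul, Finset.sum_add_distrib,
    Finset.sum_sub_distrib]
  ring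

theorem bform_smul_left (c : ℝ) (X Z : V → V → ℝ) : bform (c • X) Z = c * bform X Z := by
  simp only [bform, vsum_smul, Pi.smul_apply, smul_eq_mul, Finset.mul_sum, mul_sub, mul_assoc]

theorem bform_comm (X Y : V → V → ℝ) : bform X Y = bform Y X := by
  simp only [bform, mul_comm]

theorem bform_add_right (X Y Z : V → V → ℝ) : bform Z (X + Y) = bform Z X + bform Z Y := by
  rw [bform_comm, bform_add_left, bform_comm X, bform_comm Y]

theorem bform_smul_right (c : ℝ) (X Z : V → V → ℝ) : bform Z (c • X) = c * bform Z X := by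
  rw [bform_comm, bform_smul_left, bform_comm]

theorem qform_add (X Y : V → V → ℝ) : qform (X + Y) = qform X + 2 * bform X Y + qform Y := by
  simp only [qform, bform_add_left, bform_add_right, bform_comm Y X]
  ring

theorem qform_smul (c : ℝ) (X : V → V → ℝ) : qform (c • X) = c ^ 2 * qform X := by
  simp only [qform, bform_smul_left, bform_smul_right]
  ring

/-- Each vertex contributes its sum squared minus its sum of squares to the form. -/
theorem qform_eq (X : V → V → ℝ) : qform X = ∑ v, (vsum X v ^ 2 - ∑ u, X v u ^ 2) := by
  simp only [qform, bform, sq]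

theorem IsWeight.add {G : SimpleGraph V} {X Y : V → V → ℝ} (hX : IsWeight G X)
    (hY : IsWeight G Y) : IsWeight G (X + Y) :=
  ⟨fun u v => by simp [hX.1 u v, hY.1 u v], fun u v h => by simp [hX.2 u v h, hY.2 u v h]⟩

theorem IsWeight.smul {G : SimpleGraph V} {X : V → V → ℝ} (c : ℝ) (hX : IsWeight G X) :
    IsWeight G (c • X) :=
  ⟨fun u v => by simp [hX.1 u v], fun u v h => by simp [hX.2 u v h]⟩

theorem IsWeight.mono {G H : SimpleGraph V} (hle : H ≤ G) {X : V → V → ℝ} (hX : IsWeight H X) :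
    IsWeight G X :=
  ⟨hX.1, fun u v h => hX.2 u v fun h' => h (hle h')⟩

variable [DecidableEq V]

/-- The indicator function of the edge `ab`. -/
def edgeInd (a b : V) : V → V → ℝ := fun u v => if (u = a ∧ v = b) ∨ (u = b ∧ v = a) then 1 else 0

theorem isWeight_edgeInd {G : SimpleGraph V} {a b : V} (h : G.Adj a b) :
    IsWeight G (edgeInd a b) := by
  refine ⟨fun u v => ?_, fun u v huv => ?_⟩
  · simp only [edgeInd]
    congr 1
    apply propext
    tauto
  · simp only [edgeInd, ite_eq_right_iff, one_ne_zero]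
    rintro (⟨rfl, rfl⟩ | ⟨rfl, rfl⟩)
    · exact huv h
    · exact huv h.symm

theorem edgeInd_split {a b : V} (h : a ≠ b) (u v : V) :
    edgeInd a b u v = (if u = a then if v = b then 1 else 0 else 0)
      + (if u = b then if v = a then 1 else 0 else 0) := by
  unfold edgeInd
  split_ifs <;> simp_all

theorem vsum_edgeInd {a b : V} (h : a ≠ b) (v : V) :
    vsum (edgeInd a b) v = (if v = a then 1 else 0) + (if v = b then 1 else 0) := by
  simp only [vsum, edgeInd_split h, Finset.sum_add_distrib]
  split_ifs <;> simp

theorem bform_edgeInd {a b : V} (h : a ≠ b) {Y : V → V → ℝ} (hY : ∀ u v, Y u v = Y v u) :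
    bform (edgeInd a b) Y = vsum Y a + vsum Y b - 2 * Y a b := by
  have h2 : ∀ v, ∑ u, edgeInd a b v u * Y v u
      = (if v = a then Y v b else 0) + (if v = b then Y v a else 0) := by
    intro v
    simp only [edgeInd_split h, add_mul, Finset.sum_add_distrib]
    split_ifs <;> simp
  simp only [bform, h2, vsum_edgeInd h, add_mul, ite_mul, one_mul, zero_mul,
    Finset.sum_sub_distrib, Finset.sum_add_distrib, Finset.sum_ite_eq', Finset.mem_univ, if_true]
  rw [hY b a]
  ring

end Form

/-! ### Building definite subspaces and functionals -/

section Build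

variable {V : Type*} [Fintype V] {G H : SimpleGraph V}

theorem NegDim.zero : NegDim G 0 :=
  ⟨0, fun z => ⟨⟨fun _ _ => rfl, fun _ _ _ => rfl⟩, fun h => absurd (Subsingleton.elim z 0) h⟩⟩

theorem extendByZero_eq_zero {j k : ℕ} (h : j ≤ k) {z : Fin j → ℝ}
    (hz : Function.ExtendByZero.linearMap ℝ (Fin.castLE h) z = 0) : z = 0 := by
  ext i
  have := congrFun hz (Fin.castLE h i)
  rwa [Function.ExtendByZero.linearMap_apply, (Fin.castLE_injective h).extend_apply] at this

theorem NegDim.mono {j k : ℕ} (h : j ≤ k) (hk : NegDim G k) : NegDim G j := by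
  obtain ⟨f, hf⟩ := hk
  exact ⟨f ∘ₗ Function.ExtendByZero.linearMap ℝ (Fin.castLE h), fun z => ⟨(hf _).1, fun hz =>
    (hf _).2 fun h0 => hz (extendByZero_eq_zero h h0)⟩⟩

theorem PosLe.mono {j k : ℕ} (h : j ≤ k) (hj : PosLe G j) : PosLe G k := by
  obtain ⟨f, hf⟩ := hj
  exact ⟨Function.ExtendByZero.linearMap ℝ (Fin.castLE h) ∘ₗ f, fun X hX h0 =>
    hf X hX (extendByZero_eq_zero h h0)⟩

theorem NegDim.mono_graph (hle : H ≤ G) {k : ℕ} (h : NegDim H k) : NegDim G k := by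
  obtain ⟨f, hf⟩ := h
  exact ⟨f, fun z => ⟨(hf z).1.mono hle, (hf z).2⟩⟩

/-- If the edge weights of `H` embed isometrically into the orthogonal complement, among the edge
weights of `G`, of a vector `X₀` of negative square, then `G` has one more negative dimension. -/
theorem NegDim.succ {k : ℕ} (h : NegDim H k) (φ : (V → V → ℝ) →ₗ[ℝ] (V → V → ℝ))
    (X₀ : V → V → ℝ) (hX₀ : IsWeight G X₀) (hq : qform X₀ < 0)
    (hφ : ∀ Y, IsWeight H Y → IsWeight G (φ Y) ∧ qform (φ Y) = qform Y ∧ bform X₀ (φ Y) = 0) :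
    NegDim G (k + 1) := by
  obtain ⟨f, hf⟩ := h
  refine ⟨φ ∘ₗ f ∘ₗ LinearMap.funLeft ℝ ℝ Fin.succ + (LinearMap.proj 0).smulRight X₀,
    fun z => ?_⟩
  set y := LinearMap.funLeft ℝ ℝ Fin.succ z with hy
  obtain ⟨h1, h2⟩ := hf y
  obtain ⟨h3, h4, h5⟩ := hφ _ h1
  have he : (φ ∘ₗ f ∘ₗ LinearMap.funLeft ℝ ℝ Fin.succ
      + (LinearMap.proj 0).smulRight X₀ : (Fin (k + 1) → ℝ) →ₗ[ℝ] (V → V → ℝ)) z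
      = φ (f y) + z 0 • X₀ := rfl
  rw [he]
  refine ⟨h3.add (hX₀.smul _), fun hz => ?_⟩
  rw [qform_add, qform_smul, bform_smul_right, bform_comm, h5, h4]
  by_cases hy0 : y = 0
  · have hz0 : z 0 ≠ 0 := by
      intro hz0
      apply hz
      ext i
      refine Fin.cases hz0 (fun j => ?_) i
      exact congrFun hy0 j
    have : qform (f y) = 0 := by
      rw [hy0, map_zero]
      simp [qform, bform, vsum]
    have h6 : 0 < z 0 ^ 2 := by positivity
    nlinarith
  · have := h2 hy0
    nlinarith [sq_nonneg (z 0)]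

theorem NegDim.of_submodule {k : ℕ} (W : Submodule ℝ (V → V → ℝ)) (hk : k ≤ Module.finrank ℝ W)
    (hW : ∀ X ∈ W, IsWeight G X ∧ (X ≠ 0 → qform X < 0)) : NegDim G k := by
  obtain ⟨b, hb⟩ := exists_linearIndependent_of_le_finrank hk
  refine ⟨W.subtype ∘ₗ Fintype.linearCombination ℝ b, fun z => ?_⟩
  refine ⟨(hW _ (Subtype.property _)).1, fun hz => (hW _ (Subtype.property _)).2 fun h0 => hz ?_⟩
  have h1 : Fintype.linearCombination ℝ b z = 0 := Subtype.ext h0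
  exact hb.fintypeLinearCombination_injective (by rw [h1, map_zero])

theorem vsum_linear (v : V) :
    ∃ f : (V → V → ℝ) →ₗ[ℝ] ℝ, ∀ X, f X = vsum X v :=
  ⟨{ toFun := fun X => vsum X v
     map_add' := fun X Y => vsum_add X Y v
     map_smul' := fun c X => vsum_smul c X v }, fun _ => rfl⟩

theorem PosLe.of_finset (T : Finset V)
    (h : ∀ X, IsWeight G X → (∀ v ∈ T, vsum X v = 0) → qform X ≤ 0) : PosLe G T.card := by
  choose f hf using vsum_linear (V := V)
  refine ⟨LinearMap.pi fun i => f (T.equivFin.symm i).1, fun X hX h0 => h X hX fun v hv => ?_⟩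
  have := congrFun h0 (T.equivFin ⟨v, hv⟩)
  simpa [hf] using this

theorem NegDim.of_finset [DecidableEq V] [DecidableRel G.Adj] (T : Finset V) {k : ℕ}
    (hk : k + T.card ≤ G.edgeFinset.card)
    (h : ∀ X, IsWeight G X → (∀ v ∈ T, vsum X v = 0) → X ≠ 0 → qform X < 0) : NegDim G k := by
  choose f hf using vsum_linear (V := V)
  let g : (G.edgeSet → ℝ) →ₗ[ℝ] (T → ℝ) := LinearMap.pi fun v => f v.1 ∘ₗ toWeight G
  have hinj : Function.Injective (toWeight G) := by
    intro x y hxy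
    ext ⟨e, he⟩
    induction e using Sym2.ind with
    | _ u v =>
      have h1 := congrFun (congrFun hxy u) v
      have h2 : G.Adj u v := he
      simpa [toWeight, h2] using h1
  refine NegDim.of_submodule ((LinearMap.ker g).map (toWeight G)) ?_ ?_
  · rw [← (Submodule.equivMapOfInjective _ hinj _).finrank_eq]
    have h1 := LinearMap.finrank_range_add_finrank_ker g
    have h2 : Module.finrank ℝ (LinearMap.range g) ≤ T.card := by
      refine (Submodule.finrank_le _).trans ?_
      simp
    have h3 : Module.finrank ℝ (G.edgeSet → ℝ) = G.edgeFinset.card := by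
      rw [Module.finrank_fintype_fun_eq_card, SimpleGraph.edgeFinset_card]
    omega
  · rintro X ⟨x, hx, rfl⟩
    refine ⟨isWeight_toWeight G x, h _ (isWeight_toWeight G x) fun v hv => ?_⟩
    have := congrFun (LinearMap.mem_ker.mp hx) ⟨v, hv⟩
    simpa [g, hf] using this

end Build

/-! ### Negative dimension of a connected piece -/

section Tree

variable {V : Type*}

/-- The graph with the edges of `G` having both ends in `S`, on the same vertex set. -/
def restr (G : SimpleGraph V) (S : Finset V) : SimpleGraph V where
  Adj u v := G.Adj u v ∧ u ∈ S ∧ v ∈ S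
  symm := ⟨fun _ _ h => ⟨h.1.symm, h.2.2, h.2.1⟩⟩
  loopless := ⟨fun _ h => G.irrefl h.1⟩

variable [Fintype V] [DecidableEq V] {G H : SimpleGraph V}

theorem IsWeight.row_eq_zero {X : V → V → ℝ} (hX : IsWeight H X) {a : V} (ha : ∀ u, ¬ H.Adj a u)
    (u : V) : X a u = 0 ∧ X u a = 0 :=
  ⟨hX.2 _ _ (ha u), by rw [hX.1]; exact hX.2 _ _ (ha u)⟩

theorem IsWeight.vsum_eq_zero {X : V → V → ℝ} (hX : IsWeight H X) {a : V}
    (ha : ∀ u, ¬ H.Adj a u) : vsum X a = 0 :=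
  Finset.sum_eq_zero fun u _ => (hX.row_eq_zero ha u).1

/-- Adding two pendant edges `ac`, `bc` at one vertex `c` gains a negative dimension: the
difference of the two edges is orthogonal to all other edges. -/
theorem NegDim.add_cherry (hle : H ≤ G) {a b c : V} (hab : a ≠ b) (hac : G.Adj a c)
    (hbc : G.Adj b c) (ha : ∀ u, ¬ H.Adj a u) (hb : ∀ u, ¬ H.Adj b u) {k : ℕ}
    (h : NegDim H k) : NegDim G (k + 1) := by
  have hac' := hac.ne
  have hbc' := hbc.ne
  have w1 := isWeight_edgeInd hac
  have w2 := isWeight_edgeInd hbc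
  refine h.succ LinearMap.id (edgeInd a c + (-1 : ℝ) • edgeInd b c) (w1.add (w2.smul _)) ?_ ?_
  · simp only [qform, bform_add_left, bform_smul_left, bform_add_right, bform_smul_right,
      bform_edgeInd hac' w1.1, bform_edgeInd hac' w2.1, bform_edgeInd hbc' w1.1,
      bform_edgeInd hbc' w2.1, vsum_edgeInd hac', vsum_edgeInd hbc', edgeInd_split hac',
      edgeInd_split hbc']
    simp [hab, hac', hbc', hab.symm, hac'.symm, hbc'.symm]
    try norm_num
  · intro Y hY
    refine ⟨hY.mono hle, rfl, ?_⟩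
    simp only [LinearMap.id_apply, bform_add_left, bform_smul_left, bform_edgeInd hac' hY.1,
      bform_edgeInd hbc' hY.1, hY.vsum_eq_zero ha, hY.vsum_eq_zero hb, (hY.row_eq_zero ha c).1,
      (hY.row_eq_zero hb c).1]
    ring

/-- Attaching a pendant path `a - b - c` at a vertex `c` gains a negative dimension. The edges
`e = ab` and `f = bc` span a hyperbolic plane; subtracting a multiple of `e` from the other edge
weights makes them orthogonal to it without changing the form on them. -/
theorem NegDim.add_path (hle : H ≤ G) {a b c : V} (hca : c ≠ a) (hab : G.Adj a b)
    (hbc : G.Adj b c) (ha : ∀ u, ¬ H.Adj a u) (hb : ∀ u, ¬ H.Adj b u) {k : ℕ}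
    (h : NegDim H k) : NegDim G (k + 1) := by
  have hab' := hab.ne
  have hbc' := hbc.ne
  have w1 := isWeight_edgeInd hab
  have w2 := isWeight_edgeInd hbc
  obtain ⟨s, hs⟩ := vsum_linear c
  have e11 : bform (edgeInd a b) (edgeInd a b) = 0 := by
    simp only [bform_edgeInd hab' w1.1, vsum_edgeInd hab', edgeInd_split hab']
    simp [hab', hab'.symm]
    try norm_num
  have e12 : bform (edgeInd a b) (edgeInd b c) = 1 := by
    simp only [bform_edgeInd hab' w2.1, vsum_edgeInd hbc', edgeInd_split hbc']
    simp [hab', hab'.symm, hbc', hca, hca.symm]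
  have e22 : bform (edgeInd b c) (edgeInd b c) = 0 := by
    simp only [bform_edgeInd hbc' w2.1, vsum_edgeInd hbc', edgeInd_split hbc']
    simp [hbc', hbc'.symm]
    try norm_num
  refine h.succ (LinearMap.id + s.smulRight ((-1 : ℝ) • edgeInd a b))
    (edgeInd a b + (-1 : ℝ) • edgeInd b c) (w1.add (w2.smul _)) ?_ ?_
  · simp only [qform, bform_add_left, bform_smul_left, bform_add_right, bform_smul_right,
      e11, e12, e22, bform_comm (edgeInd b c) (edgeInd a b)]
    norm_num
  · intro Y hY
    have e1 : bform (edgeInd a b) Y = 0 := by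
      simp [bform_edgeInd hab' hY.1, hY.vsum_eq_zero ha, hY.vsum_eq_zero hb,
        (hY.row_eq_zero ha b).1]
    have e2 : bform (edgeInd b c) Y = vsum Y c := by
      simp [bform_edgeInd hbc' hY.1, hY.vsum_eq_zero hb, (hY.row_eq_zero hb c).1]
    have he : (LinearMap.id + s.smulRight ((-1 : ℝ) • edgeInd a b) :
        (V → V → ℝ) →ₗ[ℝ] (V → V → ℝ)) Y = Y + vsum Y c • ((-1 : ℝ) • edgeInd a b) := by
      rw [← hs]; rfl
    rw [he]
    refine ⟨(hY.mono hle).add ((w1.smul _).smul _), ?_, ?_⟩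
    · simp only [qform, bform_add_left, bform_smul_left, bform_add_right, bform_smul_right,
        e11, bform_comm Y (edgeInd a b), e1]
      ring
    · simp only [bform_add_left, bform_smul_left, bform_add_right, bform_smul_right, e11,
        bform_comm (edgeInd b c) (edgeInd a b), e12, e1, e2]
      ring

/-- A vertex set in which every vertex but the root `r` has a neighbour one level lower supports a
negative definite subspace of dimension about half its size: the two deepest vertices of a suitable
cherry or pendant path can be removed, each time gaining one negative dimension. -/
theorem exists_negDim_of_rooted (h : V → ℕ) (r : V) (hr : h r = 0) :
    ∀ (n : ℕ) (S : Finset V), S.card = n → r ∈ S →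
      (∀ v ∈ S, v ≠ r → ∃ u ∈ S, G.Adj u v ∧ h u + 1 = h v) →
      ∃ k, S.card ≤ 2 * k + 2 ∧ NegDim (restr G S) k := by
  intro n
  induction n using Nat.strong_induction_on with
  | _ n ih =>
  intro S hS hrS hpar
  by_cases hn : n ≤ 2
  · exact ⟨0, by omega, NegDim.zero⟩
  have hne : (S.erase r).Nonempty := by
    rw [← Finset.card_pos, Finset.card_erase_of_mem hrS]
    omega
  obtain ⟨w, hw, hmax⟩ := Finset.exists_max_image (S.erase r) h hne
  obtain ⟨hwr, hwS⟩ := Finset.mem_erase.mp hw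
  obtain ⟨v, hvS, hvw, hhv⟩ := hpar w hwS hwr
  have hmax' : ∀ x ∈ S, h x ≤ h w := by
    intro x hx
    by_cases hxr : x = r
    · rw [hxr, hr]
      exact Nat.zero_le _
    · exact hmax x (Finset.mem_erase.mpr ⟨hxr, hx⟩)
  -- Removing two vertices keeps the hypotheses, provided the other vertices keep a lower neighbour.
  have key : ∀ x y, x ∈ S → y ∈ S → x ≠ y → x ≠ r → y ≠ r →
      (∀ z ∈ S, z ≠ r → z ≠ x → z ≠ y → ∃ u ∈ S, u ≠ x ∧ u ≠ y ∧ G.Adj u z ∧ h u + 1 = h z) →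
      (∀ k, NegDim (restr G ((S.erase x).erase y)) k → NegDim (restr G S) (k + 1)) →
      ∃ k, S.card ≤ 2 * k + 2 ∧ NegDim (restr G S) k := by
    intro x y hx hy hxy hxr hyr hz hstep
    have hc : ((S.erase x).erase y).card + 2 = S.card := by
      rw [Finset.card_erase_of_mem (Finset.mem_erase.mpr ⟨hxy.symm, hy⟩),
        Finset.card_erase_of_mem hx]
      omega
    obtain ⟨k, hk, hneg⟩ := ih _ (by omega) ((S.erase x).erase y) rfl
      (by simp [hrS, hxr.symm, hyr.symm]) (by
        intro z hz' hzr
        simp only [Finset.mem_erase] at hz' ⊢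
        obtain ⟨u, h1, h2, h3, h4, h5⟩ := hz z hz'.2.2 hzr hz'.2.1 hz'.1
        exact ⟨u, ⟨h3, h2, h1⟩, h4, h5⟩)
    exact ⟨k + 1, by omega, hstep k hneg⟩
  have hle : ∀ x y, restr G ((S.erase x).erase y) ≤ restr G S := by
    intro x y p q hpq
    simp only [restr, Finset.mem_erase] at hpq ⊢
    exact ⟨hpq.1, hpq.2.1.2.2, hpq.2.2.2.2⟩
  by_cases hw' : ∃ w' ∈ S, w' ≠ r ∧ w' ≠ w ∧ G.Adj v w' ∧ h w' = h w
  · obtain ⟨w', hw'S, hw'r, hw'w, hvw', hhw'⟩ := hw'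
    refine key w w' hwS hw'S hw'w.symm hwr hw'r ?_ ?_
    · intro z hz hzr _ _
      obtain ⟨u, hu, huz, hhu⟩ := hpar z hz hzr
      have := hmax' z hz
      refine ⟨u, hu, ?_, ?_, huz, hhu⟩
      · rintro rfl; omega
      · rintro rfl; omega
    · intro k hk
      refine NegDim.add_cherry (hle w w') hw'w.symm (c := v) ⟨hvw.symm, hwS, hvS⟩
        ⟨hvw'.symm, hw'S, hvS⟩ ?_ ?_ hk
      · intro u hu
        simpa using hu.2.1
      · intro u hu
        simpa using hu.2.1
  · have hvr : v ≠ r := by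
      rintro rfl
      -- Otherwise all vertices but the root have level one, and there are at least two of them.
      have h3 : ((S.erase v).erase w).Nonempty := by
        rw [← Finset.card_pos, Finset.card_erase_of_mem hw, Finset.card_erase_of_mem hrS]
        omega
      obtain ⟨x, hx⟩ := h3
      simp only [Finset.mem_erase] at hx
      obtain ⟨u, hu, hux, hhu⟩ := hpar x hx.2.2 hx.2.1
      have h4 := hmax' x hx.2.2
      have h5 : u = v := by
        by_contra hne
        obtain ⟨t, _, _, ht⟩ := hpar u hu hne
        omega
      subst h5
      exact hw' ⟨x, hx.2.2, hx.2.1, hx.1, hux, by omega⟩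
    obtain ⟨c, hcS, hcv, hhc⟩ := hpar v hvS hvr
    refine key w v hwS hvS hvw.ne.symm hwr hvr ?_ ?_
    · intro z hz hzr hzw _
      obtain ⟨u, hu, huz, hhu⟩ := hpar z hz hzr
      have := hmax' z hz
      refine ⟨u, hu, ?_, ?_, huz, hhu⟩
      · rintro rfl; omega
      · rintro rfl
        exact hw' ⟨z, hz, hzr, hzw, huz, by omega⟩
    · intro k hk
      refine NegDim.add_path (hle w v) (c := c) ?_ ⟨hvw.symm, hwS, hvS⟩
        ⟨hcv.symm, hvS, hcS⟩ ?_ ?_ hk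
      · rintro rfl; omega
      · intro u hu
        simpa using hu.2.1
      · intro u hu
        simpa using hu.2.1

end Tree

/-! ### Vertices of degree at most two -/

section LowDegree

variable {V : Type*} [Fintype V] [DecidableEq V] {H : SimpleGraph V} [DecidableRel H.Adj]
  {S : Finset V} {X : V → V → ℝ}

theorem IsWeight.vsum_sq_le (hX : IsWeight H X) (v : V) (N : Finset V)
    (hN : ∀ u, X v u ≠ 0 → u ∈ N) : vsum X v ^ 2 ≤ N.card * ∑ u, X v u ^ 2 := by
  have h1 : vsum X v = ∑ u ∈ N, X v u := by
    symm
    apply Finset.sum_subset (Finset.subset_univ _)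
    intro u _ hu
    by_contra h
    exact hu (hN u h)
  rw [h1]
  refine sq_sum_le_card_mul_sum_sq.trans ?_
  gcongr
  exact Finset.subset_univ _

theorem IsWeight.vsum_sq_le_two (hX : IsWeight H X) {v : V} (hv : H.degree v ≤ 2) :
    vsum X v ^ 2 ≤ 2 * ∑ u, X v u ^ 2 := by
  refine (hX.vsum_sq_le v (H.neighborFinset v) ?_).trans ?_
  · intro u hu
    rw [SimpleGraph.mem_neighborFinset]
    by_contra h
    exact hu (hX.2 v u h)
  · rw [SimpleGraph.card_neighborFinset_eq_degree]
    have : (H.degree v : ℝ) ≤ 2 := by exact_mod_cast hv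
    gcongr

/-- For an independent set `F`, the form on edge weights with vanishing sums outside `F`. -/
theorem IsWeight.qform_split (hX : IsWeight H X) (F : Finset V)
    (hF : ∀ u ∈ F, ∀ v ∈ F, ¬ H.Adj u v) (h0 : ∀ v, v ∉ F → vsum X v = 0) :
    qform X = ∑ v ∈ F, (vsum X v ^ 2 - 2 * ∑ u, X v u ^ 2)
      - ∑ v ∈ Fᶜ, ∑ u ∈ Fᶜ, X v u ^ 2 := by
  rw [qform_eq, ← Finset.sum_add_sum_compl F]
  have h1 : ∑ v ∈ Fᶜ, (vsum X v ^ 2 - ∑ u, X v u ^ 2)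
      = - ∑ v ∈ F, ∑ u, X v u ^ 2 - ∑ v ∈ Fᶜ, ∑ u ∈ Fᶜ, X v u ^ 2 := by
    have h2 : ∀ v ∈ Fᶜ, vsum X v ^ 2 - ∑ u, X v u ^ 2
        = - ∑ u ∈ F, X v u ^ 2 - ∑ u ∈ Fᶜ, X v u ^ 2 := by
      intro v hv
      rw [h0 v (Finset.mem_compl.mp hv), ← Finset.sum_add_sum_compl F]
      ring
    rw [Finset.sum_congr rfl h2, Finset.sum_sub_distrib, Finset.sum_neg_distrib,
      Finset.sum_comm]
    congr 2
    refine Finset.sum_congr rfl fun u hu => ?_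
    rw [← Finset.sum_add_sum_compl F]
    have h3 : ∑ i ∈ F, X u i ^ 2 = 0 :=
      Finset.sum_eq_zero fun i hi => by rw [hX.2 u i (hF u hu i hi)]; simp
    rw [h3, zero_add]
    exact Finset.sum_congr rfl fun i _ => by rw [hX.1]
  rw [h1]
  simp only [Finset.sum_sub_distrib, ← Finset.mul_sum]
  ring

theorem IsWeight.vsum_eq_zero_of_notMem (hX : IsWeight H X) (hS : ∀ u v, H.Adj u v → u ∈ S)
    {F : Finset V} (h : ∀ v ∈ S, v ∉ F → vsum X v = 0) (v : V) (hv : v ∉ F) : vsum X v = 0 := by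
  by_cases hvS : v ∈ S
  · exact h v hvS hv
  · exact Finset.sum_eq_zero fun u _ => hX.2 v u fun h' => hvS (hS _ _ h')

theorem IsWeight.qform_nonpos (hX : IsWeight H X) {F : Finset V}
    (hF : ∀ u ∈ F, ∀ v ∈ F, ¬ H.Adj u v) (hd : ∀ v ∈ F, H.degree v ≤ 2)
    (h0 : ∀ v, v ∉ F → vsum X v = 0) : qform X ≤ 0 := by
  rw [hX.qform_split F hF h0]
  have h1 : ∑ v ∈ F, (vsum X v ^ 2 - 2 * ∑ u, X v u ^ 2) ≤ 0 :=
    Finset.sum_nonpos fun v hv => by linarith [hX.vsum_sq_le_two (hd v hv)]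
  have h2 : 0 ≤ ∑ v ∈ Fᶜ, ∑ u ∈ Fᶜ, X v u ^ 2 :=
    Finset.sum_nonneg fun v _ => Finset.sum_nonneg fun u _ => sq_nonneg _
  linarith

/-- What the vanishing of the form forces in the situation of `IsWeight.qform_nonpos`. -/
theorem IsWeight.of_qform_nonneg (hX : IsWeight H X) {F : Finset V}
    (hF : ∀ u ∈ F, ∀ v ∈ F, ¬ H.Adj u v) (hd : ∀ v ∈ F, H.degree v ≤ 2)
    (h0 : ∀ v, v ∉ F → vsum X v = 0) (hq : 0 ≤ qform X) :
    (∀ u v, u ∉ F → v ∉ F → X u v = 0) ∧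
      ∀ v ∈ F, vsum X v ^ 2 = 2 * ∑ u, X v u ^ 2 := by
  rw [hX.qform_split F hF h0] at hq
  have h1' : ∀ v ∈ F, vsum X v ^ 2 - 2 * ∑ u, X v u ^ 2 ≤ 0 :=
    fun v hv => by linarith [hX.vsum_sq_le_two (hd v hv)]
  have h1 := Finset.sum_nonpos h1'
  have h2 : 0 ≤ ∑ v ∈ Fᶜ, ∑ u ∈ Fᶜ, X v u ^ 2 :=
    Finset.sum_nonneg fun v _ => Finset.sum_nonneg fun u _ => sq_nonneg _
  constructor
  · intro u v hu hv
    have h3 : ∑ v ∈ Fᶜ, ∑ u ∈ Fᶜ, X v u ^ 2 = 0 := by linarith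
    rw [Finset.sum_eq_zero_iff_of_nonneg
      (fun v _ => Finset.sum_nonneg fun u _ => sq_nonneg _)] at h3
    have h4 := h3 u (Finset.mem_compl.mpr hu)
    rw [Finset.sum_eq_zero_iff_of_nonneg (fun u _ => sq_nonneg _)] at h4
    exact pow_eq_zero_iff (two_ne_zero) |>.mp (h4 v (Finset.mem_compl.mpr hv))
  · intro v hv
    have h3 : ∑ v ∈ F, (vsum X v ^ 2 - 2 * ∑ u, X v u ^ 2) = 0 := by linarith
    have := (Finset.sum_eq_zero_iff_of_nonpos h1').mp h3 v hv
    linarith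

theorem posLe_of_indep (hS : ∀ u v, H.Adj u v → u ∈ S) {F : Finset V}
    (hF : ∀ u ∈ F, ∀ v ∈ F, ¬ H.Adj u v) (hd : ∀ v ∈ F, H.degree v ≤ 2) :
    PosLe H (S \ F).card :=
  PosLe.of_finset _ fun _ hX h => hX.qform_nonpos hF hd <| hX.vsum_eq_zero_of_notMem hS
    fun v hv hvF => h v (Finset.mem_sdiff.mpr ⟨hv, hvF⟩)

/-- Without `k` negative dimensions there are few edges: the weights with vanishing sums outside
a suitable independent set `F` of vertices of degree at most two form a negative definite space.
The condition `hz` excludes isotropic vectors. -/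
theorem card_edge_lt (hS : ∀ u v, H.Adj u v → u ∈ S) {F : Finset V} {k : ℕ} (hk : ¬ NegDim H k)
    (hF : ∀ u ∈ F, ∀ v ∈ F, ¬ H.Adj u v) (hd : ∀ v ∈ F, H.degree v ≤ 2)
    (hz : ∀ X, IsWeight H X → (∀ v, v ∉ F → vsum X v = 0) →
      (∀ u v, u ∉ F → v ∉ F → X u v = 0) →
      (∀ v ∈ F, vsum X v ^ 2 = 2 * ∑ u, X v u ^ 2) → X = 0) :
    H.edgeFinset.card < k + (S \ F).card := by
  by_contra hlt
  refine hk (NegDim.of_finset (S \ F) (not_lt.mp hlt) fun X hX h hX0 => ?_)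
  by_contra hq
  have h0 := hX.vsum_eq_zero_of_notMem hS fun v hv hvF => h v (Finset.mem_sdiff.mpr ⟨hv, hvF⟩)
  obtain ⟨h1, h2⟩ := hX.of_qform_nonneg hF hd h0 (not_lt.mp hq)
  exact hX0 (hz X hX h0 h1 h2)

theorem card_edge_lt_empty (hS : ∀ u v, H.Adj u v → u ∈ S) {k : ℕ} (hk : ¬ NegDim H k) :
    H.edgeFinset.card < k + S.card := by
  have := card_edge_lt hS (F := ∅) hk (by simp) (by simp) (by
    intro X hX _ h _
    ext u v
    exact h u v (by simp) (by simp))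
  simpa using this

theorem card_edge_lt_single (hS : ∀ u v, H.Adj u v → u ∈ S) {k : ℕ} (hk : ¬ NegDim H k) {v : V}
    (hv : H.degree v ≤ 2) (hvS : v ∈ S) : H.edgeFinset.card + 1 < k + S.card := by
  have h1 := card_edge_lt hS (F := {v}) hk (by simp) (by simpa using hv) (by
    intro X hX h0 h _
    simp only [Finset.mem_singleton] at h0 h
    have hcol : ∀ u, X u v = 0 := by
      intro u
      by_cases huv : u = v
      · rw [huv]
        exact hX.2 v v H.irrefl
      · rw [← h0 u huv, vsum, Finset.sum_eq_single v (fun w _ hw => h u w huv hw) (by simp)]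
    ext u w
    by_cases hu : u = v
    · rw [hu, hX.1, hcol]; rfl
    · by_cases hw : w = v
      · rw [hw, hcol]; rfl
      · exact h u w hu hw)
  have h2 : (S \ {v}).card + 1 = S.card := by
    rw [Finset.sdiff_singleton_eq_erase, Finset.card_erase_add_one hvS]
  omega

/-- The pair version: a neighbour `t` of `v` that is not a neighbour of `w` excludes the
alternating weight on a 4-cycle through `v` and `w`. -/
theorem card_edge_lt_pair (hS : ∀ u v, H.Adj u v → u ∈ S) {k : ℕ} (hk : ¬ NegDim H k) {v w t : V}
    (hvw : v ≠ w) (hadj : ¬ H.Adj v w) (hv : H.degree v ≤ 2) (hw : H.degree w ≤ 2)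
    (hvS : v ∈ S) (hwS : w ∈ S) (ht : H.Adj v t) (ht' : ¬ H.Adj w t) :
    H.edgeFinset.card + 2 < k + S.card := by
  have hadj' : ¬ H.Adj w v := fun h => hadj h.symm
  have h1 := card_edge_lt hS (F := {v, w}) hk
    (by simp [hadj, hadj']) (by simp [hv, hw]) (by
    intro X hX h0 h hsq
    simp only [Finset.mem_insert, Finset.mem_singleton, not_or] at h0 h
    have hvv : ∀ a, X a a = 0 := fun a => hX.2 a a H.irrefl
    have hpair : ∀ u, u ≠ v → u ≠ w → X u v + X u w = 0 := by
      intro u huv huw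
      rw [← h0 u ⟨huv, huw⟩, vsum, ← Finset.sum_pair hvw]
      apply Finset.sum_subset (Finset.subset_univ _)
      intro z _ hz
      simp only [Finset.mem_insert, Finset.mem_singleton, not_or] at hz
      exact h u z ⟨huv, huw⟩ hz
    have htv : t ≠ v := ht.ne.symm
    have htw : t ≠ w := by
      rintro rfl
      exact hadj ht
    have htz : X v t = 0 := by
      have := hpair t htv htw
      rw [hX.2 t w (fun h' => ht' h'.symm), add_zero] at this
      rw [hX.1, this]
    -- Only one neighbour of `v` is left, so the sum at `v` is a single weight.
    have hrow : ∀ u, X v u = 0 := by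
      have h3 := hX.vsum_sq_le v ((H.neighborFinset v).erase t) (by
        intro u hu
        rw [Finset.mem_erase, SimpleGraph.mem_neighborFinset]
        refine ⟨?_, ?_⟩
        · rintro rfl
          exact hu htz
        · by_contra h'
          exact hu (hX.2 v u h'))
      have h4 : (((H.neighborFinset v).erase t).card : ℝ) ≤ 1 := by
        have h5 : ((H.neighborFinset v).erase t).card ≤ 1 := by
          rw [Finset.card_erase_of_mem (by simpa using ht),
            SimpleGraph.card_neighborFinset_eq_degree]
          omega
        exact_mod_cast h5
      have h5 := hsq v (by simp)
      have h6 : 0 ≤ ∑ u, X v u ^ 2 := Finset.sum_nonneg fun u _ => sq_nonneg _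
      have h7 : ∑ u, X v u ^ 2 = 0 := by nlinarith
      rw [Finset.sum_eq_zero_iff_of_nonneg (fun u _ => sq_nonneg _)] at h7
      exact fun u => pow_eq_zero_iff two_ne_zero |>.mp (h7 u (Finset.mem_univ u))
    have hroww : ∀ u, X w u = 0 := by
      intro u
      by_cases huv : u = v
      · rw [huv, hX.1, hrow]
      · by_cases huw : u = w
        · rw [huw, hvv]
        · have := hpair u huv huw
          rw [hX.1 u v, hrow, zero_add] at this
          rw [hX.1, this]
    ext a b
    by_cases h1 : a = v
    · rw [h1, hrow]; rfl
    by_cases h2 : a = w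
    · rw [h2, hroww]; rfl
    by_cases h3 : b = v
    · rw [h3, hX.1, hrow]; rfl
    by_cases h4 : b = w
    · rw [h4, hX.1, hroww]; rfl
    exact h a b ⟨h1, h2⟩ ⟨h3, h4⟩)
  have h2 : (S \ {v, w}).card + 2 = S.card := by
    rw [← Finset.card_pair hvw]
    exact Finset.card_sdiff_add_card_eq_card (by
      intro x hx
      simp only [Finset.mem_insert, Finset.mem_singleton] at hx
      rcases hx with rfl | rfl <;> assumption)
  omega

end LowDegree

/-! ### Degree counts in a connected piece -/

section Degrees

variable {V : Type*} [Fintype V] [DecidableEq V] {H : SimpleGraph V} [DecidableRel H.Adj]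
  {S : Finset V}

/-- All edges of `H` lie in `S`, and `S` is connected: it is the only nonempty subset of `S` closed
under adjacency. -/
structure ConnOn (H : SimpleGraph V) (S : Finset V) : Prop where
  mem : ∀ u v, H.Adj u v → u ∈ S
  eq : ∀ T ⊆ S, T.Nonempty → (∀ u ∈ T, ∀ v, H.Adj u v → v ∈ T) → T = S

namespace ConnOn

theorem neighborFinset_subset (hc : ConnOn H S) (v : V) : H.neighborFinset v ⊆ S := by
  intro u hu
  rw [SimpleGraph.mem_neighborFinset] at hu
  exact hc.mem _ _ hu.symm

theorem sum_degree (hc : ConnOn H S) : ∑ v ∈ S, H.degree v = 2 * H.edgeFinset.card := by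
  rw [← SimpleGraph.sum_degrees_eq_twice_card_edges]
  apply Finset.sum_subset (Finset.subset_univ _)
  intro v _ hv
  rw [← SimpleGraph.card_neighborFinset_eq_degree, Finset.card_eq_zero,
    Finset.eq_empty_iff_forall_notMem]
  intro u hu
  rw [SimpleGraph.mem_neighborFinset] at hu
  exact hv (hc.mem _ _ hu)

theorem degree_lt (hc : ConnOn H S) {v : V} (hv : v ∈ S) : H.degree v < S.card := by
  rw [← SimpleGraph.card_neighborFinset_eq_degree]
  apply Finset.card_lt_card
  refine ⟨hc.neighborFinset_subset v, fun h => ?_⟩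
  simpa using h hv

theorem degree_pos (hc : ConnOn H S) (hn : 2 ≤ S.card) {v : V} (hv : v ∈ S) :
    1 ≤ H.degree v := by
  by_contra h0
  have h1 : H.degree v = 0 := by omega
  rw [← SimpleGraph.card_neighborFinset_eq_degree, Finset.card_eq_zero] at h1
  have h2 := hc.eq {v} (by simpa using hv) (by simp) (by
    intro u hu w huw
    rw [Finset.mem_singleton] at hu
    subst hu
    have : w ∈ H.neighborFinset u := by simpa using huw
    simp [h1] at this)
  rw [← h2] at hn
  simp at hn

theorem eq_of_adj {u : V} {N : Finset V} (hN : ∀ x ∈ N, H.Adj u x) (hd : H.degree u ≤ N.card)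
    (w : V) (hw : H.Adj u w) : w ∈ N := by
  have h : N = H.neighborFinset u := Finset.eq_of_subset_of_card_le
    (fun x hx => by simpa using hN x hx) (by simpa using hd)
  rw [h]
  simpa using hw

theorem degree_add (hc : ConnOn H S) (hn : 3 ≤ S.card) {u v : V} (h : H.Adj u v) :
    3 ≤ H.degree u + H.degree v := by
  by_contra hlt
  have hu := hc.degree_pos (by omega) (hc.mem _ _ h)
  have hv := hc.degree_pos (by omega) (hc.mem _ _ h.symm)
  have h2 := hc.eq {u, v} (by
      intro x hx
      simp only [Finset.mem_insert, Finset.mem_singleton] at hx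
      rcases hx with rfl | rfl
      · exact hc.mem _ _ h
      · exact hc.mem _ _ h.symm) (by simp) (by
    intro x hx w hw
    simp only [Finset.mem_insert, Finset.mem_singleton] at hx
    rcases hx with rfl | rfl
    · have := eq_of_adj (N := {v}) (by simpa using h) (by simp; omega) w hw
      simp_all
    · have := eq_of_adj (N := {u}) (by simpa using h.symm) (by simp; omega) w hw
      simp_all)
  rw [← h2] at hn
  have := Finset.card_le_two (a := u) (b := v)
  omega

/-- Three pairwise adjacent vertices of degree at most two would form a triangle component. -/
theorem card_clique_le (hc : ConnOn H S) (hn : 4 ≤ S.card) {W : Finset V}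
    (hd : ∀ v ∈ W, H.degree v ≤ 2) (hW : ∀ u ∈ W, ∀ v ∈ W, u ≠ v → H.Adj u v) : W.card ≤ 2 := by
  by_contra hlt
  obtain ⟨a, ha, b, hb, c, hcW, hab, hac, hbc⟩ := Finset.two_lt_card.mp (not_le.mp hlt)
  have h1 := hW a ha b hb hab
  have h2 := hW a ha c hcW hac
  have h3 := hW b hb c hcW hbc
  have h4 := hc.eq {a, b, c} (by
      intro x hx
      simp only [Finset.mem_insert, Finset.mem_singleton] at hx
      rcases hx with rfl | rfl | rfl
      · exact hc.mem _ _ h1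
      · exact hc.mem _ _ h3
      · exact hc.mem _ _ h3.symm) (by simp) (by
    intro x hx w hw
    simp only [Finset.mem_insert, Finset.mem_singleton] at hx
    rcases hx with rfl | rfl | rfl
    · have := eq_of_adj (N := {b, c}) (by simp [h1, h2])
        (by rw [Finset.card_pair hbc]; exact hd _ ha) w hw
      simp only [Finset.mem_insert, Finset.mem_singleton] at this ⊢
      tauto
    · have := eq_of_adj (N := {a, c}) (by simp [h1.symm, h3])
        (by rw [Finset.card_pair hac]; exact hd _ hb) w hw
      simp only [Finset.mem_insert, Finset.mem_singleton] at this ⊢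
      tauto
    · have := eq_of_adj (N := {a, b}) (by simp [h2.symm, h3.symm])
        (by rw [Finset.card_pair hab]; exact hd _ hcW) w hw
      simp only [Finset.mem_insert, Finset.mem_singleton] at this ⊢
      tauto)
  rw [← h4] at hn
  have := Finset.card_le_three (a := a) (b := b) (c := c)
  omega

/-- If the vertices of degree at most two in `W` are pairwise adjacent, then there are at most two
of them and the degrees in `W` are three on average, up to a defect of at most three. -/
theorem degree_sum_clique (hc : ConnOn H S) (hn : 4 ≤ S.card) {W : Finset V} (hWS : W ⊆ S)
    (hW : ∀ u ∈ W, ∀ v ∈ W, H.degree u ≤ 2 → H.degree v ≤ 2 → u ≠ v → H.Adj u v) :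
    3 * W.card ≤ ∑ v ∈ W, H.degree v + 3 ∧
      (3 * W.card ≤ ∑ v ∈ W, H.degree v + 2 ∨
        ∃ u ∈ W, ∃ v ∈ W, H.Adj u v ∧ H.degree u ≤ 2 ∧ H.degree v ≤ 2 ∧
          ∀ w ∈ W, w ≠ u → w ≠ v → 3 ≤ H.degree w) := by
  set D := W.filter fun v => H.degree v ≤ 2 with hD
  have hD' : ∀ v, v ∈ D ↔ v ∈ W ∧ H.degree v ≤ 2 := fun v => by simp [hD]
  have hcard : D.card ≤ 2 := hc.card_clique_le hn (fun v hv => ((hD' v).mp hv).2)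
    (fun u hu v hv huv => hW u ((hD' u).mp hu).1 v ((hD' v).mp hv).1
      ((hD' u).mp hu).2 ((hD' v).mp hv).2 huv)
  have hsub : D ⊆ W := Finset.filter_subset _ _
  have h1 := Finset.sum_sdiff (f := fun v => H.degree v) hsub
  have h2 := Finset.card_sdiff_add_card_eq_card hsub
  have h3 : 3 * (W \ D).card ≤ ∑ v ∈ W \ D, H.degree v := by
    rw [mul_comm, ← smul_eq_mul]
    refine Finset.card_nsmul_le_sum _ _ _ fun v hv => ?_
    rw [Finset.mem_sdiff, hD'] at hv
    by_contra hlt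
    exact hv.2 ⟨hv.1, by omega⟩
  interval_cases hk : D.card
  · exact ⟨by omega, Or.inl (by omega)⟩
  · obtain ⟨u, hu⟩ := Finset.card_eq_one.mp hk
    have h4 := hc.degree_pos (by omega) (hWS (hsub (by simp [hu] : u ∈ D)))
    rw [hu, Finset.sum_singleton] at h1
    rw [hu] at h3
    rw [hu] at h2
    exact ⟨by omega, Or.inl (by omega)⟩
  · obtain ⟨u, v, huv, hu⟩ := Finset.card_eq_two.mp hk
    have hu' := (hD' u).mp (by simp [hu])
    have hv' := (hD' v).mp (by simp [hu])
    have hadj := hW u hu'.1 v hv'.1 hu'.2 hv'.2 huv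
    have h4 := hc.degree_add (by omega) hadj
    rw [hu, Finset.sum_pair huv] at h1
    rw [hu] at h3
    rw [hu] at h2
    refine ⟨by omega, Or.inr ⟨u, hu'.1, v, hv'.1, hadj, hu'.2, hv'.2, fun w hw hwu hwv => ?_⟩⟩
    by_contra hlt
    have : w ∈ D := (hD' w).mpr ⟨hw, by omega⟩
    rw [hu] at this
    simp [hwu, hwv] at this

end ConnOn

end Degrees

/-! ### Connected pieces with few vertices -/

section Small

variable {V : Type*} [Fintype V] [DecidableEq V] {H : SimpleGraph V} [DecidableRel H.Adj]
  {S : Finset V}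

namespace ConnOn

theorem posLe_zero (hc : ConnOn H S) (hn : S.card ≤ 2) : PosLe H 0 := by
  refine ⟨0, fun X hX _ => ?_⟩
  rw [qform_eq]
  refine Finset.sum_nonpos fun v _ => ?_
  have h1 := hX.vsum_sq_le v (H.neighborFinset v) (by
    intro u hu
    rw [SimpleGraph.mem_neighborFinset]
    by_contra h
    exact hu (hX.2 v u h))
  have h2 : (H.neighborFinset v).card ≤ 1 := by
    by_cases hv : v ∈ S
    · have := hc.degree_lt hv
      rw [SimpleGraph.card_neighborFinset_eq_degree]
      omega
    · have : H.neighborFinset v = ∅ := by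
        rw [Finset.eq_empty_iff_forall_notMem]
        intro u hu
        rw [SimpleGraph.mem_neighborFinset] at hu
        exact hv (hc.mem _ _ hu)
      simp [this]
  have h3 : ((H.neighborFinset v).card : ℝ) ≤ 1 := by exact_mod_cast h2
  have h4 : 0 ≤ ∑ u, X v u ^ 2 := Finset.sum_nonneg fun u _ => sq_nonneg _
  nlinarith

theorem sum_eq (hc : ConnOn H S) {X : V → V → ℝ} (hX : IsWeight H X) (f : ℝ → ℝ) (hf : f 0 = 0)
    (v : V) : ∑ u, f (X v u) = ∑ u ∈ S, f (X v u) := by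
  symm
  apply Finset.sum_subset (Finset.subset_univ _)
  intro u _ hu
  rw [hX.2 v u fun h => hu (hc.mem _ _ h.symm), hf]

theorem qform_eq_sum (hc : ConnOn H S) {X : V → V → ℝ} (hX : IsWeight H X) :
    qform X = ∑ v ∈ S, ((∑ u ∈ S, X v u) ^ 2 - ∑ u ∈ S, X v u ^ 2) := by
  have h1 : ∀ v, vsum X v = ∑ u ∈ S, X v u := fun v => hc.sum_eq hX (fun x => x) rfl v
  have h2 : ∀ v, ∑ u, X v u ^ 2 = ∑ u ∈ S, X v u ^ 2 :=
    fun v => hc.sum_eq hX (fun x => x ^ 2) (by simp) v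
  simp only [qform_eq, h1, h2]
  symm
  apply Finset.sum_subset (Finset.subset_univ _)
  intro v _ hv
  have h0 : ∀ u, X v u = 0 := fun u => hX.2 v u fun h => hv (hc.mem _ _ h)
  simp [h0]

/-- The line graph of `K₄` is the octahedron, which has a single positive eigenvalue; the form is
nonpositive on the weights of total sum zero. -/
theorem posLe_one (hc : ConnOn H S) (hn : S.card = 3 ∨ S.card = 4) : PosLe H 1 := by
  let f : (V → V → ℝ) →ₗ[ℝ] (Fin 1 → ℝ) :=
    { toFun := fun X _ => ∑ v ∈ S, ∑ u ∈ S, X v u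
      map_add' := fun X Y => by
        ext
        simp [Finset.sum_add_distrib]
      map_smul' := fun c X => by
        ext
        simp [Finset.mul_sum] }
  refine ⟨f, fun X hX h0 => ?_⟩
  have h0' : ∑ v ∈ S, ∑ u ∈ S, X v u = 0 := congrFun h0 0
  rw [hc.qform_eq_sum hX]
  have hd : ∀ v, X v v = 0 := fun v => hX.2 v v H.irrefl
  rcases hn with hn | hn
  · obtain ⟨a, b, c, hab, hac, hbc, rfl⟩ := Finset.card_eq_three.mp hn
    have hS : ∀ g : V → ℝ, ∑ v ∈ ({a, b, c} : Finset V), g v = g a + g b + g c := by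
      intro g
      rw [Finset.sum_insert (by simp [hab, hac]), Finset.sum_pair hbc]
      ring
    simp only [hS, hd, hX.1 b a, hX.1 c a, hX.1 c b] at h0' ⊢
    have h1 : X a c = - X a b - X b c := by linarith
    rw [h1]
    nlinarith [sq_nonneg (X a b + X b c), sq_nonneg (X a b), sq_nonneg (X b c)]
  · obtain ⟨a, T, haT, rfl, hT⟩ := Finset.card_eq_succ.mp hn
    obtain ⟨b, c, d, hbc, hbd, hcd, rfl⟩ := Finset.card_eq_three.mp hT
    have hS : ∀ g : V → ℝ, ∑ v ∈ (insert a {b, c, d} : Finset V), g v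
        = g a + g b + g c + g d := by
      intro g
      rw [Finset.sum_insert haT, Finset.sum_insert (by simp [hbc, hbd]), Finset.sum_pair hcd]
      ring
    simp only [hS, hd, hX.1 b a, hX.1 c a, hX.1 c b, hX.1 d a, hX.1 d b, hX.1 d c] at h0' ⊢
    have h1 : X a b = - X a c - X a d - X b c - X b d - X c d := by linarith
    have h2 : 0 ≤ (X a b + X c d) ^ 2 + (X a c + X b d) ^ 2 + (X a d + X b c) ^ 2 := by positivity
    rw [h1] at h2 ⊢
    nlinarith

theorem posLe_card (hc : ConnOn H S) : PosLe H S.card := by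
  have := posLe_of_indep (S := S) (F := ∅) hc.mem (by simp) (by simp)
  simpa using this

theorem card_edge_le (hc : ConnOn H S) {a : ℕ} (ha : ¬ NegDim H (a + 1)) :
    H.edgeFinset.card ≤ a + S.card := by
  have := card_edge_lt_empty hc.mem ha
  omega

theorem card_edge_succ_le (hc : ConnOn H S) {a : ℕ} (ha : ¬ NegDim H (a + 1)) {v : V} (hv : v ∈ S)
    (hd : H.degree v ≤ 2) : H.edgeFinset.card + 1 ≤ a + S.card := by
  have := card_edge_lt_single hc.mem ha hd hv
  omega

theorem posLe_single (hc : ConnOn H S) {v : V} (hv : v ∈ S) (hd : H.degree v ≤ 2) :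
    PosLe H (S.card - 1) := by
  have := posLe_of_indep (S := S) (F := {v}) hc.mem (by simp) (by simpa using hd)
  rwa [Finset.sdiff_singleton_eq_erase, Finset.card_erase_of_mem hv] at this

theorem posLe_pair (hc : ConnOn H S) {u v : V} (hu : u ∈ S) (hv : v ∈ S) (hne : u ≠ v)
    (huv : ¬ H.Adj u v) (hdu : H.degree u ≤ 2) (hdv : H.degree v ≤ 2) :
    PosLe H (S.card - 2) := by
  have huv' : ¬ H.Adj v u := fun h => huv h.symm
  have := posLe_of_indep (S := S) (F := {u, v}) hc.mem (by simp [huv, huv']) (by simp [hdu, hdv])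
  rwa [Finset.card_sdiff_of_subset (by
    simp only [Finset.insert_subset_iff, Finset.singleton_subset_iff]
    exact ⟨hu, hv⟩), Finset.card_pair hne] at this

theorem posLe_triple (hc : ConnOn H S) {u v w : V} (hu : u ∈ S) (hv : v ∈ S) (hw : w ∈ S)
    (hne : u ≠ v) (hne' : u ≠ w) (hne'' : v ≠ w)
    (huv : ¬ H.Adj u v) (huw : ¬ H.Adj u w) (hvw : ¬ H.Adj v w)
    (hdu : H.degree u ≤ 2) (hdv : H.degree v ≤ 2) (hdw : H.degree w ≤ 2) :
    PosLe H (S.card - 3) := by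
  have huv' : ¬ H.Adj v u := fun h => huv h.symm
  have huw' : ¬ H.Adj w u := fun h => huw h.symm
  have hvw' : ¬ H.Adj w v := fun h => hvw h.symm
  have := posLe_of_indep (S := S) (F := {u, v, w}) hc.mem
    (by simp [huv, huv', huw, huw', hvw, hvw']) (by simp [hdu, hdv, hdw])
  rwa [Finset.card_sdiff_of_subset (by
    simp only [Finset.insert_subset_iff, Finset.singleton_subset_iff]
    exact ⟨hu, hv, hw⟩), Finset.card_eq_three.mpr ⟨u, v, w, hne, hne', hne'', rfl⟩] at this

theorem three_mul_le (hc : ConnOn H S) :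
    3 * S.card ≤ 2 * H.edgeFinset.card ∨ ∃ v ∈ S, H.degree v ≤ 2 := by
  by_cases h : ∃ v ∈ S, H.degree v ≤ 2
  · exact Or.inr h
  · push Not at h
    left
    rw [← hc.sum_degree, mul_comm, ← smul_eq_mul]
    exact Finset.card_nsmul_le_sum _ _ _ fun v hv => h v hv

theorem posLe_six (hc : ConnOn H S) (ha : ¬ NegDim H 4) (hn : S.card ≤ 8) : PosLe H 6 := by
  by_cases hn6 : S.card ≤ 6
  · exact hc.posLe_card.mono hn6
  rcases hc.three_mul_le with h | ⟨v, hv, hd⟩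
  · have := hc.card_edge_le ha
    omega
  by_cases hn7 : S.card = 7
  · have := hc.posLe_single hv hd
    rwa [hn7] at this
  have hn8 : S.card = 8 := by omega
  by_contra hP
  have h1 := hc.card_edge_succ_le ha hv hd
  have h2 := hc.degree_sum_clique (by omega) (Finset.Subset.refl S) (by
    intro u hu w hw hdu hdw hne
    by_contra hadj
    have := hc.posLe_pair hu hw hne hadj hdu hdw
    rw [hn8] at this
    exact hP this)
  rw [hc.sum_degree] at h2
  omega

theorem posLe_three_of_five (hc : ConnOn H S) (ha : ¬ NegDim H 3) (hn : S.card = 5) :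
    PosLe H 3 := by
  by_contra hP
  rcases hc.three_mul_le with h | ⟨v, hv, hd⟩
  · have := hc.card_edge_le ha
    omega
  have h1 := hc.card_edge_succ_le ha hv hd
  obtain ⟨-, h | ⟨x, hx, y, hy, hxy, hdx, hdy, hU⟩⟩ :=
    hc.degree_sum_clique (by omega) (Finset.Subset.refl S) (by
    intro u hu w hw hdu hdw hne
    by_contra hadj
    have := hc.posLe_pair hu hw hne hadj hdu hdw
    rw [hn] at this
    exact hP this)
  · rw [hc.sum_degree] at h
    omega
  -- The three vertices outside `{x, y}` have degree at least three, so each is adjacent to `x` or `y`.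
  have hsub : (S.erase x).erase y ⊆
      (H.neighborFinset x).erase y ∪ (H.neighborFinset y).erase x := by
    intro w hw
    simp only [Finset.mem_erase] at hw
    have hdw := hU w hw.2.2 hw.2.1 hw.1
    by_contra hnot
    simp only [Finset.mem_union, Finset.mem_erase, SimpleGraph.mem_neighborFinset, not_or,
      not_and] at hnot
    have h2 : H.neighborFinset w ⊆ ((S.erase x).erase y).erase w := by
      intro z hz
      rw [SimpleGraph.mem_neighborFinset] at hz
      simp only [Finset.mem_erase]
      refine ⟨hz.ne.symm, ?_, ?_, hc.mem _ _ hz.symm⟩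
      · rintro rfl
        exact hnot.2 hw.2.1 hz.symm
      · rintro rfl
        exact hnot.1 hw.1 hz.symm
    have h3 := Finset.card_le_card h2
    rw [SimpleGraph.card_neighborFinset_eq_degree, Finset.card_erase_of_mem (by simp [hw]),
      Finset.card_erase_of_mem (by simp [hy, hxy.ne.symm]), Finset.card_erase_of_mem hx] at h3
    omega
  have h2 := (Finset.card_le_card hsub).trans (Finset.card_union_le _ _)
  rw [Finset.card_erase_of_mem (by simp [hy, hxy.ne.symm]), Finset.card_erase_of_mem hx,
    Finset.card_erase_of_mem (by simpa using hxy), Finset.card_erase_of_mem (by simpa using hxy.symm),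
    SimpleGraph.card_neighborFinset_eq_degree, SimpleGraph.card_neighborFinset_eq_degree] at h2
  omega

end ConnOn

end Small

/-! ### Connected pieces with six vertices -/

section Six

variable {V : Type*} [Fintype V] [DecidableEq V] {H : SimpleGraph V} [DecidableRel H.Adj]
  {S : Finset V}

namespace ConnOn

/-- The nonneighbours of low degree of a vertex `x` of low degree are pairwise adjacent, unless
three functionals suffice. -/
theorem adj_of_not_posLe (hc : ConnOn H S) (hn : S.card = 6) (hP : ¬ PosLe H 3) {x : V} (hx : x ∈ S)
    (hdx : H.degree x ≤ 2) {W : Finset V} (hWS : W ⊆ S) (hW : ∀ w ∈ W, w ≠ x ∧ ¬ H.Adj x w) :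
    ∀ u ∈ W, ∀ v ∈ W, H.degree u ≤ 2 → H.degree v ≤ 2 → u ≠ v → H.Adj u v := by
  intro u hu v hv hdu hdv hne
  by_contra hadj
  have := hc.posLe_triple hx (hWS hu) (hWS hv) (hW u hu).1.symm (hW v hv).1.symm hne
    (hW u hu).2 (hW v hv).2 hadj hdx hdu hdv
  rw [hn] at this
  exact hP this

/-- Two adjacent vertices `u`, `v` besides a leaf `x` and its neighbour `y`, with `u` a leaf too,
leave two vertices that cannot both have degree three. -/
theorem no_two_leaves (hc : ConnOn H S) (hn : S.card = 6) {x y u v : V} (hxy : H.Adj x y)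
    (hdx : H.degree x ≤ 1) (hdy : H.degree y ≤ 2) (huv : H.Adj u v) (hdu : H.degree u ≤ 1)
    (hux : u ≠ x) (huy : u ≠ y) (hvx : v ≠ x) (hvy : v ≠ y)
    (hR : ∀ w ∈ S, w ≠ x → w ≠ y → w ≠ u → w ≠ v → 3 ≤ H.degree w) : False := by
  have hxS := hc.mem _ _ hxy
  have hyS := hc.mem _ _ hxy.symm
  have huS := hc.mem _ _ huv
  have hvS := hc.mem _ _ huv.symm
  have hNx : ∀ w, H.Adj x w → w = y := fun w hw => by
    simpa using eq_of_adj (N := {y}) (by simpa using hxy) (by simpa using hdx) w hw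
  have hNu : ∀ w, H.Adj u w → w = v := fun w hw => by
    simpa using eq_of_adj (N := {v}) (by simpa using huv) (by simpa using hdu) w hw
  set R := (((S.erase x).erase y).erase u).erase v with hRdef
  have hRcard : R.card = 2 := by
    rw [hRdef, Finset.card_erase_of_mem (by simp [hvS, hvx, hvy, huv.ne.symm]),
      Finset.card_erase_of_mem (by simp [huS, hux, huy]),
      Finset.card_erase_of_mem (by simp [hyS, hxy.ne.symm]), Finset.card_erase_of_mem hxS, hn]
  have hmem : ∀ w, w ∈ R ↔ w ≠ v ∧ w ≠ u ∧ w ≠ y ∧ w ≠ x ∧ w ∈ S := by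
    intro w
    simp [hRdef]
  have hadj : ∀ w ∈ R, H.Adj y w := by
    intro w hw
    have hw' := (hmem w).mp hw
    by_contra hyw
    have hsub : H.neighborFinset w ⊆ insert v (R.erase w) := by
      intro z hz
      rw [SimpleGraph.mem_neighborFinset] at hz
      rw [Finset.mem_insert, Finset.mem_erase, hmem]
      by_cases hzv : z = v
      · exact Or.inl hzv
      refine Or.inr ⟨hz.ne.symm, hzv, ?_, ?_, ?_, hc.mem _ _ hz.symm⟩
      · rintro rfl
        exact hw'.1 (hNu w hz.symm)
      · rintro rfl
        exact hyw hz.symm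
      · rintro rfl
        exact hw'.2.2.1 (hNx w hz.symm)
    have h1 := (Finset.card_le_card hsub).trans (Finset.card_insert_le _ _)
    rw [SimpleGraph.card_neighborFinset_eq_degree, Finset.card_erase_of_mem hw] at h1
    have := hR w hw'.2.2.2.2 hw'.2.2.2.1 hw'.2.2.1 hw'.2.1 hw'.1
    omega
  have hsub : insert x R ⊆ H.neighborFinset y := by
    intro z hz
    rw [SimpleGraph.mem_neighborFinset]
    rcases Finset.mem_insert.mp hz with rfl | hz
    · exact hxy.symm
    · exact hadj z hz
  have h1 := Finset.card_le_card hsub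
  rw [Finset.card_insert_of_notMem (by simp [hRdef]),
    SimpleGraph.card_neighborFinset_eq_degree] at h1
  omega

theorem posLe_three_of_sparse (hc : ConnOn H S) (hn : S.card = 6)
    (hm : H.edgeFinset.card ≤ 6) : PosLe H 3 := by
  by_contra hP
  have hsum := hc.sum_degree
  by_cases hleaf : ∃ x ∈ S, H.degree x ≤ 1
  · obtain ⟨x, hx, hdx⟩ := hleaf
    have hdx1 := hc.degree_pos (by omega) hx
    obtain ⟨y, hxy⟩ := (H.degree_pos_iff_exists_adj x).mp hdx1
    have hNx : ∀ w, H.Adj x w → w = y := fun w hw => by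
      simpa using eq_of_adj (N := {y}) (by simpa using hxy) (by simpa using hdx) w hw
    have hyS := hc.mem _ _ hxy.symm
    have hdxy := hc.degree_add (by omega) hxy
    have hyx : y ∈ S.erase x := by simp [hyS, hxy.ne.symm]
    set W := (S.erase x).erase y with hW
    have hmem : ∀ w, w ∈ W ↔ w ≠ y ∧ w ≠ x ∧ w ∈ S := by simp [hW]
    have hWcard : W.card = 4 := by
      rw [hW, Finset.card_erase_of_mem hyx, Finset.card_erase_of_mem hx, hn]
    have hWS : W ⊆ S := fun w hw => ((hmem w).mp hw).2.2
    have hsumW : ∑ v ∈ W, H.degree v + H.degree y + H.degree x = ∑ v ∈ S, H.degree v := by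
      rw [hW, Finset.sum_erase_add _ _ hyx, Finset.sum_erase_add _ _ hx]
    obtain ⟨h1, h2 | ⟨u, hu, v, hv, huv, hdu, hdv, hU⟩⟩ := hc.degree_sum_clique (by omega) hWS
      (hc.adj_of_not_posLe hn hP hx (by omega) hWS fun w hw =>
        ⟨((hmem w).mp hw).2.1, fun h => ((hmem w).mp hw).1 (hNx w h)⟩)
    · omega
    have hvu : v ∈ W.erase u := by simp [hv, huv.ne.symm]
    have hsumR : ∑ w ∈ (W.erase u).erase v, H.degree w + H.degree v + H.degree u
        = ∑ w ∈ W, H.degree w := by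
      rw [Finset.sum_erase_add _ _ hvu, Finset.sum_erase_add _ _ hu]
    have hRcard : ((W.erase u).erase v).card = 2 := by
      rw [Finset.card_erase_of_mem hvu, Finset.card_erase_of_mem hu, hWcard]
    have hR : ((W.erase u).erase v).card • 3 ≤ ∑ w ∈ (W.erase u).erase v, H.degree w := by
      refine Finset.card_nsmul_le_sum _ _ _ fun w hw => ?_
      simp only [Finset.mem_erase] at hw
      exact hU w hw.2.2 hw.2.1 hw.1
    rw [hRcard, smul_eq_mul] at hR
    have hu' := (hmem u).mp hu
    have hv' := (hmem v).mp hv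
    have hor : H.degree u ≤ 1 ∨ H.degree v ≤ 1 := by omega
    rcases hor with h | h
    · exact hc.no_two_leaves hn hxy hdx (by omega) huv h hu'.2.1 hu'.1 hv'.2.1 hv'.1
        fun w hw hwx hwy hwu hwv => hU w ((hmem w).mpr ⟨hwy, hwx, hw⟩) hwu hwv
    · exact hc.no_two_leaves hn hxy hdx (by omega) huv.symm h hv'.2.1 hv'.1 hu'.2.1 hu'.1
        fun w hw hwx hwy hwv hwu => hU w ((hmem w).mpr ⟨hwy, hwx, hw⟩) hwu hwv
  · push Not at hleaf
    -- All degrees are two, so three nonneighbours of a vertex would form a triangle.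
    have hdeg : ∀ v ∈ S, H.degree v ≤ 2 := by
      intro v hv
      by_contra hlt
      have h1 := Finset.sum_erase_add S (fun v => H.degree v) hv
      have h2 : (S.erase v).card • 2 ≤ ∑ w ∈ S.erase v, H.degree w :=
        Finset.card_nsmul_le_sum _ _ _ fun w hw => hleaf w (Finset.mem_of_mem_erase hw)
      rw [Finset.card_erase_of_mem hv, smul_eq_mul] at h2
      omega
    obtain ⟨x, hx⟩ := Finset.card_pos.mp (by omega : 0 < S.card)
    set W := S \ insert x (H.neighborFinset x) with hW
    have hmem : ∀ w, w ∈ W ↔ w ∈ S ∧ w ≠ x ∧ ¬ H.Adj x w := by simp [hW]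
    have hWS : W ⊆ S := Finset.sdiff_subset
    have h1 := hc.adj_of_not_posLe hn hP hx (hdeg x hx) hWS fun w hw => ((hmem w).mp hw).2
    have h2 := hc.card_clique_le (by omega) (fun v hv => hdeg v (hWS hv))
      fun u hu v hv => h1 u hu v hv (hdeg u (hWS hu)) (hdeg v (hWS hv))
    have h3 := Finset.le_card_sdiff (insert x (H.neighborFinset x)) S
    have h4 := Finset.card_insert_le x (H.neighborFinset x)
    rw [SimpleGraph.card_neighborFinset_eq_degree] at h4
    rw [← hW] at h3
    have := hdeg x hx
    omega

/-- Twins of low degree force too many edges, as all vertices outside their common neighbourhood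
have degree at least three. -/
theorem card_edge_of_twins (hc : ConnOn H S) (hn : S.card = 6) (hP : ¬ PosLe H 3) {v w : V}
    (hv : v ∈ S) (hw : w ∈ S) (hne : v ≠ w) (hadj : ¬ H.Adj v w) (hdv : H.degree v ≤ 2)
    (hdw : H.degree w ≤ 2) (htwin : ∀ t, H.Adj v t ↔ H.Adj w t) : 8 ≤ H.edgeFinset.card := by
  have hsum := hc.sum_degree
  have hdv1 := hc.degree_pos (by omega) hv
  have hNeq : H.neighborFinset w = H.neighborFinset v := by
    ext t
    simp [htwin]
  have hdeq : H.degree w = H.degree v := by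
    rw [← SimpleGraph.card_neighborFinset_eq_degree, hNeq,
      SimpleGraph.card_neighborFinset_eq_degree]
  set N := H.neighborFinset v with hN
  have hNcard : N.card = H.degree v := SimpleGraph.card_neighborFinset_eq_degree _ _
  have hmemN : ∀ t, t ∈ N ↔ H.Adj v t := by simp [hN]
  have hwv : w ∈ S.erase v := by simp [hw, hne.symm]
  have hNsub : N ⊆ (S.erase v).erase w := by
    intro t ht
    rw [hmemN] at ht
    simp only [Finset.mem_erase]
    refine ⟨?_, ht.ne.symm, hc.mem _ _ ht.symm⟩
    rintro rfl
    exact hadj ht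
  set Y := (S.erase v).erase w \ N with hY
  have hYcard : Y.card + N.card = 4 := by
    rw [hY, Finset.card_sdiff_add_card_eq_card hNsub, Finset.card_erase_of_mem hwv,
      Finset.card_erase_of_mem hv, hn]
  have hmemY : ∀ t, t ∈ Y ↔ (t ≠ w ∧ t ≠ v ∧ t ∈ S) ∧ ¬ H.Adj v t := by simp [hY, hmemN]
  have hsumS : ∑ t ∈ Y, H.degree t + ∑ t ∈ N, H.degree t + H.degree w + H.degree v
      = ∑ t ∈ S, H.degree t := by
    rw [hY, Finset.sum_sdiff hNsub, Finset.sum_erase_add _ _ hwv, Finset.sum_erase_add _ _ hv]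
  have hYdeg : ∀ y ∈ Y, 3 ≤ H.degree y := by
    intro y hy
    have hy' := (hmemY y).mp hy
    by_contra hlt
    have := hc.posLe_triple hv hw hy'.1.2.2 hne hy'.1.2.1.symm hy'.1.1.symm hadj hy'.2
      (fun h => hy'.2 ((htwin y).mpr h)) hdv hdw (by omega)
    rw [hn] at this
    exact hP this
  have hYadj : ∀ y ∈ Y, ∀ t ∈ N, H.Adj y t := by
    intro y hy t ht
    have hy' := (hmemY y).mp hy
    by_contra hyt
    have hsub : H.neighborFinset y ⊆ ((Y ∪ N).erase t).erase y := by
      intro z hz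
      rw [SimpleGraph.mem_neighborFinset] at hz
      simp only [Finset.mem_erase, Finset.mem_union, hmemY, hmemN]
      refine ⟨hz.ne.symm, ?_, ?_⟩
      · rintro rfl
        exact hyt hz
      · by_cases hvz : H.Adj v z
        · exact Or.inr hvz
        · refine Or.inl ⟨⟨?_, ?_, hc.mem _ _ hz.symm⟩, hvz⟩
          · rintro rfl
            exact hy'.2 ((htwin y).mpr hz.symm)
          · rintro rfl
            exact hy'.2 hz.symm
    have h1 := Finset.card_le_card hsub
    have hyt' : y ≠ t := by
      rintro rfl
      exact hy'.2 ((hmemN _).mp ht)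
    rw [SimpleGraph.card_neighborFinset_eq_degree, Finset.card_erase_of_mem (by simp [hy, hyt']),
      Finset.card_erase_of_mem (by simp [ht])] at h1
    have := Finset.card_union_le Y N
    have := hYdeg y hy
    omega
  have hNdeg : ∀ t ∈ N, Y.card + 2 ≤ H.degree t := by
    intro t ht
    have hvt := (hmemN t).mp ht
    have hsub : insert v (insert w Y) ⊆ H.neighborFinset t := by
      intro z hz
      rw [SimpleGraph.mem_neighborFinset]
      simp only [Finset.mem_insert] at hz
      rcases hz with rfl | rfl | hz
      · exact hvt.symm
      · exact ((htwin t).mp hvt).symm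
      · exact (hYadj z hz t ht).symm
    have h1 := Finset.card_le_card hsub
    rwa [Finset.card_insert_of_notMem (by simp [hmemY, hne]),
      Finset.card_insert_of_notMem (by simp [hmemY]),
      SimpleGraph.card_neighborFinset_eq_degree] at h1
  have h1 : Y.card • 3 ≤ ∑ t ∈ Y, H.degree t := Finset.card_nsmul_le_sum _ _ _ hYdeg
  have h2 : N.card • (Y.card + 2) ≤ ∑ t ∈ N, H.degree t := Finset.card_nsmul_le_sum _ _ _ hNdeg
  rw [smul_eq_mul] at h1 h2
  rw [hNcard] at h2 hYcard
  have h3 : H.degree v = 1 ∨ H.degree v = 2 := by omega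
  rcases h3 with h3 | h3
  · rw [h3] at h2 hYcard
    omega
  · rw [h3] at h2 hYcard
    omega

theorem posLe_three_of_six (hc : ConnOn H S) (ha : ¬ NegDim H 3) (hn : S.card = 6) :
    PosLe H 3 := by
  by_contra hP
  rcases hc.three_mul_le with h | ⟨x, hx, hdx⟩
  · have := hc.card_edge_le ha
    omega
  have h1 := hc.card_edge_succ_le ha hx hdx
  have h2 := hc.degree_sum_clique (by omega) (Finset.Subset.refl S) (by
    intro v hv w hw hdv hdw hne
    by_contra hadj
    have htwin : ∀ v ∈ S, ∀ w ∈ S, H.degree v ≤ 2 → H.degree w ≤ 2 → v ≠ w → ¬ H.Adj v w →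
        ∀ t, H.Adj v t → H.Adj w t := by
      intro v hv w hw hdv hdw hne hadj t ht
      by_contra ht'
      have := card_edge_lt_pair hc.mem ha hne hadj hdv hdw hv hw ht ht'
      exact hP (hc.posLe_three_of_sparse hn (by omega))
    have := hc.card_edge_of_twins hn hP hv hw hne hadj hdv hdw fun t =>
      ⟨htwin v hv w hw hdv hdw hne hadj t,
        htwin w hw v hv hdw hdv hne.symm (fun h => hadj h.symm) t⟩
    omega)
  rw [hc.sum_degree] at h2
  omega

/-- The two inequalities for a connected piece, given the bound `S.card ≤ 2 * k + 2` in terms of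
the negative dimension. -/
theorem exists_bounds (hc : ConnOn H S) (hk : ∃ k, S.card ≤ 2 * k + 2 ∧ NegDim H k) :
    ∃ a p, NegDim H a ∧ PosLe H p ∧ p ≤ 3 * a ∧ 2 * p ≤ a * (a + 1) := by
  obtain ⟨k, hk, hneg⟩ := hk
  -- the largest `a` with `NegDim H a`
  obtain ⟨a, ha, hmax⟩ : ∃ a, NegDim H a ∧ ¬ NegDim H (a + 1) := by
    by_contra hcon
    push Not at hcon
    have hall : ∀ a, NegDim H a := by
      intro a
      induction a with
      | zero => exact NegDim.zero
      | succ a ih => exact hcon a ih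
    have := NegDim.le_negInertia H (hall (H.lineGraph.negInertia + 1))
    omega
  have hka : k ≤ a := by
    by_contra hlt
    exact hmax (hneg.mono (by omega))
  by_cases h2 : S.card ≤ 2
  · exact ⟨a, 0, ha, hc.posLe_zero h2, by omega, by omega⟩
  by_cases h4 : S.card ≤ 4
  · exact ⟨a, 1, ha, hc.posLe_one (by omega), by omega, by nlinarith [show 1 ≤ a by omega]⟩
  by_cases ha4 : 4 ≤ a
  · exact ⟨a, S.card, ha, hc.posLe_card, by omega, by nlinarith⟩
  have ha23 : a = 2 ∨ a = 3 := by omega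
  rcases ha23 with rfl | rfl
  · refine ⟨2, 3, ha, ?_, by omega, by omega⟩
    by_cases h5 : S.card = 5
    · exact hc.posLe_three_of_five hmax h5
    · exact hc.posLe_three_of_six hmax (by omega)
  · exact ⟨3, 6, ha, hc.posLe_six hmax (by omega), by omega, by omega⟩

end ConnOn

end Six

/-! ### Gluing components -/

section Glue

variable {V : Type*} [Fintype V] {H H₁ H₂ : SimpleGraph V} {S : Finset V}

theorem bform_eq_zero_of_disjoint (h₁ : ∀ u v, H₁.Adj u v → u ∈ S)
    (h₂ : ∀ u v, H₂.Adj u v → u ∉ S) {X Y : V → V → ℝ} (hX : IsWeight H₁ X)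
    (hY : IsWeight H₂ Y) : bform X Y = 0 := by
  refine Finset.sum_eq_zero fun v _ => ?_
  by_cases hv : v ∈ S
  · have h0 : ∀ u, Y v u = 0 := fun u => hY.2 v u fun h => h₂ _ _ h hv
    simp [vsum, h0]
  · have h0 : ∀ u, X v u = 0 := fun u => hX.2 v u fun h => hv (h₁ _ _ h)
    simp [vsum, h0]

theorem NegDim.glue (hle₁ : H₁ ≤ H) (hle₂ : H₂ ≤ H) (h₁ : ∀ u v, H₁.Adj u v → u ∈ S)
    (h₂ : ∀ u v, H₂.Adj u v → u ∉ S) {a b : ℕ} (ha : NegDim H₁ a) (hb : NegDim H₂ b) :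
    NegDim H (a + b) := by
  obtain ⟨f, hf⟩ := ha
  obtain ⟨g, hg⟩ := hb
  refine ⟨f ∘ₗ LinearMap.funLeft ℝ ℝ (Fin.castAdd b) + g ∘ₗ LinearMap.funLeft ℝ ℝ (Fin.natAdd a),
    fun z => ?_⟩
  set x := LinearMap.funLeft ℝ ℝ (Fin.castAdd b) z with hx
  set y := LinearMap.funLeft ℝ ℝ (Fin.natAdd a) z with hy
  have he : (f ∘ₗ LinearMap.funLeft ℝ ℝ (Fin.castAdd b)
      + g ∘ₗ LinearMap.funLeft ℝ ℝ (Fin.natAdd a)) z = f x + g y := rfl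
  rw [he]
  refine ⟨((hf x).1.mono hle₁).add ((hg y).1.mono hle₂), fun hz => ?_⟩
  rw [qform_add, bform_eq_zero_of_disjoint h₁ h₂ (hf x).1 (hg y).1]
  have h0 : ∀ (k : ℕ) (l : (Fin k → ℝ) →ₗ[ℝ] (V → V → ℝ)), qform (l 0) = 0 := by
    intro k l
    rw [map_zero]
    simp [qform, bform, vsum]
  by_cases hx0 : x = 0
  · have hy0 : y ≠ 0 := by
      intro hy0
      apply hz
      ext i
      refine Fin.addCases (fun j => ?_) (fun j => ?_) i
      · exact congrFun hx0 j
      · exact congrFun hy0 j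
    have := (hg y).2 hy0
    rw [hx0, h0]
    linarith
  · have h1 := (hf x).2 hx0
    by_cases hy0 : y = 0
    · rw [hy0, h0]
      linarith
    · have := (hg y).2 hy0
      linarith

/-- The part of a weight function with first vertex satisfying `p`. -/
def cutRows (p : V → Prop) [DecidablePred p] : (V → V → ℝ) →ₗ[ℝ] (V → V → ℝ) where
  toFun X v u := if p v then X v u else 0
  map_add' X Y := by
    ext v u
    by_cases h : p v <;> simp [h]
  map_smul' c X := by
    ext v u
    by_cases h : p v <;> simp [h]

theorem PosLe.glue [DecidableEq V] (hadj : ∀ u v, H.Adj u v → H₁.Adj u v ∨ H₂.Adj u v)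
    (h₁ : ∀ u v, H₁.Adj u v → u ∈ S)
    (h₂ : ∀ u v, H₂.Adj u v → u ∉ S) {a b : ℕ} (ha : PosLe H₁ a) (hb : PosLe H₂ b) :
    PosLe H (a + b) := by
  obtain ⟨f, hf⟩ := ha
  obtain ⟨g, hg⟩ := hb
  refine ⟨LinearMap.pi (Fin.addCases
    (fun i => LinearMap.proj i ∘ₗ f ∘ₗ cutRows (fun v => v ∈ S))
    (fun i => LinearMap.proj i ∘ₗ g ∘ₗ cutRows (fun v => v ∉ S))), fun X hX h0 => ?_⟩
  have hsum : X = cutRows (fun v => v ∈ S) X + cutRows (fun v => v ∉ S) X := by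
    ext v u
    by_cases h : v ∈ S <;> simp [cutRows, h]
  have hiff : ∀ u v, X u v ≠ 0 → (u ∈ S ↔ v ∈ S) := by
    intro u v huv
    have h : H.Adj u v := by
      by_contra h
      exact huv (hX.2 u v h)
    rcases hadj u v h with h | h
    · exact ⟨fun _ => h₁ _ _ h.symm, fun _ => h₁ _ _ h⟩
    · exact ⟨fun h' => absurd h' (h₂ _ _ h), fun h' => absurd h' (h₂ _ _ h.symm)⟩
  have hw₁ : IsWeight H₁ (cutRows (fun v => v ∈ S) X) := by
    refine ⟨fun u v => ?_, fun u v huv => ?_⟩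
    · by_cases h : X u v = 0
      · simp [cutRows, h, hX.1 v u]
      · simp [cutRows, hiff u v h, hX.1 v u]
    · simp only [cutRows, LinearMap.coe_mk, AddHom.coe_mk, ite_eq_right_iff]
      intro hu
      refine hX.2 u v fun h => ?_
      rcases hadj u v h with h | h
      · exact huv h
      · exact h₂ _ _ h hu
  have hw₂ : IsWeight H₂ (cutRows (fun v => v ∉ S) X) := by
    refine ⟨fun u v => ?_, fun u v huv => ?_⟩
    · by_cases h : X u v = 0
      · simp [cutRows, h, hX.1 v u]
      · simp [cutRows, hiff u v h, hX.1 v u]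
    · simp only [cutRows, LinearMap.coe_mk, AddHom.coe_mk, ite_eq_right_iff]
      intro hu
      refine hX.2 u v fun h => ?_
      rcases hadj u v h with h | h
      · exact hu (h₁ _ _ h)
      · exact huv h
  have hz₁ : f (cutRows (fun v => v ∈ S) X) = 0 := by
    ext i
    have := congrFun h0 (Fin.castAdd b i)
    simpa using this
  have hz₂ : g (cutRows (fun v => v ∉ S) X) = 0 := by
    ext i
    have := congrFun h0 (Fin.natAdd a i)
    simpa using this
  rw [hsum, qform_add, bform_eq_zero_of_disjoint h₁ h₂ hw₁ hw₂]
  linarith [hf _ hw₁ hz₁, hg _ hw₂ hz₂]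

end Glue

section Components

variable {V : Type*} [Fintype V] [DecidableEq V] {G : SimpleGraph V}

theorem connOn_component {r : V} {C : Finset V} (hC : ∀ v, v ∈ C ↔ G.Reachable r v) :
    ConnOn (restr G C) C where
  mem _ _ h := h.2.1
  eq T hTC hT hcl := by
    refine Finset.Subset.antisymm hTC fun w hw => ?_
    obtain ⟨t, ht⟩ := hT
    have htw : G.Reachable t w := ((hC t).mp (hTC ht)).symm.trans ((hC w).mp hw)
    obtain ⟨p⟩ := htw
    clear hw
    induction p with
    | nil => exact ht
    | cons h p ih =>
      exact ih (hcl _ ht _ ⟨h, hTC ht, (hC _).mpr (((hC _).mp (hTC ht)).trans h.reachable)⟩)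

theorem exists_negDim_component {r : V} {C : Finset V} (hC : ∀ v, v ∈ C ↔ G.Reachable r v) :
    ∃ k, C.card ≤ 2 * k + 2 ∧ NegDim (restr G C) k := by
  refine exists_negDim_of_rooted (G.dist r) r (by simp) _ C rfl ((hC r).mpr (SimpleGraph.Reachable.refl r)) ?_
  intro v hv hvr
  obtain ⟨p, hp⟩ := ((hC v).mp hv).exists_walk_length_eq_dist
  have hnil : ¬ p.Nil := fun h => hvr h.eq.symm
  have hadj := p.adj_penultimate hnil
  have hlen : p.dropLast.length + 1 = p.length := SimpleGraph.Walk.length_dropLast_add_one hnil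
  have h1 : G.dist r p.penultimate ≤ p.dropLast.length := SimpleGraph.dist_le p.dropLast
  have hreach : G.Reachable r p.penultimate := p.dropLast.reachable
  have h2 : G.dist r v ≤ G.dist r p.penultimate + 1 := by
    obtain ⟨q, hq⟩ := hreach.exists_walk_length_eq_dist
    have := SimpleGraph.dist_le (q.concat hadj)
    rw [SimpleGraph.Walk.length_concat] at this
    omega
  exact ⟨p.penultimate, (hC _).mpr hreach, hadj, by omega⟩

/-- The bounds hold for every union of components; they are preserved when `a` and `p` are added up. -/
theorem exists_bounds_of_closed : ∀ (n : ℕ) (S : Finset V), S.card = n →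
    (∀ u v, G.Adj u v → u ∈ S → v ∈ S) →
    ∃ a p, NegDim (restr G S) a ∧ PosLe (restr G S) p ∧ p ≤ 3 * a ∧ 2 * p ≤ a * (a + 1) := by
  classical
  intro n
  induction n using Nat.strong_induction_on with
  | _ n ih =>
  intro S hS hcl
  rcases S.eq_empty_or_nonempty with rfl | ⟨r, hr⟩
  · exact ConnOn.exists_bounds (S := ∅) ⟨fun _ _ h => h.2.1, fun T hT hne => by
      simp [Finset.subset_empty.mp hT] at hne⟩ ⟨0, by simp, NegDim.zero⟩
  have hreach : ∀ v, G.Reachable r v → v ∈ S := by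
    rintro v ⟨p⟩
    induction p with
    | nil => exact hr
    | cons h p ih' => exact ih' (hcl _ _ h hr)
  set C := Finset.univ.filter fun v => G.Reachable r v with hCdef
  have hC : ∀ v, v ∈ C ↔ G.Reachable r v := by simp [hCdef]
  have hCS : C ⊆ S := fun v hv => hreach v ((hC v).mp hv)
  have hCcl : ∀ u v, G.Adj u v → (u ∈ C ↔ v ∈ C) := by
    intro u v h
    rw [hC, hC]
    exact ⟨fun h' => h'.trans h.reachable, fun h' => h'.trans h.symm.reachable⟩
  have hrC : r ∈ C := (hC r).mpr (SimpleGraph.Reachable.refl r)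
  have hlt : (S \ C).card < n := by
    rw [← hS]
    exact Finset.card_lt_card ⟨Finset.sdiff_subset, fun h => (Finset.mem_sdiff.mp (h hr)).2 hrC⟩
  obtain ⟨a, p, ha, hp, h1, h2⟩ := (connOn_component hC).exists_bounds (exists_negDim_component hC)
  obtain ⟨b, q, hb, hq, h3, h4⟩ := ih _ hlt (S \ C) rfl (by
    intro u v h hu
    rw [Finset.mem_sdiff] at hu ⊢
    exact ⟨hcl _ _ h hu.1, fun hv => hu.2 ((hCcl u v h).mpr hv)⟩)
  have hin : ∀ u v, (restr G C).Adj u v → u ∈ C := fun u v h => h.2.1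
  have hout : ∀ u v, (restr G (S \ C)).Adj u v → u ∉ C :=
    fun u v h => (Finset.mem_sdiff.mp h.2.1).2
  refine ⟨a + b, p + q, NegDim.glue ?_ ?_ hin hout ha hb, PosLe.glue ?_ hin hout hp hq, by omega,
    by nlinarith⟩
  · exact fun u v h => ⟨h.1, hCS h.2.1, hCS h.2.2⟩
  · exact fun u v h => ⟨h.1, (Finset.mem_sdiff.mp h.2.1).1, (Finset.mem_sdiff.mp h.2.2).1⟩
  · rintro u v ⟨h, hu, hv⟩
    by_cases huC : u ∈ C
    · exact Or.inl ⟨h, huC, (hCcl u v h).mp huC⟩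
    · exact Or.inr ⟨h, Finset.mem_sdiff.mpr ⟨hu, huC⟩,
        Finset.mem_sdiff.mpr ⟨hv, fun hvC => huC ((hCcl u v h).mpr hvC)⟩⟩

end Components

theorem stmt10 {V : Type*} [Finite V] (G : SimpleGraph V) :
    G.lineGraph.posInertia ≤ 3 * G.lineGraph.negInertia ∧
    2 * G.lineGraph.posInertia ≤ G.lineGraph.negInertia * (G.lineGraph.negInertia + 1) := by
  classical
  have := Fintype.ofFinite V
  obtain ⟨a, p, ha, hp, h1, h2⟩ := exists_bounds_of_closed (G := G) _ Finset.univ rfl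
    fun _ _ _ _ => Finset.mem_univ _
  have hG : restr G Finset.univ = G := by
    ext u v
    simp [restr]
  rw [hG] at ha hp
  have hn := NegDim.le_negInertia G ha
  have hp' := PosLe.posInertia_le G hp
  refine ⟨by omega, ?_⟩
  calc 2 * G.lineGraph.posInertia ≤ 2 * p := by omega
    _ ≤ a * (a + 1) := h2
    _ ≤ G.lineGraph.negInertia * (G.lineGraph.negInertia + 1) := by gcongr
end

section
/- Let G be a finite simple graph of order n and size m with m ≥ 2n − 1. Then its line graph satisfies n⁺(L(G)) ≤ n⁻(L(G)) + 1. -/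
/-!
Let `B` be the vertex-edge incidence matrix of `G`. Then `A(L(G)) = Bᵀ B - 2 I`, so an eigenvector
`x` of `A(L(G))` with eigenvalue `μ ≠ -2` satisfies `Bᵀ (B x) = (μ + 2) x` with `μ + 2 ≠ 0`. Hence
`B` sends the eigenvectors of an eigenbasis whose eigenvalue is not `-2` to linearly independent
vectors of `ℝ^V`, so there are at most `n` of them (`card_eigenvalues_ne_le`). Therefore
`n⁺(L(G)) ≤ n`, while the eigenvalue `-2` alone gives `n⁻(L(G)) ≥ m - n ≥ n - 1`.
-/

open Matrix

/-- The vertex-edge incidence matrix, with columns indexed by the actual edges of `G`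
(unlike `SimpleGraph.incMatrix`, whose columns are indexed by all of `Sym2 V`). -/
noncomputable def SimpleGraph.edgeIncidence {V : Type*} (G : SimpleGraph V) :
    Matrix V G.edgeSet ℝ :=
  open Classical in Matrix.of fun v e => if v ∈ (e : Sym2 V) then 1 else 0

theorem SimpleGraph.edgeIncidence_gram {V : Type*} [Fintype V] (G : SimpleGraph V)
    [Fintype G.edgeSet] [DecidableEq G.edgeSet] [DecidableRel G.lineGraph.Adj] :
    G.edgeIncidenceᵀ * G.edgeIncidence = G.lineGraph.adjMatrix ℝ + (2 : ℝ) • 1 := by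
  classical
  ext e f
  -- The `(e, f)` entry counts the common endpoints of `e` and `f`.
  have hcount : (G.edgeIncidenceᵀ * G.edgeIncidence) e f =
      (((e : Sym2 V).toFinset ∩ (f : Sym2 V).toFinset).card : ℝ) := by
    simp only [Matrix.mul_apply, Matrix.transpose_apply, edgeIncidence, Matrix.of_apply,
      ← ite_and, mul_ite, mul_one, mul_zero, Finset.sum_boole]
    congr 2
    ext v
    simp [and_comm]
  rw [hcount]
  by_cases hef : e = f
  · subst hef
    simp [Sym2.card_toFinset_of_not_isDiag _ (G.not_isDiag_of_mem_edgeSet e.2)]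
  · simp only [Matrix.add_apply, Matrix.smul_apply, Matrix.one_apply_ne hef, smul_zero, add_zero,
      SimpleGraph.adjMatrix_apply, SimpleGraph.lineGraph_adj_iff_exists]
    -- Two distinct edges have at most one common endpoint.
    have hle : ((e : Sym2 V).toFinset ∩ (f : Sym2 V).toFinset).card ≤ 1 := by
      rw [Finset.card_le_one]
      intro a ha b hb
      simp only [Finset.mem_inter, Sym2.mem_toFinset] at ha hb
      by_contra hab
      exact hef (Subtype.ext (Sym2.eq_of_ne_mem hab ha.1 hb.1 ha.2 hb.2))
    split_ifs with h
    · obtain ⟨-, v, hv⟩ := h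
      have : 0 < ((e : Sym2 V).toFinset ∩ (f : Sym2 V).toFinset).card :=
        Finset.card_pos.2 ⟨v, by simpa using hv⟩
      exact_mod_cast le_antisymm hle this
    · rw [Nat.cast_eq_zero, Finset.card_eq_zero, Finset.eq_empty_iff_forall_notMem]
      intro v hv
      exact h ⟨hef, v, by simpa using hv⟩

/-- At most `n` eigenvalues differ from `-c` when the matrix is `Bᵀ B - c I` with `B` having
`n` rows. -/
theorem card_eigenvalues_ne_le {V E : Type*} [Fintype V] [Fintype E] [DecidableEq E]
    {A : Matrix E E ℝ} (hA : A.IsHermitian) (B : Matrix V E ℝ) (c : ℝ)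
    (h : Bᵀ * B = A + c • 1) :
    Nat.card {i : E // hA.eigenvalues i ≠ -c} ≤ Fintype.card V := by
  classical
  let w : {i : E // hA.eigenvalues i ≠ -c} → E → ℝ := fun i => (hA.eigenvectorBasis i).ofLp
  have hw : LinearIndependent ℝ w := by
    have h1 := hA.eigenvectorBasis.orthonormal.linearIndependent
    have h2 := h1.map' (WithLp.linearEquiv 2 ℝ (E → ℝ)).toLinearMap (LinearEquiv.ker _)
    exact h2.comp _ Subtype.val_injective
  have hne : ∀ i : {i : E // hA.eigenvalues i ≠ -c}, hA.eigenvalues i + c ≠ 0 :=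
    fun i hi => i.2 (eq_neg_of_add_eq_zero_left hi)
  have hBw : LinearIndependent ℝ (fun i => B *ᵥ w i) := by
    refine LinearIndependent.of_comp (Bᵀ.mulVecLin) ?_
    convert hw.units_smul (fun i => Units.mk0 _ (hne i)) using 1
    ext1 i
    simp only [Function.comp_apply, Matrix.mulVecLin_apply, Matrix.mulVec_mulVec, h,
      Matrix.add_mulVec, Matrix.smul_mulVec, Matrix.one_mulVec, Pi.smul_apply', Units.smul_mk0,
      add_smul]
    rw [show A *ᵥ w i = hA.eigenvalues i • w i from hA.mulVec_eigenvectorBasis i]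
  simpa using hBw.fintype_card_le_finrank

theorem stmt11 {V : Type*} [Finite V] (G : SimpleGraph V)
    (hsize : 2 * (Nat.card V : ℤ) - 1 ≤ (Nat.card G.edgeSet : ℤ)) :
    G.lineGraph.posInertia ≤ G.lineGraph.negInertia + 1 := by
  let := Fintype.ofFinite V
  let := Fintype.ofFinite G.edgeSet
  let := Classical.decEq G.edgeSet
  let : DecidableRel G.lineGraph.Adj := Classical.decRel _
  set ev := G.lineGraph.adjHerm.eigenvalues
  have hpos : G.lineGraph.posInertia = Nat.card {e // 0 < ev e} := rfl
  have hneg : G.lineGraph.negInertia = Nat.card {e // ev e < 0} := rfl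
  have hle : Nat.card {e // ev e ≠ -2} ≤ Nat.card V := by
    rw [Nat.card_eq_fintype_card (α := V)]
    exact card_eigenvalues_ne_le G.lineGraph.adjHerm G.edgeIncidence 2 G.edgeIncidence_gram
  have h1 : Nat.card {e // 0 < ev e} ≤ Nat.card {e // ev e ≠ -2} :=
    Nat.card_mono (Set.toFinite {e | ev e ≠ -2})
      (fun e (he : 0 < ev e) => show ev e ≠ -2 by
        intro h
        linarith)
  have h2 : Nat.card {e // ev e = -2} ≤ Nat.card {e // ev e < 0} :=
    Nat.card_mono (Set.toFinite {e | ev e < 0})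
      (fun e (he : ev e = -2) => show ev e < 0 by linarith)
  have h3 : Nat.card {e // ev e = -2} + Nat.card {e // ev e ≠ -2} = Nat.card G.edgeSet := by
    classical
    rw [← Nat.card_sum]
    exact Nat.card_congr (Equiv.sumCompl _)
  omega
end

section
/- Let G be a self-complementary finite simple graph. Then n⁺(G) ≤ n⁻(G) + 1. -/
/-!
Let `A` be the adjacency matrix of `G` and `φ : G ≃g Gᶜ`. Since the adjacency matrices of `G` and
`Gᶜ` add up to `J - I`, the vector `y = x ∘ φ` satisfies
`xᵀ A x + yᵀ A y = (∑ x)² - ‖x‖²` for every `x` (`quadForm_add_quadForm_comp`).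
If `n⁺(G) > n⁻(G) + 1`, a dimension count gives a nonzero `x` with `∑ x = 0`, with `x` orthogonal to
every eigenvector whose eigenvalue is not positive, and with `y` orthogonal to every eigenvector with
negative eigenvalue: these are `(n - n⁺) + n⁻ + 1 < n` linear conditions. By the diagonalization
of the quadratic form of `A` (`quadForm_eq_sum_eigenvalues`), both terms on the left are then
nonnegative, while the right-hand side is `-‖x‖² < 0`.
-/

open Matrix

/-- The quadratic form of a real symmetric matrix, in the coordinates of its eigenvector basis. -/
theorem quadForm_eq_sum_eigenvalues {V : Type*} [Fintype V] [DecidableEq V] {A : Matrix V V ℝ}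
    (hA : A.IsHermitian) (x : V → ℝ) :
    x ⬝ᵥ (A *ᵥ x) =
      ∑ i, hA.eigenvalues i * (((hA.eigenvectorUnitary : Matrix V V ℝ)ᵀ *ᵥ x) i) ^ 2 := by
  conv_lhs => rw [hA.spectral_theorem, Unitary.conjStarAlgAut_apply]
  rw [← mulVec_mulVec, ← mulVec_mulVec, dotProduct_mulVec, ← mulVec_transpose, star_eq_conjTranspose,
    conjTranspose_eq_transpose_of_trivial, dotProduct]
  refine Finset.sum_congr rfl fun i _ => ?_
  rw [mulVec_diagonal]
  simp only [Function.comp_apply, RCLike.ofReal_real_eq_id, id_eq]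
  ring

theorem quadForm_add_quadForm_comp {V : Type*} [Fintype V] [DecidableEq V] (G : SimpleGraph V)
    [DecidableRel G.Adj] (φ : G ≃g Gᶜ) (x : V → ℝ) :
    x ⬝ᵥ (G.adjMatrix ℝ *ᵥ x) + (x ∘ φ) ⬝ᵥ (G.adjMatrix ℝ *ᵥ (x ∘ φ)) =
      (∑ v, x v) ^ 2 - x ⬝ᵥ x := by
  have hy : (x ∘ φ) ⬝ᵥ (G.adjMatrix ℝ *ᵥ (x ∘ φ)) = x ⬝ᵥ (Gᶜ.adjMatrix ℝ *ᵥ x) := by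
    simp only [dotProduct, mulVec]
    refine Fintype.sum_equiv φ.toEquiv _ _ fun u => ?_
    congr 1
    refine Fintype.sum_equiv φ.toEquiv _ _ fun v => ?_
    have h : Gᶜ.Adj (φ u) (φ v) ↔ G.Adj u v := φ.map_rel_iff
    simp only [SimpleGraph.adjMatrix_apply, Function.comp_apply]
    congr 1
    exact if_congr h.symm rfl rfl
  have hJ : (1 : Matrix V V ℝ) + G.adjMatrix ℝ + Gᶜ.adjMatrix ℝ = Matrix.of fun _ _ => 1 := by
    ext u v
    by_cases huv : u = v
    · simp [huv]
    · by_cases ha : G.Adj u v <;> simp [huv, ha, one_apply]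
  have h := congrArg (fun M : Matrix V V ℝ => x ⬝ᵥ (M *ᵥ x)) hJ
  simp only [add_mulVec, dotProduct_add, one_mulVec] at h
  have h1 : x ⬝ᵥ ((Matrix.of fun _ _ => (1 : ℝ)) *ᵥ x) = (∑ v, x v) ^ 2 := by
    simp [dotProduct, mulVec, sq, Finset.sum_mul]
  rw [hy]
  linarith

theorem card_pos_eigenvalues_le {V : Type*} [Fintype V] [DecidableEq V] (G : SimpleGraph V)
    [DecidableRel G.Adj] (φ : G ≃g Gᶜ) :
    Nat.card {v : V // 0 < G.adjHerm.eigenvalues v} ≤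
      Nat.card {v : V // G.adjHerm.eigenvalues v < 0} + 1 := by
  classical
  by_contra! hlt
  set lam := G.adjHerm.eigenvalues with hlam
  set W : Matrix V V ℝ := (G.adjHerm.eigenvectorUnitary : Matrix V V ℝ)ᵀ with hW
  -- The linear conditions on `x`, collected into one linear map.
  let L : (V → ℝ) →ₗ[ℝ] ({v : V // ¬ 0 < lam v} → ℝ) × ({v : V // lam v < 0} → ℝ) × ℝ :=
    ((LinearMap.funLeft ℝ ℝ Subtype.val).comp W.mulVecLin).prod
      ((((LinearMap.funLeft ℝ ℝ Subtype.val).comp W.mulVecLin).comp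
        (LinearMap.funLeft ℝ ℝ φ)).prod (∑ v, LinearMap.proj v))
  have hdim : Module.finrank ℝ (({v : V // ¬ 0 < lam v} → ℝ) × ({v : V // lam v < 0} → ℝ) × ℝ) <
      Module.finrank ℝ (V → ℝ) := by
    have := Fintype.card_subtype_compl (fun v => 0 < lam v)
    have := Fintype.card_subtype_le (fun v => 0 < lam v)
    simp only [Nat.card_eq_fintype_card] at hlt
    simp only [Module.finrank_prod, Module.finrank_fintype_fun_eq_card, Module.finrank_self]
    omega
  obtain ⟨x, hx, hx0⟩ := (Submodule.ne_bot_iff _).1 (L.ker_ne_bot_of_finrank_lt hdim)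
  have hL : L x = 0 := hx
  have h1 : ∀ v, ¬ 0 < lam v → (W *ᵥ x) v = 0 := fun v hv =>
    congrFun (congrArg Prod.fst hL) ⟨v, hv⟩
  have h2 : ∀ v, lam v < 0 → (W *ᵥ (x ∘ φ)) v = 0 := fun v hv =>
    congrFun (congrArg (fun z => z.2.1) hL) ⟨v, hv⟩
  have h3 : ∑ v, x v = 0 := by
    simpa [L] using congrArg (fun z => z.2.2) hL
  have key := quadForm_add_quadForm_comp G φ x
  rw [quadForm_eq_sum_eigenvalues G.adjHerm, quadForm_eq_sum_eigenvalues G.adjHerm, h3] at key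
  have hp1 : 0 ≤ ∑ i, lam i * ((W *ᵥ x) i) ^ 2 := Finset.sum_nonneg fun i _ => by
    by_cases hi : 0 < lam i
    · positivity
    · simp [h1 i hi]
  have hp2 : 0 ≤ ∑ i, lam i * ((W *ᵥ (x ∘ φ)) i) ^ 2 := Finset.sum_nonneg fun i _ => by
    by_cases hi : lam i < 0
    · simp [h2 i hi]
    · exact mul_nonneg (not_lt.1 hi) (sq_nonneg _)
  have hpos : 0 < x ⬝ᵥ x :=
    lt_of_le_of_ne (Finset.sum_nonneg fun i _ => mul_self_nonneg _)
      fun h => hx0 (dotProduct_self_eq_zero.1 h.symm)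
  linarith

theorem stmt12 {V : Type*} [Finite V] (G : SimpleGraph V) (hsc : Nonempty (G ≃g Gᶜ)) :
    G.posInertia ≤ G.negInertia + 1 := by
  obtain ⟨φ⟩ := hsc
  let := Fintype.ofFinite V
  let := Classical.decEq V
  let : DecidableRel G.Adj := Classical.decRel _
  exact card_pos_eigenvalues_le G φ
end

section
/- Every self-complementary finite simple graph G satisfies 2·n⁺(G) ≤ n⁻(G)·(n⁻(G) + 1). -/
/-!
Write `A` for the adjacency matrix of `G`, `n` for its order, `p = n⁺(G)` and `q = n⁻(G)`. The
adjacency matrix of `Gᶜ` is `J - 1 - A` with `J` the all-ones matrix, and it is a permutation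
conjugate `P A Pᵀ` of `A`. A vector `x` such that `x` and `Pᵀ x` are both orthogonal to the
negative eigenvectors of `A`, and that is orthogonal to the all-ones vector, satisfies
`0 ≤ xᵀ A x` and `0 ≤ xᵀ P A Pᵀ x = -‖x‖² - xᵀ A x`, hence `x = 0`. These are `2 q + 1` linear
conditions, so `n ≤ 2 q + 1` (`card_le_two_mul_neg_add_one`). As `p + q ≤ n`, this gives
`p ≤ q + 1`, which suffices when `q ≥ 2`.

If `q = 0`, the eigenvalues are nonnegative and sum to `tr A = 0`, so `p = 0`. If `q = 1`, the claim
fails only for `p = 2` and `n = 3`; but a self-complementary graph has `n (n - 1) / 4` edges, so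
`4 ∣ n (n - 1)`, which excludes `n = 3` (`four_dvd_of_iso_compl`).
-/

open Matrix

/-- The quadratic form of a real symmetric matrix is nonnegative at every vector orthogonal to the
eigenvectors with negative eigenvalue. -/
theorem quadForm_nonneg_of_orthogonal_neg {V : Type*} [Fintype V] [DecidableEq V]
    {A : Matrix V V ℝ} (hA : A.IsHermitian) (x : V → ℝ)
    (hx : ∀ i, hA.eigenvalues i < 0 → ((hA.eigenvectorUnitary : Matrix V V ℝ)ᵀ *ᵥ x) i = 0) :
    0 ≤ x ⬝ᵥ A *ᵥ x := by
  set U : Matrix V V ℝ := (hA.eigenvectorUnitary : Matrix V V ℝ) with hU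
  have hspec : A = U * diagonal hA.eigenvalues * Uᵀ := by
    have h := hA.spectral_theorem
    rw [Unitary.conjStarAlgAut_apply] at h
    simpa [star_eq_conjTranspose, conjTranspose_eq_transpose_of_trivial] using h
  have hform : x ⬝ᵥ A *ᵥ x = ∑ i, hA.eigenvalues i * (Uᵀ *ᵥ x) i ^ 2 := by
    conv_lhs => rw [hspec]
    rw [← mulVec_mulVec, ← mulVec_mulVec, dotProduct_mulVec, ← mulVec_transpose]
    simp only [dotProduct, mulVec_diagonal]
    exact Finset.sum_congr rfl fun i _ => by ring
  rw [hform]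
  refine Finset.sum_nonneg fun i _ => ?_
  rcases lt_or_ge (hA.eigenvalues i) 0 with h | h
  · simp [hx i h]
  · positivity

/-- The quadratic forms of `A(G)` and `A(Gᶜ) = J - 1 - A(G)` on the orthogonal complement of the
all-ones vector, the latter written as a reindexed quadratic form of `A(G)`. -/
theorem quadForm_comp_iso_compl {V : Type*} [Fintype V] [DecidableEq V] (G : SimpleGraph V)
    [DecidableRel G.Adj] (e : G ≃g Gᶜ) (x : V → ℝ) (hx : ∑ i, x i = 0) :
    (x ∘ e) ⬝ᵥ G.adjMatrix ℝ *ᵥ (x ∘ e) = - (x ⬝ᵥ x) - x ⬝ᵥ G.adjMatrix ℝ *ᵥ x := by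
  have h1 : (x ∘ e) ⬝ᵥ G.adjMatrix ℝ *ᵥ (x ∘ e) = x ⬝ᵥ Gᶜ.adjMatrix ℝ *ᵥ x := by
    simp only [dotProduct, mulVec, Function.comp_apply]
    rw [← Equiv.sum_comp e.toEquiv (fun i => x i * ∑ j, Gᶜ.adjMatrix ℝ i j * x j)]
    refine Finset.sum_congr rfl fun i _ => ?_
    rw [← Equiv.sum_comp e.toEquiv (fun j => Gᶜ.adjMatrix ℝ (e.toEquiv i) j * x j)]
    have hadj : ∀ j, Gᶜ.adjMatrix ℝ (e i) (e j) = G.adjMatrix ℝ i j := fun j => by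
      simp only [SimpleGraph.adjMatrix_apply, e.map_adj_iff]
    exact congrArg (x (e i) * ·) (Finset.sum_congr rfl fun j _ => by
      exact congrArg (· * x (e j)) (hadj j).symm)
  have h2 : Gᶜ.adjMatrix ℝ = Matrix.of (fun _ _ => (1 : ℝ)) - 1 - G.adjMatrix ℝ := by
    ext i j
    by_cases hij : i = j
    · subst hij; simp
    · by_cases h : G.Adj i j <;> simp [SimpleGraph.adjMatrix_apply, hij, h]
  have h3 : (Matrix.of (fun _ _ : V => (1 : ℝ))) *ᵥ x = 0 := by
    ext i; simp [mulVec, dotProduct, hx]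
  rw [h1, h2, sub_mulVec, sub_mulVec, h3, one_mulVec]
  simp [dotProduct_sub]

/-- A self-complementary graph of order `n` with `q` negative eigenvalues has `n ≤ 2 q + 1`. -/
theorem card_le_two_mul_neg_add_one {V : Type*} [Fintype V] [DecidableEq V] (G : SimpleGraph V)
    [DecidableRel G.Adj] (e : G ≃g Gᶜ) :
    Fintype.card V ≤ 2 * Fintype.card {v : V // G.adjHerm.eigenvalues v < 0} + 1 := by
  by_contra! hlt
  let N := {v : V // G.adjHerm.eigenvalues v < 0}
  let U : Matrix V V ℝ := (G.adjHerm.eigenvectorUnitary : Matrix V V ℝ)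
  -- Coordinates of a vector along the negative eigenvectors.
  let C : (V → ℝ) →ₗ[ℝ] (N → ℝ) :=
    (LinearMap.funLeft ℝ ℝ (Subtype.val : N → V)).comp (Matrix.mulVecLin Uᵀ)
  let S : (V → ℝ) →ₗ[ℝ] ℝ := ∑ i, LinearMap.proj i
  let T : (V → ℝ) →ₗ[ℝ] (N → ℝ) × (N → ℝ) × ℝ :=
    C.prod ((C.comp (LinearMap.funLeft ℝ ℝ e)).prod S)
  have hker : LinearMap.ker T ≠ ⊥ := by
    apply LinearMap.ker_ne_bot_of_finrank_lt
    simp only [Module.finrank_prod, Module.finrank_fintype_fun_eq_card, Module.finrank_self]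
    change 2 * Fintype.card N + 1 < Fintype.card V at hlt
    lia
  obtain ⟨x, hxT, hx0⟩ := (Submodule.ne_bot_iff _).1 hker
  have hT : C x = 0 ∧ C (x ∘ e) = 0 ∧ S x = 0 := by
    have h : C x = 0 ∧ C (LinearMap.funLeft ℝ ℝ e x) = 0 ∧ S x = 0 := by
      simpa [T, Prod.ext_iff] using hxT
    exact h
  obtain ⟨hC, hCe, hS⟩ := hT
  have hnn : 0 ≤ x ⬝ᵥ G.adjMatrix ℝ *ᵥ x :=
    quadForm_nonneg_of_orthogonal_neg G.adjHerm x fun i hi => congrFun hC ⟨i, hi⟩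
  have hnn' : 0 ≤ (x ∘ e) ⬝ᵥ G.adjMatrix ℝ *ᵥ (x ∘ e) :=
    quadForm_nonneg_of_orthogonal_neg G.adjHerm (x ∘ e) fun i hi => congrFun hCe ⟨i, hi⟩
  rw [quadForm_comp_iso_compl G e x (by simpa [S] using hS)] at hnn'
  have hpos : 0 < x ⬝ᵥ x :=
    lt_of_le_of_ne (Finset.sum_nonneg fun i _ => mul_self_nonneg (x i))
      fun h => hx0 (dotProduct_self_eq_zero.1 h.symm)
  linarith

theorem four_dvd_of_iso_compl {V : Type*} [Fintype V] [DecidableEq V] (G : SimpleGraph V)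
    [DecidableRel G.Adj] (e : G ≃g Gᶜ) :
    4 ∣ Fintype.card V * (Fintype.card V - 1) := by
  have h1 := G.sum_degrees_eq_twice_card_edges
  have h2 := Gᶜ.sum_degrees_eq_twice_card_edges
  have h3 := e.card_edgeFinset_eq
  have h4 : ∑ v, (G.degree v + Gᶜ.degree v) = Fintype.card V * (Fintype.card V - 1) := by
    rw [Finset.sum_congr rfl fun v _ => show _ = Fintype.card V - 1 from ?_]
    · simp
    · have := G.degree_compl v
      have := G.degree_lt_card_verts v
      lia
  rw [Finset.sum_add_distrib] at h4
  exact ⟨G.edgeFinset.card, by lia⟩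

/-- The inequality for arbitrary decidability and enumeration instances. -/
theorem two_mul_card_pos_le {V : Type*} [Fintype V] [DecidableEq V] (G : SimpleGraph V)
    [DecidableRel G.Adj] (e : G ≃g Gᶜ) :
    2 * Nat.card {v : V // 0 < G.adjHerm.eigenvalues v} ≤
      Nat.card {v : V // G.adjHerm.eigenvalues v < 0} *
        (Nat.card {v : V // G.adjHerm.eigenvalues v < 0} + 1) := by
  rw [Nat.card_eq_fintype_card, Nat.card_eq_fintype_card]
  have hle := card_le_two_mul_neg_add_one G e
  have h4 := four_dvd_of_iso_compl G e
  have hsum : Fintype.card {v : V // 0 < G.adjHerm.eigenvalues v} +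
      Fintype.card {v : V // G.adjHerm.eigenvalues v < 0} ≤ Fintype.card V := by
    rw [← Fintype.card_subtype_or_disjoint]
    · exact Fintype.card_subtype_le _
    · rw [Pi.disjoint_iff]
      intro v
      simpa [Prop.disjoint_iff] using fun h => le_of_lt h
  have hzero : Fintype.card {v : V // G.adjHerm.eigenvalues v < 0} = 0 →
      Fintype.card {v : V // 0 < G.adjHerm.eigenvalues v} = 0 := by
    intro h
    have hnn : ∀ v, 0 ≤ G.adjHerm.eigenvalues v := fun v =>
      not_lt.1 fun hv => (Fintype.card_eq_zero_iff.1 h).false ⟨v, hv⟩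
    have htr : ∑ v, G.adjHerm.eigenvalues v = 0 := by
      have := G.adjHerm.trace_eq_sum_eigenvalues
      rw [SimpleGraph.trace_adjMatrix] at this
      simpa using this.symm
    rw [Fintype.card_eq_zero_iff]
    exact ⟨fun ⟨v, hv⟩ => hv.ne'
      ((Finset.sum_eq_zero_iff_of_nonneg fun v _ => hnn v).1 htr v (Finset.mem_univ v))⟩
  generalize Fintype.card {v : V // 0 < G.adjHerm.eigenvalues v} = p at *
  generalize Fintype.card {v : V // G.adjHerm.eigenvalues v < 0} = q at *
  generalize Fintype.card V = n at *
  obtain rfl | rfl | hq : q = 0 ∨ q = 1 ∨ 2 ≤ q := by lia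
  · simp [hzero rfl]
  · have hp : p ≠ 2 := by
      rintro rfl
      obtain rfl : n = 3 := by lia
      norm_num at h4
    lia
  · nlinarith

theorem stmt13 {V : Type*} [Finite V] (G : SimpleGraph V) (hsc : Nonempty (G ≃g Gᶜ)) :
    2 * G.posInertia ≤ G.negInertia * (G.negInertia + 1) := by
  obtain ⟨e⟩ := hsc
  let := Fintype.ofFinite V
  let := Classical.decEq V
  let : DecidableRel G.Adj := Classical.decRel _
  exact two_mul_card_pos_le G e
end

section
/- Let G be a finite simple graph and let u, v be distinct vertices of G with the same closed neighbourhood, N[u] = N[v] (in particular u and v are adjacent). Then n⁻(G) ≥ n⁻(G − {u, v}) + 1, where G − {u, v} is the induced subgraph obtained by deleting u and v. -/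
/-!
By the min-max characterisation of inertia, the number of negative eigenvalues of a real symmetric
matrix `A` is the largest dimension of a space on which `x ↦ xᵀ A x` is negative definite
(`exists_negDefOn`, `card_le_of_negDefOn`; both follow from orthogonal diagonalisation).

Let `d = e_u - e_v`. Since `u` and `v` have the same closed neighbourhood, `A d = -d`. Take a space
of dimension `n⁻(G - {u, v})` on which the form of `G - {u, v}` is negative definite, and extend its
vectors by zero to `V`. They are orthogonal to `d`, hence also `A`-orthogonal to `d`, and
`dᵀ A d = -2`, so adjoining `d` gives a negative definite space for `A` of one dimension more.
-/

open Matrix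

/-- The quadratic form of a real symmetric matrix, in the coordinates `Uᵀ x` with respect to its
orthonormal eigenbasis, is the diagonal form with the eigenvalues as coefficients. -/
lemma exists_diagonalization {n : Type*} [Fintype n] [DecidableEq n] {A : Matrix n n ℝ}
    (hA : A.IsHermitian) : ∃ U : Matrix n n ℝ, Uᵀ * U = 1 ∧
      ∀ x : n → ℝ, x ⬝ᵥ A *ᵥ x = ∑ i, hA.eigenvalues i * (Uᵀ *ᵥ x) i ^ 2 := by
  have h1 := Unitary.coe_star_mul_self hA.eigenvectorUnitary
  have hs := hA.spectral_theorem
  rw [Unitary.conjStarAlgAut_apply] at hs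
  generalize hA.eigenvectorUnitary = W at h1 hs
  obtain ⟨U, hU⟩ := W
  simp only [star_eq_conjTranspose, conjTranspose_eq_transpose_of_trivial] at h1 hs
  refine ⟨U, h1, fun x => ?_⟩
  generalize hA.eigenvalues = l at hs
  rw [hs, ← mulVec_mulVec, ← mulVec_mulVec, dotProduct_mulVec, ← mulVec_transpose]
  simp only [dotProduct, mulVec_diagonal]
  refine Finset.sum_congr rfl fun i _ => ?_
  simp
  ring

/-- A subspace (parametrised by `L`) on which the form of `A` is negative definite has dimension
at most the number of negative eigenvalues: projecting it to the span of the eigenvectors with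
negative eigenvalue is injective. -/
lemma card_le_of_negDefOn {n ι : Type*} [Fintype n] [DecidableEq n] [Finite ι] {A : Matrix n n ℝ}
    (hA : A.IsHermitian) (L : (ι → ℝ) →ₗ[ℝ] (n → ℝ))
    (hL : ∀ c, c ≠ 0 → L c ⬝ᵥ A *ᵥ L c < 0) :
    Nat.card ι ≤ Nat.card {i // hA.eigenvalues i < 0} := by
  classical
  have := Fintype.ofFinite ι
  obtain ⟨U, -, hq⟩ := exists_diagonalization hA
  let M : (ι → ℝ) →ₗ[ℝ] ({i // hA.eigenvalues i < 0} → ℝ) :=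
    (LinearMap.funLeft ℝ ℝ Subtype.val).comp ((Uᵀ).mulVecLin.comp L)
  have hM : Function.Injective M := by
    rw [injective_iff_map_eq_zero]
    intro c hc
    by_contra hne
    have hlt := hL c hne
    rw [hq] at hlt
    refine absurd hlt (not_lt.mpr (Finset.sum_nonneg fun i _ => ?_))
    by_cases hi : hA.eigenvalues i < 0
    · have : (Uᵀ *ᵥ L c) i = 0 := congrFun hc ⟨i, hi⟩
      simp [this]
    · exact mul_nonneg (not_lt.mp hi) (sq_nonneg _)
  simpa [Nat.card_eq_fintype_card] using LinearMap.finrank_le_finrank_of_injective hM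

/-- The form of `A` is negative definite on the span of the eigenvectors with negative
eigenvalue. -/
lemma exists_negDefOn {n : Type*} [Fintype n] [DecidableEq n] {A : Matrix n n ℝ}
    (hA : A.IsHermitian) : ∃ L : ({i // hA.eigenvalues i < 0} → ℝ) →ₗ[ℝ] (n → ℝ),
      ∀ c, c ≠ 0 → L c ⬝ᵥ A *ᵥ L c < 0 := by
  classical
  obtain ⟨U, hU, hq⟩ := exists_diagonalization hA
  -- `P` extends a vector on the negative indices by zero.
  let P : Matrix n {i // hA.eigenvalues i < 0} ℝ := (1 : Matrix n n ℝ).submatrix id Subtype.val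
  have hP : ∀ c (i : {i // hA.eigenvalues i < 0}), (P *ᵥ c) i = c i := by
    intro c i
    simp [P, mulVec, dotProduct, one_apply, Subtype.val_inj]
  have hP0 : ∀ c i, ¬ hA.eigenvalues i < 0 → (P *ᵥ c) i = 0 := by
    intro c i hi
    refine Finset.sum_eq_zero fun j _ => ?_
    have : i ≠ j := fun h => hi (h ▸ j.2)
    simp [P, this]
  refine ⟨(U * P).mulVecLin, fun c hc => ?_⟩
  rw [hq, mulVecLin_apply, mulVec_mulVec, ← Matrix.mul_assoc, hU, Matrix.one_mul]
  obtain ⟨j, hj⟩ := Function.ne_iff.mp hc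
  refine Finset.sum_neg' (fun i _ => ?_) ⟨j.1, Finset.mem_univ _, ?_⟩
  · by_cases hi : hA.eigenvalues i < 0
    · exact mul_nonpos_of_nonpos_of_nonneg hi.le (sq_nonneg _)
    · simp [hP0 c i hi]
  · rw [hP]
    exact mul_neg_of_neg_of_pos j.2 (sq_pos_of_ne_zero hj)

/-- `negInertia` does not depend on the choice of instances made in its definition. -/
lemma negInertia_eq {V : Type*} [Fintype V] [DecidableEq V] (G : SimpleGraph V)
    [DecidableRel G.Adj] : G.negInertia = Nat.card {v : V // G.adjHerm.eigenvalues v < 0} := by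
  unfold SimpleGraph.negInertia
  congr!

theorem stmt15 {V : Type*} [Finite V] (G : SimpleGraph V) (u v : V) (huv : u ≠ v)
    (hN : insert u (G.neighborSet u) = insert v (G.neighborSet v)) :
    (G.induce (({u, v} : Set V)ᶜ)).negInertia + 1 ≤ G.negInertia := by
  classical
  have := Fintype.ofFinite V
  rw [negInertia_eq, negInertia_eq]
  obtain ⟨L, hL⟩ := exists_negDefOn (G.induce (({u, v} : Set V)ᶜ)).adjHerm
  have hadj : ∀ w, w ≠ u → w ≠ v → (G.Adj w u ↔ G.Adj w v) := by
    intro w hu hv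
    have := Set.ext_iff.mp hN w
    simpa [hu, hv, G.adj_comm] using this
  have huv' : G.Adj u v := by
    have := Set.ext_iff.mp hN v
    simpa [huv.symm] using this
  let A := G.adjMatrix ℝ
  let d : V → ℝ := Pi.single u 1 - Pi.single v 1
  have hAd : A *ᵥ d = -d := by
    ext w
    by_cases hu : w = u
    · subst hu
      simp [A, d, huv, huv']
    by_cases hv : w = v
    · subst hv
      simp [A, d, hu, huv'.symm]
    · simp [A, d, hu, hv, hadj w hu hv]
  have hdA : d ᵥ* A = -d := by
    rw [← mulVec_transpose, show Aᵀ = A from G.isSymm_adjMatrix, hAd]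
  have hdd : d ⬝ᵥ d = 2 := by
    simp [d, huv, huv.symm]
    norm_num
  -- `P` extends a vector on `V \ {u, v}` by zero.
  let P : Matrix V (({u, v} : Set V)ᶜ : Set V) ℝ := (1 : Matrix V V ℝ).submatrix id Subtype.val
  have hPAP : Pᵀ * A * P = (G.induce (({u, v} : Set V)ᶜ)).adjMatrix ℝ := by
    ext i j
    simp [P, A, Matrix.mul_apply, one_apply]
    rw [Finset.sum_eq_single (i : V)] <;> simp +contextual [eq_comm]
  have hdP : d ᵥ* P = 0 := by
    ext i
    have hi := i.2
    simp only [Set.mem_compl_iff, Set.mem_insert_iff, Set.mem_singleton_iff, not_or] at hi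
    simp [d, P, sub_vecMul, Ne.symm hi.1, Ne.symm hi.2, one_apply]
  have hPd : ∀ y, (P *ᵥ y) ⬝ᵥ d = 0 := by
    intro y
    rw [dotProduct_comm, dotProduct_mulVec, hdP, zero_dotProduct]
  have hPq : ∀ y, (P *ᵥ y) ⬝ᵥ A *ᵥ (P *ᵥ y) =
      y ⬝ᵥ (G.induce (({u, v} : Set V)ᶜ)).adjMatrix ℝ *ᵥ y := by
    intro y
    rw [← hPAP, ← mulVec_mulVec, ← mulVec_mulVec, dotProduct_mulVec y, vecMul_transpose]
  have hq : ∀ y (t : ℝ), (P *ᵥ y + t • d) ⬝ᵥ A *ᵥ (P *ᵥ y + t • d) =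
      y ⬝ᵥ (G.induce (({u, v} : Set V)ᶜ)).adjMatrix ℝ *ᵥ y - 2 * t ^ 2 := by
    intro y t
    have h1 : d ⬝ᵥ A *ᵥ (P *ᵥ y) = 0 := by
      rw [dotProduct_mulVec, hdA, neg_dotProduct, dotProduct_comm, hPd, neg_zero]
    rw [← hPq]
    simp only [mulVec_add, mulVec_smul, add_dotProduct, dotProduct_add, smul_dotProduct,
      dotProduct_smul, hAd, dotProduct_neg, hPd, hdd, h1, smul_eq_mul]
    ring
  rw [← Finite.card_option]
  -- The `none` coordinate is the coefficient of `d`.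
  let K : (Option {i // (G.induce (({u, v} : Set V)ᶜ)).adjHerm.eigenvalues i < 0} → ℝ) →ₗ[ℝ]
      (V → ℝ) := P.mulVecLin.comp (L.comp (LinearMap.funLeft ℝ ℝ some)) +
        (LinearMap.proj none).smulRight d
  refine card_le_of_negDefOn G.adjHerm K fun c hc => ?_
  have hK : K c = P *ᵥ L (c ∘ some) + c none • d := rfl
  rw [hK, hq]
  by_cases h0 : c ∘ some = 0
  · have hn : c none ≠ 0 := by
      intro hn
      refine hc (funext fun o => ?_)
      cases o with
      | none => exact hn
      | some i => exact congrFun h0 i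
    have := sq_pos_of_ne_zero hn
    rw [h0, map_zero, zero_dotProduct]
    linarith
  · have := hL _ h0
    have := sq_nonneg (c none)
    linarith
end

section
/- Let G and H be connected finite simple graphs, each of order at least 2, and suppose both satisfy 2·n⁺ ≤ n⁻·(n⁻ + 1). Then the join G ∨ H satisfies 2·n⁺(G ∨ H) ≤ n⁻(G ∨ H)·(n⁻(G ∨ H) + 1). -/
/-!
Write `a`, `b`, `p`, `q` for `n⁻(G)`, `n⁻(H)`, `n⁺(G)`, `n⁺(H)`. The quadratic form of the join at
`(x, y)` is the sum of the forms of `G` at `x` and of `H` at `y`, plus `2 (∑ x) (∑ y)`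
(`adjForm_joinGraph`). On the hyperplane `∑ x = 0` the mixed term vanishes, hence
`n⁺(G ∨ H) ≤ p + q + 1` (`posInertia_joinGraph_le`) and `n⁻(G ∨ H) ≥ a + b - 1`
(`le_negInertia_joinGraph`).

If `n⁻(G ∨ H) ≥ a + b`, the inequality follows from `a, b ≥ 1`. Otherwise neither graph has a
negative definite subspace of maximal dimension consisting of sum-zero vectors
(`finrank_add_le_negInertia_joinGraph`), and this forces `a, b ≥ 3` (`three_le_negInertia`), for
which `a + b - 1` negative eigenvalues suffice. To see that `a ≥ 3`: an edge `uv` gives the negative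
sum-zero vector `e_u - e_v`, which excludes `a = 1`. If `a = 2`, no two edges span a negative
definite plane in this way; then `G` has no triangle and any two disjoint edges lie in a 4-cycle, so
that `G`, being connected, is complete bipartite, and `a ≤ 1` (`negInertia_le_one_of_no_plane`).
-/

open Matrix

/-- The join `G ∨ H` of two simple graphs: the disjoint union of `G` and `H` together with
all edges between a vertex of `G` and a vertex of `H`. -/
def SimpleGraph.joinGraph {V W : Type*} (G : SimpleGraph V) (H : SimpleGraph W) :
    SimpleGraph (V ⊕ W) :=
  (G ⊕g H) ⊔ completeBipartiteGraph V W

/-! ### Inertia and definite subspaces -/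

open Classical in
/-- The quadratic form `x ↦ xᵀ A x` of the adjacency matrix `A` of `G`. -/
noncomputable def adjForm {V : Type*} [Fintype V] (G : SimpleGraph V) (x : V → ℝ) : ℝ :=
  x ⬝ᵥ G.adjMatrix ℝ *ᵥ x

/-- The spectral theorem in the form used below: in coordinates `φ`, the form `adjForm G` is a sum of
squares weighted by the eigenvalues `μ`. The two instances on `V` are independent so that
`Fintype V` can be replaced by the one in the definitions of the inertia. -/
theorem exists_diagonalization_s16 {V : Type*} [inst : Fintype V] [Finite V] (G : SimpleGraph V) :
    ∃ (μ : V → ℝ) (φ ψ : (V → ℝ) →ₗ[ℝ] (V → ℝ)), (∀ y, φ (ψ y) = y) ∧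
      (∀ x, adjForm G x = ∑ i, μ i * φ x i ^ 2) ∧
      G.posInertia = Nat.card {i // 0 < μ i} ∧ G.negInertia = Nat.card {i // μ i < 0} := by
  classical
  obtain rfl : inst = Fintype.ofFinite V := Subsingleton.elim _ _
  let _ := Fintype.ofFinite V
  let _ := Classical.decEq V
  let _ : DecidableRel G.Adj := Classical.decRel _
  set U : Matrix V V ℝ := (G.adjHerm.eigenvectorUnitary : Matrix V V ℝ) with hU
  have hUU : Uᵀ * U = 1 := by
    have := Unitary.coe_star_mul_self G.adjHerm.eigenvectorUnitary
    rwa [star_eq_conjTranspose, conjTranspose_eq_transpose_of_trivial] at this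
  have hA : G.adjMatrix ℝ = U * diagonal G.adjHerm.eigenvalues * Uᵀ := by
    have := G.adjHerm.spectral_theorem
    rw [Unitary.conjStarAlgAut_apply, star_eq_conjTranspose,
      conjTranspose_eq_transpose_of_trivial] at this
    exact this
  refine ⟨G.adjHerm.eigenvalues, Uᵀ.mulVecLin, U.mulVecLin, fun y => ?_, fun x => ?_, rfl, rfl⟩
  · rw [mulVecLin_apply, mulVecLin_apply, mulVec_mulVec, hUU, one_mulVec]
  · have h : adjForm G x = x ⬝ᵥ G.adjMatrix ℝ *ᵥ x := by
      unfold adjForm; congr!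
    generalize G.adjHerm.eigenvalues = μ at hA ⊢
    rw [h, hA, ← mulVec_mulVec, ← mulVec_mulVec, dotProduct_mulVec, ← mulVec_transpose]
    simp only [dotProduct, mulVec_diagonal, mulVecLin_apply]
    exact Finset.sum_congr rfl fun i _ => by ring

theorem exists_ne_zero_of_finrank_lt {E F : Type*} [AddCommGroup E] [Module ℝ E]
    [FiniteDimensional ℝ E] [AddCommGroup F] [Module ℝ F] [FiniteDimensional ℝ F]
    (f : E →ₗ[ℝ] F) (h : Module.finrank ℝ F < Module.finrank ℝ E) : ∃ c, c ≠ 0 ∧ f c = 0 := by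
  obtain ⟨c, hc, h0⟩ := Submodule.exists_mem_ne_zero_of_ne_bot (f.ker_ne_bot_of_finrank_lt h)
  exact ⟨c, h0, hc⟩

/-- A negative definite subspace has dimension at most `n⁻`. Here and below subspaces are given as
images of linear maps; definiteness of the pulled-back form makes such a map injective. -/
theorem finrank_le_negInertia {V E : Type*} [Fintype V] [AddCommGroup E] [Module ℝ E]
    [FiniteDimensional ℝ E] (G : SimpleGraph V) (f : E →ₗ[ℝ] V → ℝ)
    (hf : ∀ c, c ≠ 0 → adjForm G (f c) < 0) : Module.finrank ℝ E ≤ G.negInertia := by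
  classical
  obtain ⟨μ, φ, ψ, -, hQ, -, hn⟩ := exists_diagonalization_s16 G
  by_contra! hlt
  obtain ⟨c, hc, h0⟩ := exists_ne_zero_of_finrank_lt
    ((LinearMap.funLeft ℝ ℝ (Subtype.val : {i // μ i < 0} → V)) ∘ₗ φ ∘ₗ f)
    (by simpa [hn] using hlt)
  refine (hf c hc).not_ge ?_
  rw [hQ]
  refine Finset.sum_nonneg fun i _ => ?_
  by_cases hi : μ i < 0
  · have : φ (f c) i = 0 := congrFun h0 ⟨i, hi⟩
    simp [this]
  · exact mul_nonneg (not_lt.1 hi) (sq_nonneg _)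

theorem extendByZero_support {V : Type*} [Fintype V] (p : V → Prop) (c : {i // p i} → ℝ)
    (hc : c ≠ 0) :
    (∀ i, ¬ p i → Function.ExtendByZero.linearMap ℝ (Subtype.val : {i // p i} → V) c i = 0) ∧
    ∃ i, p i ∧ Function.ExtendByZero.linearMap ℝ (Subtype.val : {i // p i} → V) c i ≠ 0 := by
  refine ⟨fun i hi => ?_, ?_⟩
  · simp only [Function.ExtendByZero.linearMap_apply]
    rw [Function.extend_apply' _ _ _ (by rintro ⟨a, rfl⟩; exact hi a.2)]; rfl
  · obtain ⟨i, hi⟩ := Function.ne_iff.1 hc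
    refine ⟨i, i.2, ?_⟩
    simp only [Function.ExtendByZero.linearMap_apply]
    rwa [Subtype.val_injective.extend_apply]

theorem exists_negDef {V : Type*} [Fintype V] (G : SimpleGraph V) :
    ∃ f : (Fin G.negInertia → ℝ) →ₗ[ℝ] V → ℝ, ∀ c, c ≠ 0 → adjForm G (f c) < 0 := by
  classical
  obtain ⟨μ, φ, ψ, hψ, hQ, -, hn⟩ := exists_diagonalization_s16 G
  have e : (Fin G.negInertia → ℝ) ≃ₗ[ℝ] ({i // μ i < 0} → ℝ) :=
    LinearEquiv.ofFinrankEq _ _ (by simp [hn])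
  refine ⟨ψ ∘ₗ Function.ExtendByZero.linearMap ℝ Subtype.val ∘ₗ e.toLinearMap, fun c hc => ?_⟩
  obtain ⟨h0, i, hi, hne⟩ := extendByZero_support (fun i => μ i < 0) (e c) (by simpa using hc)
  simp only [LinearMap.comp_apply, hQ, hψ, LinearEquiv.coe_coe]
  refine Finset.sum_neg' (fun j _ => ?_) ⟨i, Finset.mem_univ _, ?_⟩
  · by_cases hj : μ j < 0
    · exact mul_nonpos_of_nonpos_of_nonneg hj.le (sq_nonneg _)
    · simp [h0 j hj]
  · exact mul_neg_of_neg_of_pos hi (by positivity)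

theorem exists_posDef {V : Type*} [Fintype V] (G : SimpleGraph V) :
    ∃ f : (Fin G.posInertia → ℝ) →ₗ[ℝ] V → ℝ, ∀ c, c ≠ 0 → 0 < adjForm G (f c) := by
  classical
  obtain ⟨μ, φ, ψ, hψ, hQ, hn, -⟩ := exists_diagonalization_s16 G
  have e : (Fin G.posInertia → ℝ) ≃ₗ[ℝ] ({i // 0 < μ i} → ℝ) :=
    LinearEquiv.ofFinrankEq _ _ (by simp [hn])
  refine ⟨ψ ∘ₗ Function.ExtendByZero.linearMap ℝ Subtype.val ∘ₗ e.toLinearMap, fun c hc => ?_⟩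
  obtain ⟨h0, i, hi, hne⟩ := extendByZero_support (fun i => 0 < μ i) (e c) (by simpa using hc)
  simp only [LinearMap.comp_apply, hQ, hψ, LinearEquiv.coe_coe]
  refine Finset.sum_pos' (fun j _ => ?_) ⟨i, Finset.mem_univ _, ?_⟩
  · by_cases hj : 0 < μ j
    · exact mul_nonneg hj.le (sq_nonneg _)
    · simp [h0 j hj]
  · exact mul_pos hi (by positivity)

/-- The form is nonpositive on a subspace cut out by `n⁺` linear equations. -/
theorem exists_nonpos_on_ker {V : Type*} [Fintype V] (G : SimpleGraph V) :
    ∃ g : (V → ℝ) →ₗ[ℝ] (Fin G.posInertia → ℝ), ∀ x, g x = 0 → adjForm G x ≤ 0 := by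
  classical
  obtain ⟨μ, φ, ψ, hψ, hQ, hn, -⟩ := exists_diagonalization_s16 G
  have e : ({i // 0 < μ i} → ℝ) ≃ₗ[ℝ] (Fin G.posInertia → ℝ) :=
    LinearEquiv.ofFinrankEq _ _ (by simp [hn])
  refine ⟨e.toLinearMap ∘ₗ LinearMap.funLeft ℝ ℝ Subtype.val ∘ₗ φ, fun x hx => ?_⟩
  have h0 : LinearMap.funLeft ℝ ℝ (Subtype.val : {i // 0 < μ i} → V) (φ x) = 0 := by
    simpa using hx
  rw [hQ]
  refine Finset.sum_nonpos fun i _ => ?_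
  by_cases hi : 0 < μ i
  · have : φ x i = 0 := congrFun h0 ⟨i, hi⟩
    simp [this]
  · exact mul_nonpos_of_nonpos_of_nonneg (not_lt.1 hi) (sq_nonneg _)

/-! ### The form of the join -/

theorem adjForm_joinGraph {V W : Type*} [Fintype V] [Fintype W] (G : SimpleGraph V)
    (H : SimpleGraph W) (z : V ⊕ W → ℝ) :
    adjForm (G.joinGraph H) z = adjForm G (fun v => z (.inl v)) + adjForm H (fun w => z (.inr w))
      + 2 * ((∑ v, z (.inl v)) * ∑ w, z (.inr w)) := by
  have h1 : ∀ a b, (G.joinGraph H).Adj (.inl a) (.inl b) ↔ G.Adj a b := by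
    simp [SimpleGraph.joinGraph]
  have h2 : ∀ a b, (G.joinGraph H).Adj (.inr a) (.inr b) ↔ H.Adj a b := by
    simp [SimpleGraph.joinGraph]
  have h3 : ∀ a b, (G.joinGraph H).Adj (.inl a) (.inr b) := by simp [SimpleGraph.joinGraph]
  have h4 : ∀ a b, (G.joinGraph H).Adj (.inr a) (.inl b) := by simp [SimpleGraph.joinGraph]
  classical
  have h1' : ∀ a b, (G.joinGraph H).adjMatrix ℝ (.inl a) (.inl b) = G.adjMatrix ℝ a b :=
    fun a b => by by_cases h : G.Adj a b <;> simp [h1, h]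
  have h2' : ∀ a b, (G.joinGraph H).adjMatrix ℝ (.inr a) (.inr b) = H.adjMatrix ℝ a b :=
    fun a b => by by_cases h : H.Adj a b <;> simp [h2, h]
  have h3' : ∀ a b, (G.joinGraph H).adjMatrix ℝ (.inl a) (.inr b) = 1 := by simp [h3]
  have h4' : ∀ a b, (G.joinGraph H).adjMatrix ℝ (.inr a) (.inl b) = 1 := by simp [h4]
  simp only [adjForm, dotProduct, mulVec, Fintype.sum_sum_type, h1', h2', h3', h4', one_mul,
    mul_add, Finset.sum_add_distrib, ← Finset.sum_mul]
  ring

/-- If one of two negative definite subspaces for `G` and `H` lies in the hyperplane of vectors with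
coordinate sum zero, the mixed term of the form of the join vanishes on their direct sum. -/
theorem finrank_add_le_negInertia_joinGraph {V W E F : Type*} [Fintype V] [Fintype W]
    [AddCommGroup E] [Module ℝ E] [FiniteDimensional ℝ E]
    [AddCommGroup F] [Module ℝ F] [FiniteDimensional ℝ F]
    (G : SimpleGraph V) (H : SimpleGraph W) (f : E →ₗ[ℝ] V → ℝ) (g : F →ₗ[ℝ] W → ℝ)
    (hf : ∀ c, c ≠ 0 → adjForm G (f c) < 0) (hg : ∀ d, d ≠ 0 → adjForm H (g d) < 0)
    (h0 : (∀ c, ∑ v, f c v = 0) ∨ ∀ d, ∑ w, g d w = 0) :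
    Module.finrank ℝ E + Module.finrank ℝ F ≤ (G.joinGraph H).negInertia := by
  rw [← Module.finrank_prod]
  refine finrank_le_negInertia (G.joinGraph H)
    ((LinearEquiv.sumArrowLequivProdArrow V W ℝ ℝ).symm.toLinearMap ∘ₗ f.prodMap g) ?_
  rintro ⟨c, d⟩ hcd
  rw [adjForm_joinGraph]
  have hs : (∑ v, f c v) * ∑ w, g d w = 0 := by
    rcases h0 with h0 | h0 <;> simp [h0]
  simp only [LinearMap.comp_apply, LinearEquiv.coe_coe, LinearMap.prodMap_apply,
    LinearEquiv.sumArrowLequivProdArrow_symm_apply_inl,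
    LinearEquiv.sumArrowLequivProdArrow_symm_apply_inr, hs]
  have hz : adjForm G (f 0) = 0 ∧ adjForm H (g 0) = 0 := by simp [adjForm]
  by_cases hc : c = 0
  · subst hc
    have hd : d ≠ 0 := by rintro rfl; exact hcd rfl
    linarith [hg d hd, hz.1]
  · by_cases hd : d = 0
    · subst hd
      linarith [hf c hc, hz.2]
    · linarith [hf c hc, hg d hd]

/-- The linear functional summing the coordinates. -/
def sumLin (V : Type*) [Fintype V] : (V → ℝ) →ₗ[ℝ] ℝ := ∑ v, LinearMap.proj v

theorem sumLin_apply {V : Type*} [Fintype V] (x : V → ℝ) : sumLin V x = ∑ v, x v := by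
  simp [sumLin]

/-- On the hyperplane where the `V`-coordinates sum to zero, the form of the join is the orthogonal
sum of the forms of `G` and `H`, so passing to the join costs at most one dimension. -/
theorem posInertia_joinGraph_le {V W : Type*} [Fintype V] [Fintype W] (G : SimpleGraph V)
    (H : SimpleGraph W) : (G.joinGraph H).posInertia ≤ G.posInertia + H.posInertia + 1 := by
  obtain ⟨f, hf⟩ := exists_posDef (G.joinGraph H)
  obtain ⟨g, hg⟩ := exists_nonpos_on_ker G
  obtain ⟨h, hh⟩ := exists_nonpos_on_ker H
  by_contra! hlt
  let r : (V ⊕ W → ℝ) →ₗ[ℝ] V → ℝ := LinearMap.funLeft ℝ ℝ Sum.inl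
  let t : (V ⊕ W → ℝ) →ₗ[ℝ] W → ℝ := LinearMap.funLeft ℝ ℝ Sum.inr
  obtain ⟨c, hc, h0⟩ := exists_ne_zero_of_finrank_lt
    ((((g ∘ₗ r).prod (h ∘ₗ t)).prod (sumLin V ∘ₗ r)) ∘ₗ f) (by simpa using hlt)
  have h1 : g (r (f c)) = 0 := congrArg (fun p => p.1.1) h0
  have h2 : h (t (f c)) = 0 := congrArg (fun p => p.1.2) h0
  have h3 : ∑ v, f c (.inl v) = 0 := (sumLin_apply (r (f c))).symm.trans (congrArg Prod.snd h0)
  have := hf c hc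
  rw [adjForm_joinGraph, h3] at this
  have h4 : adjForm G (fun v => f c (.inl v)) ≤ 0 := hg _ h1
  have h5 : adjForm H (fun w => f c (.inr w)) ≤ 0 := hh _ h2
  linarith

theorem le_negInertia_joinGraph {V W : Type*} [Fintype V] [Fintype W] (G : SimpleGraph V)
    (H : SimpleGraph W) : G.negInertia + H.negInertia ≤ (G.joinGraph H).negInertia + 1 := by
  obtain ⟨f, hf⟩ := exists_negDef G
  obtain ⟨g, hg⟩ := exists_negDef H
  let K := LinearMap.ker (sumLin V ∘ₗ f)
  have h1 := finrank_add_le_negInertia_joinGraph G H (f ∘ₗ K.subtype) g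
    (fun c hc => hf c (by simpa using hc)) hg
    (.inl fun c => (sumLin_apply _).symm.trans (LinearMap.mem_ker.1 c.2))
  have h2 := (sumLin V ∘ₗ f).finrank_range_add_finrank_ker
  have h3 : Module.finrank ℝ (LinearMap.range (sumLin V ∘ₗ f)) ≤ 1 := by
    simpa using Submodule.finrank_le (LinearMap.range (sumLin V ∘ₗ f))
  simp only [Module.finrank_fin_fun] at h1 h2
  change _ + Module.finrank ℝ K = _ at h2
  omega

/-! ### Negative definite subspaces of sum-zero vectors -/

/-- The difference `e_u - e_v` of standard basis vectors; its coordinates sum to zero. -/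
noncomputable def edgeVec {V : Type*} [DecidableEq V] (u v : V) : V → ℝ :=
  Pi.single u 1 - Pi.single v 1

theorem sum_edgeVec {V : Type*} [Fintype V] [DecidableEq V] (u v : V) :
    ∑ i, edgeVec u v i = 0 := by
  simp [edgeVec, Finset.sum_sub_distrib]

open Classical in
theorem adjForm_edgeVec {V : Type*} [Fintype V] (G : SimpleGraph V) {u v w z : V}
    (huv : G.Adj u v) (hwz : G.Adj w z) (α β : ℝ) :
    adjForm G (α • edgeVec u v + β • edgeVec w z) = -2 * α ^ 2 - 2 * β ^ 2 + 2 * α * β *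
      (G.adjMatrix ℝ u w - G.adjMatrix ℝ u z - G.adjMatrix ℝ v w + G.adjMatrix ℝ v z) := by
  have hs : ∀ i j, G.adjMatrix ℝ i j = G.adjMatrix ℝ j i := fun i j => by
    simp [SimpleGraph.adj_comm]
  have h1 : G.adjMatrix ℝ u v = 1 := by simp [huv]
  have h2 : G.adjMatrix ℝ w z = 1 := by simp [hwz]
  have h0 : ∀ i, G.adjMatrix ℝ i i = 0 := fun i => by simp
  have hb : ∀ i j, Pi.single i (1 : ℝ) ⬝ᵥ G.adjMatrix ℝ *ᵥ Pi.single j 1 = G.adjMatrix ℝ i j :=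
    fun i j => by simp [-SimpleGraph.adjMatrix_apply]
  simp only [adjForm, edgeVec, mulVec_add, mulVec_smul, mulVec_sub, dotProduct_add, add_dotProduct,
    dotProduct_smul, smul_dotProduct, sub_dotProduct, dotProduct_sub, smul_eq_mul, hb, h0,
    h1, h2, hs v u, hs z w, hs w u, hs w v, hs z u, hs z v]
  ring

open Classical in
/-- The vectors `e_u - e_v` and `e_w - e_z` of two edges span a negative definite plane as soon as
their mixed term `k` satisfies `|k| ≤ 1`, the form being `-2α² - 2β² + 2kαβ`. The edges may share
a vertex. -/
theorem exists_negDef_plane {V : Type*} [Fintype V] (G : SimpleGraph V) {u v w z : V}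
    (huv : G.Adj u v) (hwz : G.Adj w z)
    (hk : |G.adjMatrix ℝ u w - G.adjMatrix ℝ u z - G.adjMatrix ℝ v w + G.adjMatrix ℝ v z| ≤ 1) :
    ∃ f : (Fin 2 → ℝ) →ₗ[ℝ] V → ℝ, (∀ c, c ≠ 0 → adjForm G (f c) < 0) ∧ ∀ c, ∑ i, f c i = 0 := by
  refine ⟨Fintype.linearCombination ℝ ![edgeVec u v, edgeVec w z], fun c hc => ?_, fun c => ?_⟩
  · simp only [Fintype.linearCombination_apply, Fin.sum_univ_two, Matrix.cons_val_zero,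
      Matrix.cons_val_one]
    rw [adjForm_edgeVec G huv hwz]
    set k := G.adjMatrix ℝ u w - G.adjMatrix ℝ u z - G.adjMatrix ℝ v w + G.adjMatrix ℝ v z
    obtain ⟨hk1, hk2⟩ := abs_le.1 hk
    have hpos : 0 < c 0 ^ 2 + c 1 ^ 2 := by
      by_contra! hle
      refine hc (funext fun i => ?_)
      have h0 : c 0 = 0 := by nlinarith [sq_nonneg (c 0), sq_nonneg (c 1)]
      have h1 : c 1 = 0 := by nlinarith [sq_nonneg (c 0), sq_nonneg (c 1)]
      fin_cases i <;> simp [h0, h1]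
    nlinarith [mul_nonneg (by linarith : 0 ≤ 1 - k) (sq_nonneg (c 0 - c 1)),
      mul_nonneg (by linarith : 0 ≤ 1 + k) (sq_nonneg (c 0 + c 1)),
      sq_nonneg (c 0 - c 1), sq_nonneg (c 0 + c 1)]
  · simp [Fintype.linearCombination_apply, Fin.sum_univ_two, Finset.sum_add_distrib,
      ← Finset.mul_sum, sum_edgeVec]

/-- Without a negative definite plane of sum-zero vectors, a connected graph with an edge is complete
bipartite, so its form is twice a product of two linear functionals. -/
theorem negInertia_le_one_of_no_plane {V : Type*} [Fintype V] (G : SimpleGraph V)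
    (hconn : G.Connected) (hne : ∃ u v, G.Adj u v)
    (hno : ¬ ∃ f : (Fin 2 → ℝ) →ₗ[ℝ] V → ℝ, (∀ c, c ≠ 0 → adjForm G (f c) < 0) ∧
      ∀ c, ∑ i, f c i = 0) : G.negInertia ≤ 1 := by
  classical
  obtain ⟨u, v, huv⟩ := hne
  -- Two edges of a triangle have mixed term 1.
  have htri : ∀ x y z, G.Adj x y → G.Adj y z → ¬ G.Adj x z := fun x y z hxy hyz hxz =>
    hno (exists_negDef_plane G hxy hyz (by simp [hxy, hyz, hxz]))
  -- Every vertex is adjacent to `u` or `v`: otherwise some edge `xy` leaves the set of such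
  -- vertices, and its mixed term with `uv` is ±1.
  have hdom : ∀ w, G.Adj w u ∨ G.Adj w v := by
    by_contra! hw
    obtain ⟨w, hwu, hwv⟩ := hw
    obtain ⟨p⟩ := hconn.preconnected u w
    obtain ⟨⟨⟨x, y⟩, hxy⟩, -, hx, hy⟩ := p.exists_boundary_dart
      {w | G.Adj w u ∨ G.Adj w v} (.inr huv) (by simp [hwu, hwv])
    simp only [Set.mem_ofPred_eq, not_or] at hx hy hxy
    rcases hx with hx | hx
    · have h := htri x u v hx huv
      exact hno (exists_negDef_plane G hxy huv (by simp [hx, hy.1, hy.2, h]))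
    · have h := htri x v u hx huv.symm
      exact hno (exists_negDef_plane G hxy huv (by simp [hx, hy.1, hy.2, h]))
  -- `G` is complete bipartite, the parts being the neighbourhoods of `v` and of `u`.
  have hadj : ∀ x y, G.Adj x y ↔ (G.Adj x v ∧ G.Adj y u ∨ G.Adj x u ∧ G.Adj y v) := by
    have key : ∀ x y, G.Adj x v → G.Adj y u → G.Adj x y := by
      intro x y hx hy
      by_contra hxy
      -- The edges `xv` and `uy` have mixed term `-1` if `x` and `y` are not adjacent.
      have h1 := htri x v u hx huv.symm
      have h2 := htri y u v hy huv
      exact hno (exists_negDef_plane G hx hy.symm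
        (by simp [h1, hxy, huv.symm, mt G.adj_symm h2]))
    intro x y
    constructor
    · intro hxy
      rcases hdom x with hx | hx <;> rcases hdom y with hy | hy
      · exact absurd hx (htri x y u hxy hy)
      · exact .inr ⟨hx, hy⟩
      · exact .inl ⟨hx, hy⟩
      · exact absurd hx (htri x y v hxy hy)
    · rintro (⟨hx, hy⟩ | ⟨hx, hy⟩)
      · exact key x y hx hy
      · exact (key y x hy hx).symm
  have hform : ∀ x : V → ℝ, adjForm G x =
      2 * ((∑ i, if G.Adj i v then x i else 0) * ∑ j, if G.Adj j u then x j else 0) := by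
    intro x
    have hA : ∀ i j, G.adjMatrix ℝ i j = (if G.Adj i v then 1 else 0) * (if G.Adj j u then 1 else 0)
        + (if G.Adj i u then 1 else 0) * (if G.Adj j v then 1 else 0) := by
      intro i j
      have hi : ¬ (G.Adj i u ∧ G.Adj i v) := fun h => htri u i v h.1.symm h.2 huv
      have hj : ¬ (G.Adj j u ∧ G.Adj j v) := fun h => htri u j v h.1.symm h.2 huv
      simp only [SimpleGraph.adjMatrix_apply, hadj i j]
      by_cases h1 : G.Adj i v <;> by_cases h2 : G.Adj i u <;> by_cases h3 : G.Adj j v <;>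
        by_cases h4 : G.Adj j u <;> simp [h1, h2, h3, h4] at hi hj ⊢
    have h : adjForm G x = ∑ i, ∑ j, x i * (G.adjMatrix ℝ i j * x j) := by
      simp only [adjForm, dotProduct, mulVec, Finset.mul_sum]
    rw [h, two_mul]
    nth_rewrite 2 [mul_comm]
    rw [Finset.sum_mul_sum, Finset.sum_mul_sum, ← Finset.sum_add_distrib]
    refine Finset.sum_congr rfl fun i _ => ?_
    rw [← Finset.sum_add_distrib]
    refine Finset.sum_congr rfl fun j _ => ?_
    rw [hA]
    split_ifs <;> ring
  -- A negative definite plane would contain a nonzero zero of one of the two functionals.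
  obtain ⟨f, hf⟩ := exists_negDef G
  by_contra! hlt
  obtain ⟨c, hc, h0⟩ := exists_ne_zero_of_finrank_lt
    ((∑ i, (if G.Adj i v then (1 : ℝ) else 0) • LinearMap.proj i : (V → ℝ) →ₗ[ℝ] ℝ) ∘ₗ f) (by simpa using hlt)
  have h1 : (∑ i, if G.Adj i v then f c i else 0) = 0 := by
    simpa [-ite_smul] using h0
  have := hf c hc
  rw [hform, h1] at this
  simp at this

theorem exists_negDef_line {V : Type*} [Fintype V] (G : SimpleGraph V) (hne : ∃ u v, G.Adj u v) :
    ∃ f : (Fin 1 → ℝ) →ₗ[ℝ] V → ℝ, (∀ c, c ≠ 0 → adjForm G (f c) < 0) ∧ ∀ c, ∑ i, f c i = 0 := by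
  classical
  obtain ⟨u, v, huv⟩ := hne
  refine ⟨Fintype.linearCombination ℝ ![edgeVec u v], fun c hc => ?_, fun c => ?_⟩
  · have h := adjForm_edgeVec G huv huv (c 0) 0
    have h0 : c 0 ≠ 0 := fun h0 => hc (funext fun i => by rw [Subsingleton.elim i 0, h0]; rfl)
    have : 0 < c 0 ^ 2 := by positivity
    simp only [zero_smul, add_zero] at h
    simp only [Fintype.linearCombination_apply, Finset.univ_unique, Fin.default_eq_zero,
      Finset.sum_singleton, Matrix.cons_val_zero, h]
    linarith
  · simp [Fintype.linearCombination_apply, ← Finset.mul_sum, sum_edgeVec]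

/-- If a negative definite subspace of maximal dimension `n⁻` never fits into the sum-zero
hyperplane, then `n⁻ ≥ 3`: any edge rules out `n⁻ = 1`, and the complete bipartite case `n⁻ = 2`. -/
theorem three_le_negInertia {V : Type*} [Fintype V] (G : SimpleGraph V) (hconn : G.Connected)
    (hne : ∃ u v, G.Adj u v)
    (hno : ¬ ∃ f : (Fin G.negInertia → ℝ) →ₗ[ℝ] V → ℝ, (∀ c, c ≠ 0 → adjForm G (f c) < 0) ∧
      ∀ c, ∑ i, f c i = 0) : 3 ≤ G.negInertia := by
  obtain ⟨f, hf, hf0⟩ := exists_negDef_line G hne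
  have h1 := finrank_le_negInertia G f hf
  rw [Module.finrank_fin_fun] at h1
  by_contra! hlt
  obtain h | h : G.negInertia = 1 ∨ G.negInertia = 2 := by omega
  · rw [h] at hno
    exact hno ⟨f, hf, hf0⟩
  · rw [h] at hno
    have := negInertia_le_one_of_no_plane G hconn hne hno
    omega

/-! ### The inequality for the join -/

theorem exists_adj_of_connected {V : Type*} [Finite V] (G : SimpleGraph V) (hconn : G.Connected)
    (hord : 2 ≤ Nat.card V) : ∃ u v, G.Adj u v := by
  have : Nontrivial V := Finite.one_lt_card_iff_nontrivial.1 hord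
  obtain ⟨u⟩ := hconn.nonempty
  obtain ⟨v, hv⟩ := hconn.preconnected.exists_adj_of_nontrivial u
  exact ⟨u, v, hv⟩

theorem stmt16 {V W : Type*} [Finite V] [Finite W] (G : SimpleGraph V) (H : SimpleGraph W)
    (hGconn : G.Connected) (hHconn : H.Connected)
    (hGord : 2 ≤ Nat.card V) (hHord : 2 ≤ Nat.card W)
    (hG : 2 * G.posInertia ≤ G.negInertia * (G.negInertia + 1))
    (hH : 2 * H.posInertia ≤ H.negInertia * (H.negInertia + 1)) :
    2 * (G.joinGraph H).posInertia ≤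
      (G.joinGraph H).negInertia * ((G.joinGraph H).negInertia + 1) := by
  have := Fintype.ofFinite V
  have := Fintype.ofFinite W
  have hGe := exists_adj_of_connected G hGconn hGord
  have hHe := exists_adj_of_connected H hHconn hHord
  have hP := posInertia_joinGraph_le G H
  by_cases hN : G.negInertia + H.negInertia ≤ (G.joinGraph H).negInertia
  · obtain ⟨f, hf, -⟩ := exists_negDef_line G hGe
    obtain ⟨g, hg, -⟩ := exists_negDef_line H hHe
    have ha := finrank_le_negInertia G f hf
    have hb := finrank_le_negInertia H g hg
    rw [Module.finrank_fin_fun] at ha hb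
    calc _ ≤ (G.negInertia + H.negInertia) * (G.negInertia + H.negInertia + 1) := by nlinarith
      _ ≤ _ := by gcongr
  · have ha : 3 ≤ G.negInertia := by
      refine three_le_negInertia G hGconn hGe ?_
      rintro ⟨f, hf, hf0⟩
      obtain ⟨g, hg⟩ := exists_negDef H
      exact hN (by simpa using finrank_add_le_negInertia_joinGraph G H f g hf hg (.inl hf0))
    have hb : 3 ≤ H.negInertia := by
      refine three_le_negInertia H hHconn hHe ?_
      rintro ⟨g, hg, hg0⟩
      obtain ⟨f, hf⟩ := exists_negDef G
      exact hN (by simpa using finrank_add_le_negInertia_joinGraph G H f g hf hg (.inr hg0))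
    have hN' := le_negInertia_joinGraph G H
    generalize G.negInertia = a at *
    generalize H.negInertia = b at *
    generalize (G.joinGraph H).negInertia = n at *
    obtain ⟨a, rfl⟩ := Nat.exists_eq_add_of_le ha
    obtain ⟨b, rfl⟩ := Nat.exists_eq_add_of_le hb
    obtain rfl : n = a + b + 5 := by omega
    nlinarith [Nat.zero_le (a * b)]
end

section
/- Let G be a cograph, i.e., a finite simple graph with no induced subgraph isomorphic to the path P₄ on four vertices. Then n⁺(G) ≤ n⁻(G). -/
/-!
The statement is proved for a larger class of quadratic forms, which is closed under merging twins.
Give each vertex `v` of a `P₄`-free graph a diagonal weight `d v ∈ [0, 1)`, and let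
`Q(x) = ∑ d v * x v ^ 2 + ∑ a u v * x u * x v`, where `a` is the adjacency matrix. Then
`n⁺(Q) ≤ n⁻(Q) + #{v | 0 < d v}`, and `d = 0` is the theorem.

A `P₄`-free graph on at least two vertices splits into two nonempty parts which are either completely
joined or not joined at all (`exists_split`); hence it contains twins `u`, `v` (`exists_twins`),
adjacent (`e = 1`) or not (`e = 0`). As `Q` sees the other vertices only through `x u + x v`,
completing the square
`d u * x² + 2 * e * x * y + d v * y² = c * (x + y)² + k * z²` with `k = d u + d v - 2 * e`
(`exists_merge`) replaces `u`, `v` by a single vertex of weight `c`, at the cost of one extra square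
`k * z²`. The new weight is again in `[0, 1)`. If `e = 1` then `k < 0`, which pays for a possibly new
positive weight; if `e = 0` then `k > 0` only if a positive weight is lost. Induction on the number of
vertices diagonalises `Q` with the right count of signs (`exists_diagonalization`), and Sylvester's
law of inertia (`card_pos_le_of_sum_sq_eq`) compares this with the spectral diagonalisation.
-/

open Matrix

namespace CographInertia

/-! ### Twins in `P₄`-free graphs -/

/-- `G` has no induced path on four vertices. The vertices `a, b, c, d` need not be assumed distinct,
since the (non-)adjacencies force this. -/
def NoP4 {V : Type*} (G : SimpleGraph V) : Prop :=
  ∀ a b c d, G.Adj a b → G.Adj b c → G.Adj c d → ¬ G.Adj a c → ¬ G.Adj b d → ¬ G.Adj a d → False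

theorem noP4_of_not_embedding {V : Type*} (G : SimpleGraph V)
    (h : ¬ Nonempty (SimpleGraph.pathGraph 4 ↪g G)) : NoP4 G := by
  intro a b c d hab hbc hcd hac hbd had
  apply h
  have hba := hab.symm
  have hcb := hbc.symm
  have hdc := hcd.symm
  have hca : ¬ G.Adj c a := fun h => hac h.symm
  have hdb : ¬ G.Adj d b := fun h => hbd h.symm
  have hda : ¬ G.Adj d a := fun h => had h.symm
  have h1 := hab.ne
  have h2 := hbc.ne
  have h3 := hcd.ne
  have h4 : a ≠ c := by rintro rfl; exact had hcd
  have h5 : b ≠ d := by rintro rfl; exact had hab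
  have h6 : a ≠ d := by rintro rfl; exact hac hcd.symm
  refine ⟨⟨⟨![a, b, c, d], ?_⟩, ?_⟩⟩
  · intro i j hij
    fin_cases i <;> fin_cases j <;> simp_all
  · intro i j
    change G.Adj (![a, b, c, d] i) (![a, b, c, d] j) ↔ _
    fin_cases i <;> fin_cases j <;> simp_all [SimpleGraph.pathGraph_adj]

/-- The complement of the path `a b c d` is the path `c a d b`. -/
theorem NoP4.compl {V : Type*} {G : SimpleGraph V} (h : NoP4 G) : NoP4 Gᶜ := by
  intro a b c d hab hbc hcd hac hbd had
  have h4 : a ≠ c := by rintro rfl; exact had hcd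
  have h5 : b ≠ d := by rintro rfl; exact had hab
  have h6 : a ≠ d := by rintro rfl; exact hac hcd.symm
  simp only [SimpleGraph.compl_adj, not_and, not_not] at *
  exact h c a d b (hac h4).symm (had h6) (hbd h5).symm hcd.2 hab.2 (fun h => hbc.2 h.symm)

/-- `S` is the disjoint union of two nonempty parts without edges of `G` between them. -/
def Splits {V : Type*} [DecidableEq V] (G : SimpleGraph V) (S : Finset V) : Prop :=
  ∃ A B : Finset V, A.Nonempty ∧ B.Nonempty ∧ Disjoint A B ∧ A ∪ B = S ∧
    ∀ a ∈ A, ∀ b ∈ B, ¬ G.Adj a b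

/-- If `v` has neighbours `N` in both parts of a split but misses a vertex of `A`, then `A \ N` can be
split off, since an edge between `A ∩ N` and `A \ N` would extend through `v` to an induced `P₄`. -/
theorem splits_insert_aux {V : Type*} [DecidableEq V] {G : SimpleGraph V} (hG : NoP4 G)
    {A B : Finset V} {v z y : V} (hv : v ∉ A ∪ B) (hdis : Disjoint A B)
    (hAB : ∀ a ∈ A, ∀ b ∈ B, ¬ G.Adj a b) (hz : z ∈ B) (hvz : G.Adj v z)
    (hy : y ∈ A) (hvy : ¬ G.Adj v y) : Splits G (insert v (A ∪ B)) := by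
  classical
  refine ⟨A.filter (fun a => ¬ G.Adj v a), insert v (A.filter (fun a => G.Adj v a) ∪ B),
    ⟨y, by simp [hy, hvy]⟩, ⟨v, by simp⟩, ?_, ?_, ?_⟩
  · rw [Finset.disjoint_left] at *
    intro a ha
    simp only [Finset.mem_filter, Finset.mem_union, Finset.mem_insert, not_or] at *
    refine ⟨?_, ?_, hdis ha.1⟩
    · rintro rfl; exact hv.1 ha.1
    · tauto
  · ext a
    simp only [Finset.mem_filter, Finset.mem_union, Finset.mem_insert]
    tauto
  · intro a ha b hb hab
    simp only [Finset.mem_filter, Finset.mem_union, Finset.mem_insert] at ha hb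
    rcases hb with rfl | hb | hb
    · exact ha.2 hab.symm
    · exact hG a b v z hab hb.2.symm hvz (fun h => ha.2 h.symm) (hAB b hb.1 z hz)
        (hAB a ha.1 z hz)
    · exact hAB a ha.1 b hb hab

theorem splits_insert {V : Type*} [DecidableEq V] {G : SimpleGraph V} (hG : NoP4 G)
    {S : Finset V} {v : V} (hv : v ∉ S) (hS : Splits G S) :
    Splits G (insert v S) ∨ Splits Gᶜ (insert v S) := by
  obtain ⟨A, B, hA, hB, hdis, rfl, hAB⟩ := hS
  have hBA : ∀ b ∈ B, ∀ a ∈ A, ¬ G.Adj b a := fun b hb a ha h => hAB a ha b hb h.symm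
  have hvA : v ∉ A := fun h => hv (Finset.mem_union_left _ h)
  have hvB : v ∉ B := fun h => hv (Finset.mem_union_right _ h)
  by_cases hNA : ∃ a ∈ A, G.Adj v a
  swap
  · push Not at hNA
    refine Or.inl ⟨A, insert v B, hA, ⟨v, by simp⟩, ?_, by simp, ?_⟩
    · simp [hvA, hdis]
    · intro a ha b hb hab
      rcases Finset.mem_insert.1 hb with rfl | hb
      · exact hNA a ha hab.symm
      · exact hAB a ha b hb hab
  by_cases hNB : ∃ b ∈ B, G.Adj v b
  swap
  · push Not at hNB
    refine Or.inl ⟨insert v A, B, ⟨v, by simp⟩, hB, ?_, by simp, ?_⟩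
    · simp [hvB, hdis]
    · intro a ha b hb hab
      rcases Finset.mem_insert.1 ha with rfl | ha
      · exact hNB b hb hab
      · exact hAB a ha b hb hab
  obtain ⟨a, ha, hva⟩ := hNA
  obtain ⟨b, hb, hvb⟩ := hNB
  by_cases hU : ∀ w ∈ A ∪ B, G.Adj v w
  · refine Or.inr ⟨{v}, A ∪ B, ⟨v, by simp⟩, hA.mono Finset.subset_union_left, ?_, rfl, ?_⟩
    · simpa using hv
    · intro x hx w hw hxw
      rw [Finset.mem_singleton.1 hx, SimpleGraph.compl_adj] at hxw
      exact hxw.2 (hU w hw)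
  · push Not at hU
    obtain ⟨y, hy, hvy⟩ := hU
    left
    rcases Finset.mem_union.1 hy with hy | hy
    · exact splits_insert_aux hG hv hdis hAB hb hvb hy hvy
    · rw [Finset.union_comm] at hv ⊢
      exact splits_insert_aux hG hv hdis.symm hBA ha hva hy hvy

theorem exists_split {V : Type*} [DecidableEq V] {G : SimpleGraph V} (hG : NoP4 G)
    (S : Finset V) (hS : 2 ≤ S.card) : Splits G S ∨ Splits Gᶜ S := by
  induction S using Finset.induction_on with
  | empty => simp at hS
  | insert v S hv ih =>
    by_cases h2 : 2 ≤ S.card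
    · rcases ih h2 with h | h
      · exact splits_insert hG hv h
      · have := splits_insert hG.compl hv h
        rwa [compl_compl, or_comm] at this
    · have h1 : S.card = 1 := by
        rw [Finset.card_insert_of_notMem hv] at hS
        omega
      obtain ⟨u, rfl⟩ := Finset.card_eq_one.1 h1
      have hvu : v ≠ u := by simpa using hv
      by_cases h : G.Adj v u
      · exact Or.inr ⟨{v}, {u}, by simp, by simp, by simpa using hvu, rfl, by simp [h]⟩
      · exact Or.inl ⟨{v}, {u}, by simp, by simp, by simpa using hvu, rfl, by simp [h]⟩

/-- Twins inside one part of a split are twins in the whole set. -/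
theorem exists_twins {V : Type*} [DecidableEq V] {G : SimpleGraph V} (hG : NoP4 G)
    (S : Finset V) (hS : 2 ≤ S.card) :
    ∃ u ∈ S, ∃ v ∈ S, u ≠ v ∧ ∀ w ∈ S, w ≠ u → w ≠ v → (G.Adj u w ↔ G.Adj v w) := by
  induction S using Finset.strongInduction with
  | H S ih =>
    obtain ⟨A, B, hA, hB, hdis, hAB, hun⟩ : ∃ A B : Finset V, A.Nonempty ∧ B.Nonempty ∧
        Disjoint A B ∧ A ∪ B = S ∧
        ∃ p : Prop, ∀ a ∈ A, ∀ b ∈ B, (G.Adj a b ↔ p) ∧ (G.Adj b a ↔ p) := by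
      rcases exists_split hG S hS with h | h
      · obtain ⟨A, B, hA, hB, hdis, hAB, h⟩ := h
        refine ⟨A, B, hA, hB, hdis, hAB, False, fun a ha b hb => ?_⟩
        have := h a ha b hb
        simp [this, G.adj_comm b a]
      · obtain ⟨A, B, hA, hB, hdis, hAB, h⟩ := h
        refine ⟨A, B, hA, hB, hdis, hAB, True, fun a ha b hb => ?_⟩
        have hne : a ≠ b := fun e => Finset.disjoint_left.1 hdis ha (e ▸ hb)
        have := h a ha b hb
        simp only [SimpleGraph.compl_adj, not_and, not_not] at this
        simp [this hne, G.adj_comm b a]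
    obtain ⟨p, hp⟩ := hun
    have hAS : A ⊂ S := by
      rw [← hAB]
      obtain ⟨b, hb⟩ := hB
      exact Finset.ssubset_iff_subset_ne.2 ⟨Finset.subset_union_left, fun e =>
        Finset.disjoint_left.1 hdis (e ▸ Finset.mem_union_right A hb) hb⟩
    have hBS : B ⊂ S := by
      rw [← hAB]
      obtain ⟨a, ha⟩ := hA
      exact Finset.ssubset_iff_subset_ne.2 ⟨Finset.subset_union_right, fun e =>
        Finset.disjoint_left.1 hdis ha (e ▸ Finset.mem_union_left B ha)⟩
    by_cases hA2 : 2 ≤ A.card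
    · obtain ⟨u, hu, v, hv, huv, h⟩ := ih A hAS hA2
      refine ⟨u, hAS.1 hu, v, hAS.1 hv, huv, fun w hw hwu hwv => ?_⟩
      rw [← hAB] at hw
      rcases Finset.mem_union.1 hw with hw | hw
      · exact h w hw hwu hwv
      · rw [(hp u hu w hw).1, (hp v hv w hw).1]
    by_cases hB2 : 2 ≤ B.card
    · obtain ⟨u, hu, v, hv, huv, h⟩ := ih B hBS hB2
      refine ⟨u, hBS.1 hu, v, hBS.1 hv, huv, fun w hw hwu hwv => ?_⟩
      rw [← hAB] at hw
      rcases Finset.mem_union.1 hw with hw | hw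
      · rw [(hp w hw u hu).2, (hp w hw v hv).2]
      · exact h w hw hwu hwv
    obtain ⟨a, rfl⟩ := Finset.card_eq_one.1 (by have := hA.card_pos; omega : A.card = 1)
    obtain ⟨b, rfl⟩ := Finset.card_eq_one.1 (by have := hB.card_pos; omega : B.card = 1)
    refine ⟨a, hAS.1 (by simp), b, hBS.1 (by simp), by simpa using hdis, fun w hw h1 h2 => ?_⟩
    rw [← hAB] at hw
    simp [h1, h2] at hw

/-! ### The weighted form and the merging of twins -/

/-- The quadratic form of the adjacency matrix of `G`, restricted to the coordinates in `S`, with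
diagonal entries `d`. -/
noncomputable def form {V : Type*} [DecidableEq V] (G : SimpleGraph V) [DecidableRel G.Adj]
    (S : Finset V) (d x : V → ℝ) : ℝ :=
  ∑ i ∈ S, d i * x i ^ 2 + ∑ i ∈ S, ∑ j ∈ S, (if G.Adj i j then 1 else 0) * x i * x j

theorem form_insert {V : Type*} [DecidableEq V] (G : SimpleGraph V) [DecidableRel G.Adj]
    {T : Finset V} {u : V} (hu : u ∉ T) (d x : V → ℝ) :
    form G (insert u T) d x = d u * x u ^ 2
      + 2 * x u * ∑ j ∈ T, (if G.Adj u j then 1 else 0) * x j + form G T d x := by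
  unfold form
  simp only [Finset.sum_insert hu, Finset.sum_add_distrib, SimpleGraph.irrefl, if_false]
  have h1 : ∑ j ∈ T, (if G.Adj u j then (1:ℝ) else 0) * x u * x j
      = x u * ∑ j ∈ T, (if G.Adj u j then 1 else 0) * x j := by
    rw [Finset.mul_sum]; exact Finset.sum_congr rfl fun j _ => by ring
  have h2 : ∑ j ∈ T, (if G.Adj j u then (1:ℝ) else 0) * x j * x u
      = x u * ∑ j ∈ T, (if G.Adj u j then 1 else 0) * x j := by
    rw [Finset.mul_sum]
    exact Finset.sum_congr rfl fun j _ => by simp only [G.adj_comm j u]; ring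
  rw [h1, h2]; ring

theorem form_congr {V : Type*} [DecidableEq V] (G : SimpleGraph V) [DecidableRel G.Adj]
    {T : Finset V} {d x d' x' : V → ℝ} (hd : ∀ i ∈ T, d i = d' i) (hx : ∀ i ∈ T, x i = x' i) :
    form G T d x = form G T d' x' := by
  unfold form
  congr 1
  · exact Finset.sum_congr rfl fun i hi => by rw [hd i hi, hx i hi]
  · exact Finset.sum_congr rfl fun i hi => Finset.sum_congr rfl fun j hj => by
      rw [hx i hi, hx j hj]

/-- Completing the square for twins of weights `a`, `b`; `e` is `1` for adjacent twins and `0`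
otherwise. The last conjunct is the sign count that drives the induction. -/
theorem exists_merge (a b : ℝ) (ha : 0 ≤ a) (ha1 : a < 1) (hb : 0 ≤ b) (hb1 : b < 1)
    (e : ℝ) (he : e = 0 ∨ e = 1) :
    ∃ c k l : ℝ, 0 ≤ c ∧ c < 1 ∧
      (∀ x y : ℝ, a * x ^ 2 + 2 * e * x * y + b * y ^ 2
        = c * (x + y) ^ 2 + k * (x - l * (x + y)) ^ 2) ∧
      ((if 0 < k then 1 else 0) + (if 0 < c then 1 else 0) : ℕ)
        ≤ (if k < 0 then 1 else 0) + (if 0 < a then 1 else 0) + (if 0 < b then 1 else 0) := by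
  rcases he with rfl | rfl
  · by_cases h0 : a + b = 0
    · obtain rfl : a = 0 := by linarith
      obtain rfl : b = 0 := by linarith
      exact ⟨0, 0, 0, le_rfl, one_pos, by intros; ring, by simp⟩
    · have hpos : 0 < a + b := lt_of_le_of_ne (by linarith) (Ne.symm h0)
      refine ⟨a * b / (a + b), a + b, b / (a + b), by positivity, ?_, ?_, ?_⟩
      · rw [div_lt_one hpos]; nlinarith
      · intro x y; field_simp; ring
      · rcases ha.eq_or_lt with rfl | ha
        · simp at hpos; simp [hpos]
        · rcases hb.eq_or_lt with rfl | hb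
          · simp [ha]
          · simp [ha, hb, hpos]
  · have hpos : 0 < 2 - a - b := by linarith
    have hne : a + b - 2 ≠ 0 := by linarith
    refine ⟨(1 - a * b) / (2 - a - b), a + b - 2, (1 - b) / (2 - a - b), ?_, ?_, ?_, ?_⟩
    · exact div_nonneg (by nlinarith) hpos.le
    · rw [div_lt_one hpos]; nlinarith
    · intro x y
      have := hpos.ne'
      field_simp; ring
    · rw [if_neg (by linarith), if_pos (by linarith : a + b - 2 < 0)]
      split_ifs <;> simp

/-- The substitution `x u ↦ x u + x v`, `x v ↦ x u - l * (x u + x v)`. -/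
noncomputable def mergeMap {V : Type*} [DecidableEq V] (u v : V) (l : ℝ) :
    (V → ℝ) →ₗ[ℝ] (V → ℝ) where
  toFun x := Function.update (Function.update x u (x u + x v)) v (x u - l * (x u + x v))
  map_add' x y := by
    ext w
    by_cases h1 : w = v
    · subst h1; simp; ring
    · by_cases h2 : w = u
      · subst h2; simp [h1]; ring
      · simp [h1, h2]
  map_smul' r x := by
    ext w
    by_cases h1 : w = v
    · subst h1; simp; ring
    · by_cases h2 : w = u
      · subst h2; simp [h1]; ring
      · simp [h1, h2]

theorem mergeMap_apply {V : Type*} [DecidableEq V] (u v : V) (l : ℝ) (x : V → ℝ) :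
    mergeMap u v l x =
      Function.update (Function.update x u (x u + x v)) v (x u - l * (x u + x v)) := rfl

theorem mergeMap_injective {V : Type*} [DecidableEq V] {u v : V} (huv : u ≠ v) (l : ℝ) :
    Function.Injective (mergeMap u v l) := by
  rw [injective_iff_map_eq_zero]
  intro x hx
  rw [mergeMap_apply] at hx
  have hu := congrFun hx u
  have hv := congrFun hx v
  simp [huv] at hu hv
  rw [hu] at hv
  have hxu : x u = 0 := by simpa using hv
  have hxv : x v = 0 := by simpa [hxu] using hu
  ext w
  by_cases h1 : w = v
  · rw [h1, hxv]; rfl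
  · by_cases h2 : w = u
    · rw [h2, hxu]; rfl
    · simpa [h1, h2] using congrFun hx w

/-- The form is diagonal in suitable coordinates `L`, with at most `#{0 < d}` more positive than
negative coefficients. The coordinates outside `S` are left alone, so that they remain available for
the extra squares of later merging steps. -/
theorem exists_diagonalization {V : Type*} [DecidableEq V] (G : SimpleGraph V)
    [DecidableRel G.Adj] (hG : NoP4 G) (n : ℕ) (S : Finset V) (hn : S.card = n) (d : V → ℝ)
    (hd0 : ∀ i, 0 ≤ d i) (hd1 : ∀ i, d i < 1) :
    ∃ (L : (V → ℝ) →ₗ[ℝ] (V → ℝ)) (D : V → ℝ), Function.Injective L ∧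
      (∀ w ∉ S, ∀ x, L x w = x w) ∧
      (∀ x, form G S d x = ∑ w ∈ S, D w * (L x w) ^ 2) ∧
      (S.filter fun w => 0 < D w).card
        ≤ (S.filter fun w => D w < 0).card + (S.filter fun w => 0 < d w).card := by
  induction n generalizing S d with
  | zero =>
    obtain rfl := Finset.card_eq_zero.1 hn
    exact ⟨LinearMap.id, 0, fun _ _ h => h, fun _ _ _ => rfl, by simp [form], by simp⟩
  | succ n ih =>
    by_cases hS : 2 ≤ S.card
    · obtain ⟨u, hu, v, hv, huv, htw⟩ := exists_twins hG S hS
      obtain ⟨T, huT, hvT, rfl⟩ : ∃ T : Finset V, u ∉ T ∧ v ∉ insert u T ∧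
          S = insert v (insert u T) := by
        refine ⟨(S.erase v).erase u, by simp, by simp [huv.symm], ?_⟩
        rw [Finset.insert_erase (by simp [hu, huv]), Finset.insert_erase hv]
      have hvT' : v ∉ T := fun h => hvT (Finset.mem_insert_of_mem h)
      rw [Finset.card_insert_of_notMem hvT] at hn
      obtain ⟨c, k, l, hc0, hc1, hid, hcount⟩ := exists_merge (d u) (d v) (hd0 u) (hd1 u) (hd0 v)
        (hd1 v) (if G.Adj v u then 1 else 0) (by split_ifs <;> simp)
      obtain ⟨L, D, hinj, hout, hform, hcard⟩ := ih (insert u T) (by omega)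
        (Function.update d u c)
        (fun i => by
          by_cases h : i = u
          · subst h; simpa using hc0
          · simpa [h] using hd0 i)
        (fun i => by
          by_cases h : i = u
          · subst h; simpa using hc1
          · simpa [h] using hd1 i)
      have hnu : ∀ i ∈ T, i ≠ u := fun i hi e => huT (e ▸ hi)
      have hnv : ∀ i ∈ insert u T, i ≠ v := fun i hi e => hvT (e ▸ hi)
      have hnv' : ∀ i ∈ T, i ≠ v := fun i hi => hnv i (Finset.mem_insert_of_mem hi)
      refine ⟨L ∘ₗ mergeMap u v l, Function.update D v k, hinj.comp (mergeMap_injective huv l),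
        ?_, ?_, ?_⟩
      · intro w hw x
        simp only [Finset.mem_insert, not_or] at hw
        rw [LinearMap.comp_apply, hout w (by simp [hw]), mergeMap_apply]
        simp [hw]
      · intro x
        have hlast : ∑ w ∈ insert u T, Function.update D v k w * ((L ∘ₗ mergeMap u v l) x w) ^ 2
            = form G (insert u T) (Function.update d u c) (mergeMap u v l x) := by
          rw [hform]
          exact Finset.sum_congr rfl fun w hw => by
            rw [Function.update_of_ne (hnv w hw)]; rfl
        rw [Finset.sum_insert hvT, hlast, LinearMap.comp_apply, hout v hvT, form_insert G hvT,
          form_insert G huT, form_insert G huT, Finset.sum_insert huT,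
          form_congr G (T := T) (d := Function.update d u c) (d' := d)
            (x := mergeMap u v l x) (x' := x)
            (fun i hi => by simp [hnu i hi])
            (fun i hi => by simp [mergeMap_apply, hnu i hi, hnv' i hi])]
        have hsum1 : ∑ j ∈ T, (if G.Adj v j then (1:ℝ) else 0) * x j
            = ∑ j ∈ T, (if G.Adj u j then (1:ℝ) else 0) * x j :=
          Finset.sum_congr rfl fun j hj => by
            simp only [htw j (by simp [hj]) (hnu j hj) (hnv' j hj)]
        have hsum2 : ∑ j ∈ T, (if G.Adj u j then (1:ℝ) else 0) * mergeMap u v l x j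
            = ∑ j ∈ T, (if G.Adj u j then (1:ℝ) else 0) * x j :=
          Finset.sum_congr rfl fun j hj => by simp [mergeMap_apply, hnu j hj, hnv' j hj]
        have hxu : mergeMap u v l x u = x u + x v := by simp [mergeMap_apply, huv]
        have hxv : mergeMap u v l x v = x u - l * (x u + x v) := by simp [mergeMap_apply]
        rw [hsum1, hsum2, hxu, hxv]
        simp only [Function.update_self]
        linear_combination hid (x u) (x v)
      · simp only [Finset.card_filter] at hcard ⊢
        have e1 : ∑ i ∈ insert u T, (if 0 < Function.update D v k i then 1 else 0)
            = ∑ i ∈ insert u T, (if 0 < D i then 1 else 0) :=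
          Finset.sum_congr rfl fun i hi => by rw [Function.update_of_ne (hnv i hi)]
        have e2 : ∑ i ∈ insert u T, (if Function.update D v k i < 0 then 1 else 0)
            = ∑ i ∈ insert u T, (if D i < 0 then 1 else 0) :=
          Finset.sum_congr rfl fun i hi => by rw [Function.update_of_ne (hnv i hi)]
        have e3 : ∑ i ∈ T, (if 0 < Function.update d u c i then 1 else 0)
            = ∑ i ∈ T, (if 0 < d i then 1 else 0) :=
          Finset.sum_congr rfl fun i hi => by rw [Function.update_of_ne (hnu i hi)]
        rw [Finset.sum_insert hvT, Finset.sum_insert hvT, Finset.sum_insert hvT, e1, e2,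
          Finset.sum_insert (f := fun i => if 0 < d i then 1 else 0) huT]
        rw [Finset.sum_insert (f := fun i => if 0 < Function.update d u c i then 1 else 0) huT,
          e3] at hcard
        simp only [Function.update_self] at hcard ⊢
        omega
    · obtain ⟨u, rfl⟩ := Finset.card_eq_one.1 (by omega : S.card = 1)
      refine ⟨LinearMap.id, d, fun _ _ h => h, fun _ _ _ => rfl, by simp [form], ?_⟩
      omega

/-! ### Sylvester's law of inertia -/

/-- If there were more positive `a i` than positive `b i`, some nonzero `x` would be killed by all
coordinates `M x i` with `0 < b i` and all `L x i` with `a i ≤ 0`; the common value of the two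
sums would then be both `≥ 0` and `≤ 0`, and this forces `L x = 0`. -/
theorem card_pos_le_of_sum_sq_eq {V : Type*} [Fintype V] (L M : (V → ℝ) →ₗ[ℝ] (V → ℝ))
    (hL : Function.Injective L) (a b : V → ℝ)
    (h : ∀ x, ∑ i, a i * (L x i) ^ 2 = ∑ i, b i * (M x i) ^ 2) :
    (Finset.univ.filter fun i => 0 < a i).card ≤ (Finset.univ.filter fun i => 0 < b i).card := by
  classical
  by_contra! hlt
  let F : (V → ℝ) →ₗ[ℝ] ({i // 0 < b i} → ℝ) × ({i // ¬ 0 < a i} → ℝ) :=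
    ((LinearMap.funLeft ℝ ℝ Subtype.val) ∘ₗ M).prod ((LinearMap.funLeft ℝ ℝ Subtype.val) ∘ₗ L)
  have hker : LinearMap.ker F ≠ ⊥ := by
    apply LinearMap.ker_ne_bot_of_finrank_lt
    rw [Module.finrank_prod, Module.finrank_fintype_fun_eq_card,
      Module.finrank_fintype_fun_eq_card, Module.finrank_fintype_fun_eq_card,
      Fintype.card_subtype_compl, Fintype.card_subtype, Fintype.card_subtype]
    have := Finset.card_le_univ (Finset.univ.filter fun i => 0 < a i)
    omega
  obtain ⟨x, hx, hx0⟩ := (Submodule.ne_bot_iff _).1 hker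
  have hF : F x = 0 := hx
  have hM : ∀ i, 0 < b i → M x i = 0 := fun i hi => congrFun (congrArg Prod.fst hF) ⟨i, hi⟩
  have hLx : ∀ i, ¬ 0 < a i → L x i = 0 := fun i hi => congrFun (congrArg Prod.snd hF) ⟨i, hi⟩
  have hnn : ∀ i ∈ Finset.univ, 0 ≤ a i * (L x i) ^ 2 := by
    intro i _
    by_cases hi : 0 < a i
    · positivity
    · simp [hLx i hi]
  have hle : ∑ i, b i * (M x i) ^ 2 ≤ 0 := by
    apply Finset.sum_nonpos
    intro i _
    by_cases hi : 0 < b i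
    · simp [hM i hi]
    · exact mul_nonpos_of_nonpos_of_nonneg (not_lt.1 hi) (sq_nonneg _)
  have hzero := (Finset.sum_eq_zero_iff_of_nonneg hnn).1
    (le_antisymm ((h x).trans_le hle) (Finset.sum_nonneg hnn))
  apply hx0
  apply hL
  rw [map_zero]
  ext i
  by_cases hi : 0 < a i
  · simpa [hi.ne'] using hzero i (Finset.mem_univ i)
  · exact hLx i hi

/-- The spectral theorem as a diagonalisation of the quadratic form. -/
theorem exists_spectral {V : Type*} [Fintype V] [DecidableEq V] (A : Matrix V V ℝ)
    (hA : A.IsHermitian) :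
    ∃ L : (V → ℝ) →ₗ[ℝ] (V → ℝ), Function.Injective L ∧
      ∀ x, x ⬝ᵥ A *ᵥ x = ∑ i, hA.eigenvalues i * (L x i) ^ 2 := by
  have hU : (hA.eigenvectorUnitary : Matrix V V ℝ) * star (hA.eigenvectorUnitary : Matrix V V ℝ) = 1 :=
    Unitary.mul_star_self_of_mem hA.eigenvectorUnitary.2
  have hspec := hA.spectral_theorem
  rw [Unitary.conjStarAlgAut_apply] at hspec
  generalize hUU : (hA.eigenvectorUnitary : Matrix V V ℝ) = U at hU hspec
  rw [star_eq_conjTranspose, conjTranspose_eq_transpose_of_trivial] at hU hspec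
  refine ⟨Matrix.toLin' Uᵀ, ?_, fun x => ?_⟩
  · intro x y hxy
    have := congrArg (fun z => U *ᵥ z) hxy
    simpa [Matrix.toLin'_apply, Matrix.mulVec_mulVec, hU] using this
  · conv_lhs => rw [hspec]
    rw [← Matrix.mulVec_mulVec, ← Matrix.mulVec_mulVec, Matrix.dotProduct_mulVec,
      ← Matrix.mulVec_transpose, Matrix.toLin'_apply]
    simp only [dotProduct, Matrix.mulVec_diagonal, Function.comp_apply]
    exact Finset.sum_congr rfl fun i _ => by simp; ring

end CographInertia

open CographInertia in
theorem stmt17 {V : Type*} [Finite V] (G : SimpleGraph V)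
    (hcograph : ¬ Nonempty (SimpleGraph.pathGraph 4 ↪g G)) :
    G.posInertia ≤ G.negInertia := by
  let := Fintype.ofFinite V
  let := Classical.decEq V
  let : DecidableRel G.Adj := Classical.decRel _
  obtain ⟨L, D, hL, -, hform, hcard⟩ := exists_diagonalization G (noP4_of_not_embedding G hcograph)
    _ Finset.univ rfl 0 (fun _ => le_rfl) (fun _ => one_pos)
  obtain ⟨M, hM, hspec⟩ := exists_spectral (G.adjMatrix ℝ) G.adjHerm
  have heq : ∀ x, ∑ i, G.adjHerm.eigenvalues i * (M x i) ^ 2 = ∑ i, D i * (L x i) ^ 2 := by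
    intro x
    rw [← hform, ← hspec]
    simp only [form, dotProduct, mulVec, SimpleGraph.adjMatrix_apply, Finset.mul_sum, Pi.zero_apply,
      zero_mul, Finset.sum_const_zero, zero_add]
    exact Finset.sum_congr rfl fun i _ => Finset.sum_congr rfl fun j _ => by ring
  have hpos := card_pos_le_of_sum_sq_eq M L hM _ _ heq
  have hneg := card_pos_le_of_sum_sq_eq L M hL (fun i => - D i)
    (fun i => - G.adjHerm.eigenvalues i) (fun x => by
      simp only [neg_mul, Finset.sum_neg_distrib, heq x])
  simp only [neg_pos] at hneg
  simp only [Pi.zero_apply, lt_irrefl, Finset.filter_false, Finset.card_empty, add_zero] at hcard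
  unfold SimpleGraph.posInertia SimpleGraph.negInertia
  rw [Nat.card_eq_fintype_card, Nat.card_eq_fintype_card, Fintype.card_subtype,
    Fintype.card_subtype]
  exact hpos.trans (hcard.trans hneg)
end
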